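/- arXiv:math/0503719 — 4 statements merged into one kernel-verified Lean document; each statement's English description precedes it below -/
import Mathlib

section
/- Fix integers n ≥ 1 and k ≥ 2n. Then there exist complex numbers D_{j,p}(a), for integers j ≥ 2n and p ∈ {0,1}, depending linearly on a, with D_{j,1}(a) = 0 whenever j/k is not an integer, such that for every real d > 2n/k which is not of the form j/k (j ∈ ℕ): I_{n,k}(λ) = Σ_{j ≥ 2n, j/k < d} Σ_{p∈{0,1}} D_{j,p}(a) λ^{−j/k} (log λ)^p + O(λ^{−d}) as λ → ∞. In particular I_{n,k}(λ) admits a full asymptotic expansion in the powers λ^{−j/k} (j ≥ 2n) and λ^{−j/k} log λ, the logarithmic terms occurring only when j/k is a positive integer. -/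
/- STATEMENT 1: Existence of a full asymptotic expansion for
I_{n,k}(λ) = ∫_0^∞ (∫_ℝ a(λ y₁^k y₂, y₁, y₂) dy₂) y₁^{2n−1} dy₁ in the powers
λ^{−j/k} (j ≥ 2n) and λ^{−j/k} log λ, the logarithms occurring only when k ∣ j
(Lemma "Theo IO 2eme carte", existence part, regime k ≥ 2n). -/

open MeasureTheory Filter

open Topology Asymptotics

/-- The generalized polynomial `∑_{i < N} (c i + c' i log x) x ^ i`. -/
noncomputable def logPoly (c c' : ℕ → ℂ) (N : ℕ) (x : ℝ) : ℂ :=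
  ∑ i ∈ Finset.range N, (c i + c' i * (Real.log x : ℂ)) * (x : ℂ) ^ i

/-- `f` agrees with `logPoly c c' N` up to `O(x ^ q)` as `x → 0⁺`. -/
def HasLogExpansion (f : ℝ → ℂ) (c c' : ℕ → ℂ) (N : ℕ) (q : ℝ) : Prop :=
  (fun x => f x - logPoly c c' N x) =O[𝓝[>] 0] fun x : ℝ => x ^ q

lemma rpow_isBigO_rpow_nhdsGT_zero {p q : ℝ} (h : q ≤ p) :
    (fun x : ℝ => x ^ p) =O[𝓝[>] 0] fun x : ℝ => x ^ q := by
  refine IsBigO.of_bound 1 ?_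
  filter_upwards [Ioo_mem_nhdsGT (show (0 : ℝ) < 1 by norm_num)] with x hx
  rw [one_mul, Real.norm_of_nonneg (Real.rpow_nonneg hx.1.le _),
    Real.norm_of_nonneg (Real.rpow_nonneg hx.1.le _)]
  exact Real.rpow_le_rpow_of_exponent_ge hx.1 hx.2.le h

lemma log_term_isBigO_rpow (a b : ℂ) (i : ℕ) {q : ℝ} (h : q < i) :
    (fun x : ℝ => (a + b * (Real.log x : ℂ)) * (x : ℂ) ^ i) =O[𝓝[>] 0] fun x : ℝ => x ^ q := by
  have h1 : (fun x : ℝ => a + b * (Real.log x : ℂ)) =O[𝓝[>] 0] fun x : ℝ => x ^ (q - i) := by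
    refine IsBigO.add ?_ ?_
    · refine (isBigO_const_const a (one_ne_zero (α := ℝ)) _).trans ?_
      simpa using rpow_isBigO_rpow_nhdsGT_zero (p := 0) (q := q - i) (by linarith)
    · refine IsBigO.const_mul_left ?_ b
      refine IsBigO.trans ?_ (isLittleO_log_rpow_nhdsGT_zero (r := q - i) (by linarith)).isBigO
      exact isBigO_of_le _ fun x => by simp
  have h2 : (fun x : ℝ => (x : ℂ) ^ i) =O[𝓝[>] 0] fun x : ℝ => x ^ i :=
    isBigO_of_le _ fun x => by simp
  refine (h1.mul h2).congr' EventuallyEq.rfl ?_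
  filter_upwards [self_mem_nhdsWithin] with x (hx : 0 < x)
  rw [← Real.rpow_natCast, ← Real.rpow_add hx]
  congr 1; ring

lemma HasLogExpansion.truncate {f : ℝ → ℂ} {c c' : ℕ → ℂ} {N N' : ℕ} {q q' : ℝ}
    (h : HasLogExpansion f c c' N q) (hN : N' ≤ N) (hq : q' ≤ q) (hq' : q' < N') :
    HasLogExpansion f c c' N' q' := by
  have h1 : (fun x : ℝ => ∑ i ∈ Finset.Ico N' N,
      (c i + c' i * (Real.log x : ℂ)) * (x : ℂ) ^ i) =O[𝓝[>] 0] fun x : ℝ => x ^ q' := by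
    refine IsBigO.fun_sum fun i hi => log_term_isBigO_rpow _ _ _ (hq'.trans_le ?_)
    exact_mod_cast (Finset.mem_Ico.1 hi).1
  refine ((h.trans (rpow_isBigO_rpow_nhdsGT_zero hq)).add h1).congr_left fun x => ?_
  simp only [logPoly]
  rw [← Finset.sum_range_add_sum_Ico _ hN]
  ring

lemma HasLogExpansion.eq_zero {c c' : ℕ → ℂ} {N : ℕ}
    (h : HasLogExpansion (fun _ => 0) c c' N (N - 1 / 2)) :
    ∀ i < N, c i = 0 ∧ c' i = 0 := by
  induction N with
  | zero => simp
  | succ N ih =>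
    have h1 := ih (h.truncate N.le_succ (by push_cast; linarith) (by linarith))
    have h2 : (fun x : ℝ => c N + c' N * (Real.log x : ℂ)) =O[𝓝[>] 0]
        fun x : ℝ => x ^ (1 / 2 : ℝ) := by
      have h3 : (fun x : ℝ => ((x : ℂ) ^ N)⁻¹) =O[𝓝[>] 0] fun x : ℝ => (x ^ N)⁻¹ :=
        isBigO_of_le _ fun x => by simp
      refine (h.neg_left.mul h3).congr' ?_ ?_
      · filter_upwards [self_mem_nhdsWithin] with x (hx : 0 < x)
        have hx' : (x : ℂ) ≠ 0 := by exact_mod_cast hx.ne'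
        have : logPoly c c' N x = 0 := Finset.sum_eq_zero fun i hi => by
          simp [h1 i (Finset.mem_range.1 hi)]
        simp only [logPoly] at this ⊢
        rw [Finset.sum_range_succ, this]
        field_simp
        ring
      · filter_upwards [self_mem_nhdsWithin] with x (hx : 0 < x)
        rw [← Real.rpow_natCast, ← Real.rpow_neg hx.le, ← Real.rpow_add hx]
        congr 1; push_cast; ring
    have h0 : Tendsto (fun x : ℝ => x ^ (1 / 2 : ℝ)) (𝓝[>] 0) (𝓝 0) := by
      have := (Real.continuousAt_rpow_const 0 (1 / 2 : ℝ) (Or.inr (by norm_num))).tendsto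
      rw [Real.zero_rpow (by norm_num)] at this
      exact this.mono_left nhdsWithin_le_nhds
    have h4 := h2.trans_tendsto h0
    have hc' : c' N = 0 := by
      by_contra hne
      have h5 : Tendsto (fun x : ℝ => (Real.log x : ℂ)) (𝓝[>] 0) (𝓝 ((0 - c N) / c' N)) := by
        refine ((h4.sub_const (c N)).div_const (c' N)).congr fun x => ?_
        field_simp
        ring
      have h6 := (Complex.continuous_re.tendsto _).comp h5
      exact not_tendsto_nhds_of_tendsto_atBot Real.tendsto_log_nhdsGT_zero _
        (h6.congr fun x => by simp)
    have hc : c N = 0 := by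
      simp only [hc', zero_mul, add_zero] at h4
      exact tendsto_nhds_unique tendsto_const_nhds h4
    intro i hi
    rcases Nat.lt_succ_iff_lt_or_eq.1 hi with hi | rfl
    · exact h1 i hi
    · exact ⟨hc, hc'⟩

lemma HasLogExpansion.unique {f : ℝ → ℂ} {c c' e e' : ℕ → ℂ} {N : ℕ}
    (h : HasLogExpansion f c c' N (N - 1 / 2)) (h' : HasLogExpansion f e e' N (N - 1 / 2)) :
    ∀ i < N, c i = e i ∧ c' i = e' i := by
  have : HasLogExpansion (fun _ => 0) (fun i => e i - c i) (fun i => e' i - c' i) N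
      (N - 1 / 2) := by
    refine (h.sub h').neg_left.congr_left fun x => ?_
    have : logPoly (fun i => e i - c i) (fun i => e' i - c' i) N x
        = logPoly e e' N x - logPoly c c' N x := by
      simp only [logPoly, ← Finset.sum_sub_distrib]
      exact Finset.sum_congr rfl fun i _ => by ring
    rw [this]
    ring
  intro i hi
  have := this.eq_zero i hi
  exact ⟨(sub_eq_zero.1 this.1).symm, (sub_eq_zero.1 this.2).symm⟩

/-- A function on `(0, ∞)` whose derivative is `O(x ^ (q - 1))` at `0` is, up to a constant,
`O(x ^ q)`; for `q < 0` the constant is irrelevant. -/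
lemma exists_sub_const_isBigO_rpow {h h' : ℝ → ℂ} {q : ℝ} (hq : q ≠ 0)
    (hd : ∀ x, 0 < x → HasDerivAt h (h' x) x)
    (hO : h' =O[𝓝[>] 0] fun x : ℝ => x ^ (q - 1)) :
    ∃ C : ℂ, (q < 0 → C = 0) ∧ (fun x => h x - C) =O[𝓝[>] 0] fun x : ℝ => x ^ q := by
  obtain ⟨K, hK0, hK⟩ := hO.exists_pos
  rw [IsBigOWith_def] at hK
  obtain ⟨δ, hδ, hKδ⟩ := mem_nhdsGT_iff_exists_Ioo_subset.1 hK
  replace hδ : 0 < δ := hδ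
  have hmv : ∀ x y, 0 < x → x ≤ y → y < δ → ‖h y - h x‖ ≤ K / q * (y ^ q - x ^ q) := by
    intro x y hx hxy hy
    have hpos : ∀ t ∈ Set.Icc x y, 0 < t := fun t ht => hx.trans_le ht.1
    have hB : ∀ t, 0 < t →
        HasDerivAt (fun t => K / q * (t ^ q - x ^ q)) (K * t ^ (q - 1)) t := by
      intro t ht
      have := ((Real.hasDerivAt_rpow_const (p := q) (Or.inl ht.ne')).sub_const (x ^ q)).const_mul
        (K / q)
      refine this.congr_deriv ?_
      field_simp
    refine image_norm_le_of_norm_deriv_right_le_deriv_boundary' (f := fun t => h t - h x)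
      (f' := h') (B := fun t => K / q * (t ^ q - x ^ q)) (B' := fun t => K * t ^ (q - 1))
      ?_ ?_ (by simp) ?_ ?_ ?_ (Set.right_mem_Icc.2 hxy)
    · exact fun t ht => ((hd t (hpos t ht)).sub_const _).continuousAt.continuousWithinAt
    · exact fun t ht =>
        ((hd t (hpos t (Set.Ico_subset_Icc_self ht))).sub_const _).hasDerivWithinAt
    · exact fun t ht => (hB t (hpos t ht)).continuousAt.continuousWithinAt
    · exact fun t ht => (hB t (hpos t (Set.Ico_subset_Icc_self ht))).hasDerivWithinAt
    · intro t ht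
      have ht0 := hpos t (Set.Ico_subset_Icc_self ht)
      have := hKδ ⟨ht0, ht.2.trans hy⟩
      rwa [Set.mem_ofPred_eq, Real.norm_of_nonneg (Real.rpow_nonneg ht0.le _)] at this
  rcases lt_or_gt_of_ne hq with hneg | hpos
  · refine ⟨0, fun _ => rfl, ?_⟩
    have h1 : (fun x => h (δ / 2) - h x) =O[𝓝[>] 0] fun x : ℝ => x ^ q := by
      refine IsBigO.of_bound (K / -q) ?_
      filter_upwards [Ioo_mem_nhdsGT (half_pos hδ)] with x hx
      refine (hmv x (δ / 2) hx.1 hx.2.le (by linarith)).trans ?_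
      rw [Real.norm_of_nonneg (Real.rpow_nonneg hx.1.le _)]
      have : K / q * ((δ / 2) ^ q - x ^ q) = K / -q * x ^ q - K / -q * (δ / 2) ^ q := by
        field_simp; ring
      rw [this]
      have : 0 ≤ K / -q * (δ / 2) ^ q :=
        mul_nonneg (div_nonneg hK0.le (by linarith)) (Real.rpow_nonneg (by linarith) _)
      linarith
    have h2 : (fun _ : ℝ => h (δ / 2)) =O[𝓝[>] 0] fun x : ℝ => x ^ q := by
      refine (isBigO_const_const _ (one_ne_zero (α := ℝ)) _).trans ?_
      simpa using rpow_isBigO_rpow_nhdsGT_zero (p := 0) hneg.le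
    exact (h2.sub h1).congr_left fun x => by ring
  · have h0 : Tendsto (fun x : ℝ => x ^ q) (𝓝[>] 0) (𝓝 0) := by
      have := (Real.continuousAt_rpow_const 0 q (Or.inr hpos.le)).tendsto
      rw [Real.zero_rpow hq] at this
      exact this.mono_left nhdsWithin_le_nhds
    have hmv' : ∀ x ∈ Set.Ioo 0 δ, ∀ y ∈ Set.Ioo 0 δ, ‖h y - h x‖ ≤ K / q * (y ^ q + x ^ q) := by
      have hnn : ∀ x ∈ Set.Ioo 0 δ, 0 ≤ K / q * x ^ q := fun x hx =>
        mul_nonneg (div_nonneg hK0.le hpos.le) (Real.rpow_nonneg hx.1.le _)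
      intro x hx y hy
      rcases le_total x y with hxy | hxy
      · linarith [hmv x y hx.1 hxy hy.2, hnn x hx]
      · rw [norm_sub_rev]
        linarith [hmv y x hy.1 hxy hx.2, hnn y hy]
    have hcauchy : Cauchy (map h (𝓝[>] 0)) := by
      refine Metric.cauchy_iff.2 ⟨inferInstance, fun r hr => ?_⟩
      have h1 : ∀ᶠ x in 𝓝[>] (0 : ℝ), K / q * x ^ q < r / 2 := by
        have := h0.const_mul (K / q)
        rw [mul_zero] at this
        exact this.eventually_lt_const (half_pos hr)
      refine ⟨h '' {x | x ∈ Set.Ioo 0 δ ∧ K / q * x ^ q < r / 2},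
        image_mem_map (inter_mem (Ioo_mem_nhdsGT hδ) h1), ?_⟩
      rintro _ ⟨x, hx, rfl⟩ _ ⟨y, hy, rfl⟩
      rw [dist_comm, dist_eq_norm]
      linarith [hmv' x hx.1 y hy.1, hx.2, hy.2]
    obtain ⟨C, hC⟩ := cauchy_map_iff_exists_tendsto.1 hcauchy
    refine ⟨C, fun h => absurd h (not_lt.2 hpos.le), IsBigO.of_bound (K / q) ?_⟩
    filter_upwards [Ioo_mem_nhdsGT hδ] with y hy
    rw [Real.norm_of_nonneg (Real.rpow_nonneg hy.1.le _)]
    have h1 : Tendsto (fun x => ‖h y - h x‖) (𝓝[>] 0) (𝓝 ‖h y - C‖) :=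
      (tendsto_const_nhds.sub hC).norm
    have h2 : Tendsto (fun x : ℝ => K / q * (y ^ q + x ^ q)) (𝓝[>] 0) (𝓝 (K / q * (y ^ q + 0))) :=
      (tendsto_const_nhds.add h0).const_mul _
    rw [add_zero] at h2
    refine le_of_tendsto_of_tendsto h1 h2 ?_
    filter_upwards [Ioo_mem_nhdsGT hδ] with x hx using hmv' x hx y hy

/-- A primitive of `x ^ (m - 1) * (a + b * log x)` for `m ≠ 0`. -/
lemma hasDerivAt_log_term_primitive (a b : ℂ) {m : ℤ} (hm : m ≠ 0) {x : ℝ} (hx : 0 < x) :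
    HasDerivAt (fun x : ℝ => (x : ℂ) ^ m * (a / m - b / m ^ 2 + b / m * (Real.log x : ℂ)))
      ((x : ℂ) ^ (m - 1) * (a + b * (Real.log x : ℂ))) x := by
  have hx' : (x : ℂ) ≠ 0 := by exact_mod_cast hx.ne'
  have hm' : (m : ℂ) ≠ 0 := by exact_mod_cast hm
  have h1 : HasDerivAt (fun x : ℝ => (x : ℂ) ^ m) (m * (x : ℂ) ^ (m - 1)) x :=
    (hasDerivAt_zpow m (x : ℂ) (Or.inl hx')).comp_ofReal
  have h2 : HasDerivAt (fun x : ℝ => (Real.log x : ℂ)) ((x⁻¹ : ℝ) : ℂ) x :=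
    (Real.hasDerivAt_log hx.ne').ofReal_comp
  refine (h1.mul ((h2.const_mul (b / m)).const_add (a / m - b / m ^ 2))).congr_deriv ?_
  rw [zpow_sub_one₀ hx']
  push_cast
  field_simp
  ring

lemma HasLogExpansion.integrate {f f₁ g : ℝ → ℂ} {c c' : ℕ → ℂ} {N j : ℕ}
    (h : HasLogExpansion f₁ c c' N (N - 1 / 2)) (hc' : c' j = 0)
    (hf : ∀ x, 0 < x → f x = (x : ℂ) ^ j * g x)
    (hg : ∀ x : ℝ, 0 < x → HasDerivAt g (f₁ x / (x : ℂ) ^ (j + 1)) x) :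
    ∃ C : ℂ, HasLogExpansion f
      (fun i => if i = j then C else c i / ((i - j : ℤ) : ℂ) - c' i / ((i - j : ℤ) : ℂ) ^ 2)
      (fun i => if i = j then c j else c' i / ((i - j : ℤ) : ℂ)) N (N - 1 / 2) := by
  set T : ℕ → ℝ → ℂ := fun i x => if i = j then c j * (Real.log x : ℂ) else
    (x : ℂ) ^ (i - j : ℤ) * (c i / ((i - j : ℤ) : ℂ) - c' i / ((i - j : ℤ) : ℂ) ^ 2
      + c' i / ((i - j : ℤ) : ℂ) * (Real.log x : ℂ)) with hT
  have hTd : ∀ i x, 0 < x → HasDerivAt (T i)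
      ((c i + c' i * (Real.log x : ℂ)) * (x : ℂ) ^ i / (x : ℂ) ^ (j + 1)) x := by
    intro i x hx
    have hx' : (x : ℂ) ≠ 0 := by exact_mod_cast hx.ne'
    by_cases hij : i = j
    · subst hij
      have h2 : HasDerivAt (fun x : ℝ => (Real.log x : ℂ)) ((x⁻¹ : ℝ) : ℂ) x :=
        (Real.hasDerivAt_log hx.ne').ofReal_comp
      simp only [hT, if_true]
      refine (h2.const_mul (c i)).congr_deriv ?_
      rw [hc']
      push_cast
      field_simp
      ring
    · simp only [hT, if_neg hij]
      refine (hasDerivAt_log_term_primitive (c i) (c' i) (m := i - j) (by omega) hx).congr_deriv ?_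
      rw [show (i : ℤ) - j - 1 = (i : ℤ) - ((j + 1 : ℕ) : ℤ) by push_cast; ring,
        zpow_sub₀ hx', zpow_natCast, zpow_natCast]
      ring
  have hsum : ∀ x, 0 < x → HasDerivAt (fun x => g x - ∑ i ∈ Finset.range N, T i x)
      ((f₁ x - logPoly c c' N x) / (x : ℂ) ^ (j + 1)) x := by
    intro x hx
    refine ((hg x hx).sub
      (HasDerivAt.fun_sum fun i (_ : i ∈ Finset.range N) => hTd i x hx)).congr_deriv ?_
    rw [sub_div, logPoly, Finset.sum_div]
  have hNj : (N - 1 / 2 - j : ℝ) ≠ 0 := by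
    intro h0
    have h1 : ((2 * N : ℕ) : ℝ) = ((2 * j + 1 : ℕ) : ℝ) := by push_cast; linarith
    have := Nat.cast_injective h1
    omega
  obtain ⟨C, hC0, hC⟩ := exists_sub_const_isBigO_rpow hNj hsum (by
    have h3 : (fun x : ℝ => ((x : ℂ) ^ (j + 1))⁻¹) =O[𝓝[>] 0] fun x : ℝ => (x ^ (j + 1))⁻¹ :=
      isBigO_of_le _ fun x => by simp
    refine (h.mul h3).congr' (Eventually.of_forall fun x => (div_eq_mul_inv _ _).symm) ?_
    filter_upwards [self_mem_nhdsWithin] with x (hx : 0 < x)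
    rw [← Real.rpow_natCast, ← Real.rpow_neg hx.le, ← Real.rpow_add hx]
    congr 1; push_cast; ring)
  refine ⟨C, ?_⟩
  have h3 : (fun x : ℝ => (x : ℂ) ^ j) =O[𝓝[>] 0] fun x : ℝ => x ^ j :=
    isBigO_of_le _ fun x => by simp
  refine (h3.mul hC).congr' ?_ ?_
  · filter_upwards [self_mem_nhdsWithin] with x (hx : 0 < x)
    have hx' : (x : ℂ) ≠ 0 := by exact_mod_cast hx.ne'
    have hCs : (x : ℂ) ^ j * C = ∑ i ∈ Finset.range N, if i = j then (x : ℂ) ^ j * C else 0 := by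
      rw [Finset.sum_ite_eq']
      split_ifs with hjN
      · rfl
      · have : N ≤ j := by simpa using hjN
        have : (N : ℝ) ≤ j := by exact_mod_cast this
        rw [hC0 (by linarith), mul_zero]
    rw [hf x hx, logPoly, mul_sub, mul_sub, hCs, sub_sub, Finset.mul_sum, ← Finset.sum_add_distrib]
    congr 1
    refine Finset.sum_congr rfl fun i _ => ?_
    by_cases hij : i = j
    · subst hij
      simp only [hT, if_true]
      ring
    · simp only [hT, if_neg hij]
      rw [zpow_sub₀ hx', zpow_natCast, zpow_natCast]
      field_simp
      ring
  · filter_upwards [self_mem_nhdsWithin] with x (hx : 0 < x)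
    rw [← Real.rpow_natCast, ← Real.rpow_add hx]
    congr 1; ring

/-- The integral `∫_0^∞ (∫_ℝ b(μ y^k z, y, z) dz) y^m dy`. -/
noncomputable def oscIntegral (k m : ℕ) (b : ℝ × ℝ × ℝ → ℂ) (μ : ℝ) : ℂ :=
  ∫ y in Set.Ioi (0 : ℝ), (∫ z : ℝ, b (μ * y ^ k * z, y, z)) * ((y ^ m : ℝ) : ℂ)

/-- The integrand of `oscIntegral` after the substitution `y = ε s`, `μ = ε ^ (-k)`. -/
noncomputable def dilatedIntegrand (k m : ℕ) (b : ℝ × ℝ × ℝ → ℂ) (ε : ℝ) (p : ℝ × ℝ) : ℂ :=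
  b (p.1 ^ k * p.2, ε * p.1, p.2) * ((p.1 ^ m : ℝ) : ℂ)

/-- The integrand of `oscIntegral` after the substitution `t = μ y ^ k z`, `η = μ⁻¹`. -/
noncomputable def blownUpIntegrand (k m : ℕ) (b : ℝ × ℝ × ℝ → ℂ) (η : ℝ) (p : ℝ × ℝ) : ℂ :=
  b (p.2, p.1, η * (p.2 / p.1 ^ k)) * ((p.1 ^ m : ℝ) : ℂ)

/-- The half plane `y > 0`. -/
def rightHalf : Set (ℝ × ℝ) := Set.Ioi 0 ×ˢ Set.univ

lemma measurableSet_rightHalf : MeasurableSet rightHalf := measurableSet_Ioi.prod .univ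

lemma exists_bound_of_hasCompactSupport {b : ℝ × ℝ × ℝ → ℂ} (hb : Continuous b)
    (hc : HasCompactSupport b) :
    ∃ M R : ℝ, 0 ≤ M ∧ 0 ≤ R ∧ (∀ q, ‖b q‖ ≤ M) ∧
      ∀ q, b q ≠ 0 → |q.1| ≤ R ∧ |q.2.1| ≤ R ∧ |q.2.2| ≤ R := by
  obtain ⟨M, hM⟩ := hc.exists_bound_of_continuous hb
  obtain ⟨R, hR⟩ := hc.isCompact.isBounded.exists_norm_le
  refine ⟨M, max R 0, (norm_nonneg _).trans (hM 0), le_max_right _ _, hM, fun q hq => ?_⟩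
  have := (hR q (subset_tsupport _ hq)).trans (le_max_left R 0)
  rw [Prod.norm_def, Prod.norm_def] at this
  exact ⟨(le_max_left _ _).trans this, (le_max_left _ _).trans ((le_max_right _ _).trans this),
    (le_max_right _ _).trans ((le_max_right _ _).trans this)⟩

lemma integrableOn_indicator_rectangle (R₁ R₂ C : ℝ) :
    IntegrableOn ((Set.Icc 0 R₁ ×ˢ Set.Icc (-R₂) R₂).indicator fun _ => C) rightHalf := by
  refine Integrable.integrableOn ?_
  rw [integrable_indicator_iff (measurableSet_Icc.prod measurableSet_Icc)]
  exact continuousOn_const.integrableOn_compact (isCompact_Icc.prod isCompact_Icc)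

lemma exists_bound_dilatedIntegrand (k m : ℕ) {b : ℝ × ℝ × ℝ → ℂ} (hb : Continuous b)
    (hc : HasCompactSupport b) {δ : ℝ} (hδ : 0 < δ) :
    ∃ G : ℝ × ℝ → ℝ, IntegrableOn G rightHalf ∧
      ∀ ε, δ ≤ ε → ∀ p ∈ rightHalf, ‖dilatedIntegrand k m b ε p‖ ≤ G p := by
  obtain ⟨M, R, hM0, hR0, hM, hR⟩ := exists_bound_of_hasCompactSupport hb hc
  refine ⟨_, integrableOn_indicator_rectangle (R / δ) R (M * (R / δ) ^ m), fun ε hε p hp => ?_⟩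
  have hp : 0 < p.1 := hp.1
  by_cases h0 : b (p.1 ^ k * p.2, ε * p.1, p.2) = 0
  · rw [dilatedIntegrand, h0, zero_mul, norm_zero]
    exact Set.indicator_nonneg (fun _ _ => by positivity) _
  · obtain ⟨-, h2, h3⟩ := hR _ h0
    have h4 : p.1 ≤ R / δ := by
      rw [le_div_iff₀ hδ]
      have : p.1 * δ ≤ ε * p.1 := by nlinarith
      exact this.trans ((le_abs_self _).trans h2)
    rw [Set.indicator_of_mem (show p ∈ Set.Icc 0 (R / δ) ×ˢ Set.Icc (-R) R from
      ⟨⟨hp.le, h4⟩, abs_le.1 h3⟩), dilatedIntegrand,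
      norm_mul, Complex.norm_real, Real.norm_of_nonneg (by positivity)]
    gcongr
    exact hM _

lemma exists_bound_blownUpIntegrand (k m : ℕ) {b : ℝ × ℝ × ℝ → ℂ} (hb : Continuous b)
    (hc : HasCompactSupport b) :
    ∃ G : ℝ × ℝ → ℝ, IntegrableOn G rightHalf ∧
      ∀ η, ∀ p ∈ rightHalf, ‖blownUpIntegrand k m b η p‖ ≤ G p := by
  obtain ⟨M, R, hM0, hR0, hM, hR⟩ := exists_bound_of_hasCompactSupport hb hc
  refine ⟨_, integrableOn_indicator_rectangle R R (M * R ^ m), fun η p hp => ?_⟩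
  have hp : 0 < p.1 := hp.1
  by_cases h0 : b (p.2, p.1, η * (p.2 / p.1 ^ k)) = 0
  · rw [blownUpIntegrand, h0, zero_mul, norm_zero]
    exact Set.indicator_nonneg (fun _ _ => by positivity) _
  · obtain ⟨h1, h2, -⟩ := hR _ h0
    have h4 : p.1 ≤ R := (le_abs_self _).trans h2
    rw [Set.indicator_of_mem (show p ∈ Set.Icc 0 R ×ˢ Set.Icc (-R) R from
      ⟨⟨hp.le, h4⟩, abs_le.1 h1⟩), blownUpIntegrand,
      norm_mul, Complex.norm_real, Real.norm_of_nonneg (by positivity)]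
    gcongr
    exact hM _

lemma aestronglyMeasurable_dilatedIntegrand (k m : ℕ) {b : ℝ × ℝ × ℝ → ℂ} (hb : Continuous b)
    (ε : ℝ) : AEStronglyMeasurable (dilatedIntegrand k m b ε) (volume.restrict rightHalf) := by
  unfold dilatedIntegrand
  exact Continuous.aestronglyMeasurable (by fun_prop)

lemma aestronglyMeasurable_blownUpIntegrand (k m : ℕ) {b : ℝ × ℝ × ℝ → ℂ} (hb : Continuous b)
    (η : ℝ) : AEStronglyMeasurable (blownUpIntegrand k m b η) (volume.restrict rightHalf) := by
  refine ContinuousOn.aestronglyMeasurable (fun p hp => ?_) measurableSet_rightHalf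
  have hp : p.1 ^ k ≠ 0 := pow_ne_zero _ (ne_of_gt hp.1)
  unfold blownUpIntegrand
  refine ContinuousAt.continuousWithinAt (ContinuousAt.mul (hb.continuousAt.comp ?_) (by fun_prop))
  fun_prop (disch := exact hp)

lemma integrableOn_dilatedIntegrand (k m : ℕ) {b : ℝ × ℝ × ℝ → ℂ} (hb : Continuous b)
    (hc : HasCompactSupport b) {ε : ℝ} (hε : 0 < ε) :
    IntegrableOn (dilatedIntegrand k m b ε) rightHalf := by
  obtain ⟨G, hG, hG'⟩ := exists_bound_dilatedIntegrand k m hb hc hε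
  exact hG.mono' (aestronglyMeasurable_dilatedIntegrand k m hb ε)
    (ae_restrict_of_forall_mem measurableSet_rightHalf (hG' ε le_rfl))

lemma integrableOn_blownUpIntegrand (k m : ℕ) {b : ℝ × ℝ × ℝ → ℂ} (hb : Continuous b)
    (hc : HasCompactSupport b) (η : ℝ) :
    IntegrableOn (blownUpIntegrand k m b η) rightHalf := by
  obtain ⟨G, hG, hG'⟩ := exists_bound_blownUpIntegrand k m hb hc
  exact hG.mono' (aestronglyMeasurable_blownUpIntegrand k m hb η)
    (ae_restrict_of_forall_mem measurableSet_rightHalf (hG' η))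

lemma setIntegral_rightHalf {F : ℝ × ℝ → ℂ} (hF : IntegrableOn F rightHalf) :
    ∫ p in rightHalf, F p = ∫ y in Set.Ioi (0 : ℝ), ∫ z : ℝ, F (y, z) := by
  have := setIntegral_prod (μ := (volume : Measure ℝ)) (ν := (volume : Measure ℝ))
    (s := Set.Ioi 0) (t := Set.univ) F hF
  rw [Measure.restrict_univ] at this
  exact this

lemma oscIntegral_eq_dilated (k m : ℕ) {b : ℝ × ℝ × ℝ → ℂ} (hb : Continuous b)
    (hc : HasCompactSupport b) {ε : ℝ} (hε : 0 < ε) :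
    oscIntegral k m b ((ε ^ k)⁻¹) =
      (ε : ℂ) ^ (m + 1) * ∫ p in rightHalf, dilatedIntegrand k m b ε p := by
  have hε' : (ε : ℂ) ≠ 0 := by exact_mod_cast hε.ne'
  have h := integral_comp_mul_left_Ioi (fun y : ℝ =>
    (∫ z : ℝ, b ((ε ^ k)⁻¹ * y ^ k * z, y, z)) * ((y ^ m : ℝ) : ℂ)) 0 hε
  rw [mul_zero] at h
  rw [setIntegral_rightHalf (integrableOn_dilatedIntegrand k m hb hc hε), oscIntegral]
  have h2 : ∀ y : ℝ, (∫ z : ℝ, b ((ε ^ k)⁻¹ * (ε * y) ^ k * z, ε * y, z)) * (((ε * y) ^ m : ℝ) : ℂ)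
      = (ε : ℂ) ^ m * ∫ z : ℝ, dilatedIntegrand k m b ε (y, z) := by
    intro y
    simp only [dilatedIntegrand]
    rw [integral_mul_const]
    have : (ε ^ k)⁻¹ * (ε * y) ^ k = y ^ k := by
      rw [mul_pow]; field_simp
    rw [this]
    push_cast
    ring
  simp only [h2] at h
  rw [integral_const_mul, ← inv_smul_eq_iff₀ (inv_ne_zero hε.ne'), inv_inv] at h
  rw [← h, Complex.real_smul]
  ring

lemma oscIntegral_eq_blownUp (k m : ℕ) {b : ℝ × ℝ × ℝ → ℂ} (hb : Continuous b)
    (hc : HasCompactSupport b) {ε : ℝ} (hε : 0 < ε) :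
    oscIntegral k (k + m) b ((ε ^ k)⁻¹) =
      (ε : ℂ) ^ k * ∫ p in rightHalf, blownUpIntegrand k m b (ε ^ k) p := by
  rw [setIntegral_rightHalf (integrableOn_blownUpIntegrand k m hb hc _), oscIntegral,
    ← integral_const_mul]
  refine setIntegral_congr_fun measurableSet_Ioi fun y (hy : 0 < y) => ?_
  have hy' : (y : ℂ) ≠ 0 := by exact_mod_cast hy.ne'
  have hpos : 0 < (ε ^ k)⁻¹ * y ^ k := by positivity
  have h := Measure.integral_comp_mul_left (fun t : ℝ => b (t, y, ε ^ k * (t / y ^ k)))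
    ((ε ^ k)⁻¹ * y ^ k)
  have h2 : ∀ z : ℝ, ε ^ k * ((ε ^ k)⁻¹ * y ^ k * z / y ^ k) = z := by
    intro z; field_simp
  simp only [h2] at h
  simp only [blownUpIntegrand]
  rw [h, integral_mul_const, abs_of_pos (inv_pos.2 hpos), Complex.real_smul, pow_add]
  push_cast
  field_simp

lemma hasDerivAt_integral_dilatedIntegrand (k m : ℕ) {b : ℝ × ℝ × ℝ → ℂ}
    (hb : ContDiff ℝ (⊤ : ℕ∞) b) (hc : HasCompactSupport b) {ε : ℝ} (hε : 0 < ε) :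
    HasDerivAt (fun ε => ∫ p in rightHalf, dilatedIntegrand k m b ε p)
      (∫ p in rightHalf, dilatedIntegrand k (m + 1) (fun q => fderiv ℝ b q (0, 1, 0)) ε p) ε := by
  have hb' : Continuous fun q => fderiv ℝ b q (0, 1, 0) :=
    (hb.continuous_fderiv (by simp)).clm_apply continuous_const
  obtain ⟨G, hG, hG'⟩ := exists_bound_dilatedIntegrand k (m + 1) hb' (hc.fderiv_apply ℝ _)
    (half_pos hε)
  refine (hasDerivAt_integral_of_dominated_loc_of_deriv_le (bound := G)
    (F' := dilatedIntegrand k (m + 1) fun q => fderiv ℝ b q (0, 1, 0))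
    (Ioi_mem_nhds (half_lt_self hε))
    (Eventually.of_forall fun x => aestronglyMeasurable_dilatedIntegrand k m hb.continuous x)
    (integrableOn_dilatedIntegrand k m hb.continuous hc hε)
    (aestronglyMeasurable_dilatedIntegrand k (m + 1) hb' ε)
    (ae_restrict_of_forall_mem measurableSet_rightHalf fun p hp x hx => hG' x (le_of_lt hx) p hp)
    hG (Eventually.of_forall fun p x _ => ?_)).2
  have h1 : HasDerivAt (fun x : ℝ => ((p.1 ^ k * p.2, x * p.1, p.2) : ℝ × ℝ × ℝ))
      (p.1 • ((0, 1, 0) : ℝ × ℝ × ℝ)) x := by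
    have := (hasDerivAt_const x (p.1 ^ k * p.2)).prodMk
      (((hasDerivAt_id x).mul_const p.1).prodMk (hasDerivAt_const x p.2))
    simpa using this
  have h2 := (((hb.differentiable (by simp)) _).hasFDerivAt.comp_hasDerivAt x h1).mul_const
    ((p.1 ^ m : ℝ) : ℂ)
  refine h2.congr_deriv ?_
  rw [map_smul, dilatedIntegrand, Complex.real_smul]
  push_cast
  ring

lemma hasDerivAt_integral_blownUpIntegrand (k m : ℕ) {b : ℝ × ℝ × ℝ → ℂ}
    (hb : ContDiff ℝ (⊤ : ℕ∞) b) (hc : HasCompactSupport b) (η : ℝ) :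
    HasDerivAt (fun η => ∫ p in rightHalf, blownUpIntegrand k (k + m) b η p)
      (∫ p in rightHalf,
        blownUpIntegrand k m (fun q => (q.1 : ℂ) * fderiv ℝ b q (0, 0, 1)) η p) η := by
  have hb' : Continuous fun q : ℝ × ℝ × ℝ => (q.1 : ℂ) * fderiv ℝ b q (0, 0, 1) :=
    (by fun_prop : Continuous fun q : ℝ × ℝ × ℝ => (q.1 : ℂ)).mul
      ((hb.continuous_fderiv (by simp)).clm_apply continuous_const)
  obtain ⟨G, hG, hG'⟩ := exists_bound_blownUpIntegrand k m hb' (hc.fderiv_apply ℝ _).mul_left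
  refine (hasDerivAt_integral_of_dominated_loc_of_deriv_le (bound := G)
    (F' := blownUpIntegrand k m fun q => (q.1 : ℂ) * fderiv ℝ b q (0, 0, 1))
    univ_mem
    (Eventually.of_forall fun x => aestronglyMeasurable_blownUpIntegrand k _ hb.continuous x)
    (integrableOn_blownUpIntegrand k _ hb.continuous hc η)
    (aestronglyMeasurable_blownUpIntegrand k m hb' η)
    (ae_restrict_of_forall_mem measurableSet_rightHalf fun p hp x _ => hG' x p hp)
    hG (ae_restrict_of_forall_mem measurableSet_rightHalf fun p hp x _ => ?_)).2
  have hp' : (p.1 : ℂ) ≠ 0 := by exact_mod_cast (ne_of_gt hp.1 : p.1 ≠ 0)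
  have h1 : HasDerivAt (fun x : ℝ => ((p.2, p.1, x * (p.2 / p.1 ^ k)) : ℝ × ℝ × ℝ))
      ((p.2 / p.1 ^ k) • ((0, 0, 1) : ℝ × ℝ × ℝ)) x := by
    have := (hasDerivAt_const x p.2).prodMk
      ((hasDerivAt_const x p.1).prodMk ((hasDerivAt_id x).mul_const (p.2 / p.1 ^ k)))
    simpa using this
  have h2 := (((hb.differentiable (by simp)) _).hasFDerivAt.comp_hasDerivAt x h1).mul_const
    ((p.1 ^ (k + m) : ℝ) : ℂ)
  refine h2.congr_deriv ?_
  rw [map_smul, blownUpIntegrand, Complex.real_smul]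
  push_cast
  rw [pow_add]
  field_simp

lemma exists_bound_integral_blownUpIntegrand (k m : ℕ) {b : ℝ × ℝ × ℝ → ℂ} (hb : Continuous b)
    (hc : HasCompactSupport b) :
    ∃ C : ℝ, ∀ η, ‖∫ p in rightHalf, blownUpIntegrand k m b η p‖ ≤ C := by
  obtain ⟨G, hG, hG'⟩ := exists_bound_blownUpIntegrand k m hb hc
  exact ⟨_, fun η => norm_integral_le_of_norm_le hG
    (ae_restrict_of_forall_mem measurableSet_rightHalf (hG' η))⟩

lemma HasLogExpansion.const_mul_pow {f : ℝ → ℂ} {c : ℕ → ℂ} {N : ℕ}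
    (h : HasLogExpansion f c 0 N (N - 1 / 2)) (a : ℂ) (k : ℕ) :
    HasLogExpansion (fun x => a * (x : ℂ) ^ k * f x)
      (fun i => if k ≤ i then a * c (i - k) else 0) 0 (k + N) ((k + N : ℕ) - 1 / 2) := by
  have h3 : (fun x : ℝ => a * (x : ℂ) ^ k) =O[𝓝[>] 0] fun x : ℝ => x ^ k :=
    (isBigO_of_le _ fun x => by simp).const_mul_left a
  refine (h3.mul h).congr' (Eventually.of_forall fun x => ?_) ?_
  · simp only [logPoly]
    have h0 : ∀ i ∈ Finset.range k, ((if k ≤ i then a * c (i - k) else 0) +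
        (0 : ℕ → ℂ) i * (Real.log x : ℂ)) * (x : ℂ) ^ i = 0 := fun i hi => by
      simp [Finset.mem_range.1 hi]
    rw [Finset.sum_range_add, Finset.sum_eq_zero h0, zero_add, mul_sub, Finset.mul_sum]
    congr 1
    refine Finset.sum_congr rfl fun i _ => ?_
    simp [pow_add]
    ring
  · filter_upwards [self_mem_nhdsWithin] with x (hx : 0 < x)
    rw [← Real.rpow_natCast, ← Real.rpow_add hx]
    congr 1; push_cast; ring

lemma oscIntegral_expansion_of_large (k : ℕ) (hk : 1 ≤ k) (L : ℕ) :
    ∀ (m : ℕ) (b : ℝ × ℝ × ℝ → ℂ), k * L ≤ m → ContDiff ℝ (⊤ : ℕ∞) b → HasCompactSupport b →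
      ∃ c : ℕ → ℂ, (∀ i, c i ≠ 0 → k ∣ i ∧ k ≤ i) ∧
        HasLogExpansion (fun ε => oscIntegral k (k + m) b ((ε ^ k)⁻¹)) c 0
          (k * (L + 1)) ((k * (L + 1) : ℕ) - 1 / 2) := by
  induction L with
  | zero =>
    intro m b _ hb hc
    refine ⟨0, fun i hi => absurd rfl hi, ?_⟩
    obtain ⟨C, hC⟩ := exists_bound_integral_blownUpIntegrand k m hb.continuous hc
    have h1 : (fun ε => oscIntegral k (k + m) b ((ε ^ k)⁻¹)) =O[𝓝[>] 0]
        fun x : ℝ => x ^ (k : ℝ) := by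
      refine IsBigO.of_bound C ?_
      filter_upwards [self_mem_nhdsWithin] with x (hx : 0 < x)
      rw [oscIntegral_eq_blownUp k m hb.continuous hc hx, norm_mul, mul_comm]
      refine mul_le_mul (hC _) (le_of_eq ?_) (norm_nonneg _) ((norm_nonneg _).trans (hC 0))
      simp
    refine (h1.trans (rpow_isBigO_rpow_nhdsGT_zero ?_)).congr_left fun x => ?_
    · simp
    · simp [logPoly]
  | succ L ih =>
    intro m b hm hb hc
    obtain ⟨m, rfl⟩ : ∃ m', m = k + m' := ⟨m - k, by rw [mul_add] at hm; omega⟩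
    have hb' : ContDiff ℝ (⊤ : ℕ∞) fun q : ℝ × ℝ × ℝ => (q.1 : ℂ) * fderiv ℝ b q (0, 0, 1) :=
      (Complex.ofRealCLM.contDiff.comp contDiff_fst).mul
        ((hb.fderiv_right (m := (⊤ : ℕ∞)) (by simp)).clm_apply contDiff_const)
    have hc' : HasCompactSupport fun q : ℝ × ℝ × ℝ => (q.1 : ℂ) * fderiv ℝ b q (0, 0, 1) :=
      (hc.fderiv_apply ℝ _).mul_left
    obtain ⟨c, hcs, hexp⟩ := ih m _ (by rw [mul_add] at hm; omega) hb' hc'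
    have hc0 : c 0 = 0 := by
      by_contra h
      have := (hcs 0 h).2
      omega
    obtain ⟨C, hC⟩ := (hexp.const_mul_pow k k).integrate (j := k) rfl
      (fun x hx => oscIntegral_eq_blownUp k (k + m) hb.continuous hc hx) (fun x hx => by
        have hx' : (x : ℂ) ≠ 0 := by exact_mod_cast hx.ne'
        have h1 := (hasDerivAt_integral_blownUpIntegrand k m hb hc (x ^ k)).scomp x
          (hasDerivAt_pow k x)
        refine h1.congr_deriv ?_
        rw [oscIntegral_eq_blownUp k m hb'.continuous hc' hx, Complex.real_smul]
        obtain ⟨k, rfl⟩ : ∃ k', k = k' + 1 := ⟨k - 1, by omega⟩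
        push_cast
        field_simp
        ring)
    have hlog : (fun i => if i = k then (if k ≤ k then (k : ℂ) * c (k - k) else 0)
        else (0 : ℕ → ℂ) i / ((i - k : ℤ) : ℂ)) = 0 := by
      funext i
      simp [hc0]
    rw [hlog, show k + k * (L + 1) = k * (L + 1 + 1) by ring] at hC
    refine ⟨_, ?_, hC⟩
    intro i hi
    by_cases hik : i = k
    · simp [hik]
    · simp only [if_neg hik, Pi.zero_apply, zero_div, sub_zero] at hi
      by_cases hki : k ≤ i
      · refine ⟨?_, hki⟩
        rw [if_pos hki] at hi
        have h0 : c (i - k) ≠ 0 := fun h => hi (by simp [h])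
        exact Nat.sub_add_cancel hki ▸ dvd_add (hcs _ h0).1 dvd_rfl
      · simp [hki] at hi

lemma oscIntegral_expansion (k : ℕ) (hk : 1 ≤ k) (N : ℕ) (r : ℕ) :
    ∀ (m : ℕ) (b : ℝ × ℝ × ℝ → ℂ), k + k * N ≤ m + r → ContDiff ℝ (⊤ : ℕ∞) b →
      HasCompactSupport b →
      ∃ c c' : ℕ → ℂ, (∀ i, c i ≠ 0 → k ≤ i ∧ k ∣ i ∨ m + 1 ≤ i) ∧
        (∀ i, c' i ≠ 0 → k ∣ i ∧ m + 1 ≤ i) ∧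
        HasLogExpansion (fun ε => oscIntegral k m b ((ε ^ k)⁻¹)) c c' N (N - 1 / 2) := by
  induction r with
  | zero =>
    intro m b hm hb hc
    obtain ⟨m, rfl⟩ : ∃ m', m = k + m' := ⟨m - k, by omega⟩
    obtain ⟨c, hcs, hexp⟩ := oscIntegral_expansion_of_large k hk N m b (by omega) hb hc
    have hN : N ≤ k * (N + 1) := by nlinarith
    have hN' : (N : ℝ) ≤ (k * (N + 1) : ℕ) := by exact_mod_cast hN
    exact ⟨c, 0, fun i hi => Or.inl (hcs i hi).symm, fun i hi => absurd rfl hi,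
      hexp.truncate hN (by linarith) (by linarith)⟩
  | succ r ih =>
    intro m b hm hb hc
    have hb' : ContDiff ℝ (⊤ : ℕ∞) fun q : ℝ × ℝ × ℝ => fderiv ℝ b q (0, 1, 0) :=
      (hb.fderiv_right (m := (⊤ : ℕ∞)) (by simp)).clm_apply contDiff_const
    have hc' : HasCompactSupport fun q : ℝ × ℝ × ℝ => fderiv ℝ b q (0, 1, 0) :=
      hc.fderiv_apply ℝ _
    obtain ⟨c, c', hcs, hcs', hexp⟩ := ih (m + 1) _ (by omega) hb' hc'
    obtain ⟨C, hC⟩ := hexp.integrate (j := m + 1)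
      (by
        by_contra h
        have := (hcs' _ h).2
        omega)
      (fun x hx => oscIntegral_eq_dilated k m hb.continuous hc hx) (fun x hx => by
        have hx' : (x : ℂ) ≠ 0 := by exact_mod_cast hx.ne'
        refine (hasDerivAt_integral_dilatedIntegrand k m hb hc hx).congr_deriv ?_
        rw [oscIntegral_eq_dilated k (m + 1) hb'.continuous hc' hx]
        field_simp)
    refine ⟨_, _, ?_, ?_, hC⟩
    · intro i hi
      by_cases him : i = m + 1
      · exact Or.inr him.ge
      · simp only [if_neg him] at hi
        by_cases h0 : c i = 0
        · have h0' : c' i ≠ 0 := fun h => hi (by simp [h, h0])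
          exact Or.inr (by have := (hcs' i h0').2; omega)
        · exact (hcs i h0).imp_right (by omega)
    · intro i hi
      by_cases him : i = m + 1
      · simp only [if_pos him] at hi
        rcases hcs _ hi with h | h
        · exact ⟨him ▸ h.2, him.ge⟩
        · omega
      · simp only [if_neg him] at hi
        have h0' : c' i ≠ 0 := fun h => hi (by simp [h])
        exact ⟨(hcs' i h0').1, by have := (hcs' i h0').2; omega⟩

lemma oscIntegral_full_expansion (k : ℕ) (hk : 1 ≤ k) (m : ℕ) {b : ℝ × ℝ × ℝ → ℂ}
    (hb : ContDiff ℝ (⊤ : ℕ∞) b) (hc : HasCompactSupport b) :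
    ∃ c c' : ℕ → ℂ, (∀ i, c i ≠ 0 → k ≤ i ∨ m + 1 ≤ i) ∧
      (∀ i, c' i ≠ 0 → k ∣ i ∧ m + 1 ≤ i) ∧
      ∀ N : ℕ, HasLogExpansion (fun ε => oscIntegral k m b ((ε ^ k)⁻¹)) c c' N (N - 1 / 2) := by
  choose c c' hcs hcs' hexp using fun N =>
    oscIntegral_expansion k hk N (k + k * N) m b (by omega) hb hc
  have heq : ∀ N, ∀ i < N, c N i = c (i + 1) i ∧ c' N i = c' (i + 1) i := by
    intro N i hi
    have hi' : ((i + 1 : ℕ) : ℝ) ≤ N := by exact_mod_cast hi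
    exact ((hexp N).truncate (N' := i + 1) hi (by linarith) (by linarith)).unique (hexp (i + 1)) i
      i.lt_succ_self
  refine ⟨fun i => c (i + 1) i, fun i => c' (i + 1) i, fun i hi => (hcs _ i hi).imp_left And.left,
    fun i hi => hcs' _ i hi, fun N => (hexp N).congr_left fun x => ?_⟩
  congr 1
  exact Finset.sum_congr rfl fun i hi => by
    rw [(heq N i (Finset.mem_range.1 hi)).1, (heq N i (Finset.mem_range.1 hi)).2]

lemma oscIntegral_add (k m : ℕ) {a b : ℝ × ℝ × ℝ → ℂ} (ha : Continuous a)
    (hca : HasCompactSupport a) (hb : Continuous b) (hcb : HasCompactSupport b) {ε : ℝ}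
    (hε : 0 < ε) :
    oscIntegral k m (a + b) ((ε ^ k)⁻¹) =
      oscIntegral k m a ((ε ^ k)⁻¹) + oscIntegral k m b ((ε ^ k)⁻¹) := by
  rw [oscIntegral_eq_dilated k m (ha.add hb) (hca.add hcb) hε,
    oscIntegral_eq_dilated k m ha hca hε, oscIntegral_eq_dilated k m hb hcb hε, ← mul_add,
    ← integral_add (integrableOn_dilatedIntegrand k m ha hca hε)
      (integrableOn_dilatedIntegrand k m hb hcb hε)]
  simp only [dilatedIntegrand, Pi.add_apply, add_mul]

lemma oscIntegral_const_mul (k m : ℕ) (c : ℂ) (a : ℝ × ℝ × ℝ → ℂ) (μ : ℝ) :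
    oscIntegral k m (fun q => c * a q) μ = c * oscIntegral k m a μ := by
  simp only [oscIntegral, integral_const_mul, mul_assoc]

lemma inv_rpow_neg_inv_pow {k : ℕ} (hk : 1 ≤ k) {x : ℝ} (hx : 0 < x) :
    ((x ^ (-(k : ℝ)⁻¹)) ^ k)⁻¹ = x := by
  have hk' : (k : ℝ) ≠ 0 := by positivity
  rw [← Real.rpow_natCast, ← Real.rpow_mul hx.le, ← Real.rpow_neg hx.le]
  simp [hk']

/-- The uncurried form of a function of three real variables. -/
def uncurry₃ (a : ℝ → ℝ → ℝ → ℂ) (q : ℝ × ℝ × ℝ) : ℂ := a q.1 q.2.1 q.2.2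

/-- The coefficient families without logarithmic terms at exponents not divisible by `k`. -/
def coeffSpace (k : ℕ) : Submodule ℂ (ℕ → ℕ → ℂ) where
  carrier := {D | ∀ j, ¬ k ∣ j → D j 1 = 0}
  add_mem' h h' j hj := by simp [h j hj, h' j hj]
  zero_mem' _ _ := rfl
  smul_mem' c D h j hj := by simp [h j hj]

open Classical in
/-- The partial sum of the expansion with coefficients `D` up to the exponent `d`. -/
noncomputable def partialSum (n k : ℕ) (D : ℕ → ℕ → ℂ) (d lam : ℝ) : ℂ :=
  ∑ j ∈ (Finset.range (Nat.ceil (d * k) + 1)).filter (fun j => 2 * n ≤ j ∧ (j : ℝ) / k < d),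
    ∑ p ∈ Finset.range 2, D j p * ((lam ^ (-(j : ℝ) / k) * (Real.log lam) ^ p : ℝ) : ℂ)

/-- `D` is the family of coefficients of the full asymptotic expansion attached to `a`. -/
def IsExpansion (n k : ℕ) (a : ℝ → ℝ → ℝ → ℂ) (D : ℕ → ℕ → ℂ) : Prop :=
  ∀ d : ℝ, (2 * n : ℝ) / k < d → (∀ j : ℕ, (j : ℝ) / k ≠ d) →
    (fun lam : ℝ => oscIntegral k (2 * n - 1) (uncurry₃ a) lam - partialSum n k D d lam)
      =O[atTop] fun lam : ℝ => lam ^ (-d)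

lemma partialSum_eq_logPoly {n k : ℕ} (hk : 1 ≤ k) {c c' : ℕ → ℂ}
    (hc : ∀ i, c i ≠ 0 → 2 * n ≤ i) (hc' : ∀ i, c' i ≠ 0 → 2 * n ≤ i) {d lam : ℝ}
    (hlam : 0 < lam) :
    partialSum n k (fun j p => if p = 0 then c j else -c' j / k) d lam =
      logPoly c c' (Nat.ceil (d * k)) (lam ^ (-(k : ℝ)⁻¹)) := by
  have hk0 : (0 : ℝ) < k := by exact_mod_cast hk
  have hk' : (k : ℂ) ≠ 0 := by exact_mod_cast hk0.ne'
  rw [partialSum, logPoly]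
  refine (Finset.sum_subset_zero_on_sdiff ?_ ?_ ?_)
  · intro j hj
    rw [Finset.mem_filter] at hj
    exact Finset.mem_range.2 (Nat.lt_ceil.2 ((div_lt_iff₀ hk0).1 hj.2.2))
  · intro j hj
    rw [Finset.mem_sdiff, Finset.mem_range, Finset.mem_filter] at hj
    have hjn : ¬ 2 * n ≤ j := fun h => hj.2 ⟨Finset.mem_range.2 (by omega), h,
      (div_lt_iff₀ hk0).2 (Nat.lt_ceil.1 hj.1)⟩
    rw [not_imp_comm.1 (hc j) hjn, not_imp_comm.1 (hc' j) hjn]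
    simp
  · intro j _
    have h1 : ((lam ^ (-(k : ℝ)⁻¹) : ℝ) : ℂ) ^ j = ((lam ^ (-(j : ℝ) / k) : ℝ) : ℂ) := by
      rw [← Complex.ofReal_pow, ← Real.rpow_natCast, ← Real.rpow_mul hlam.le]
      congr 2
      field_simp
    rw [h1, Real.log_rpow hlam, Finset.sum_range_succ, Finset.sum_range_one]
    simp
    field_simp

lemma exists_isExpansion {n k : ℕ} (hn : 1 ≤ n) (hk : 2 * n ≤ k) {a : ℝ → ℝ → ℝ → ℂ}
    (ha : ContDiff ℝ (⊤ : ℕ∞) (uncurry₃ a)) (hca : HasCompactSupport (uncurry₃ a)) :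
    ∃ D ∈ coeffSpace k, IsExpansion n k a D := by
  have hk1 : 1 ≤ k := by omega
  have hk0 : (0 : ℝ) < k := by exact_mod_cast hk1
  obtain ⟨c, c', hc, hc', h⟩ := oscIntegral_full_expansion k hk1 (2 * n - 1) ha hca
  have hcn : ∀ i, c i ≠ 0 → 2 * n ≤ i := fun i hi => by rcases hc i hi with h | h <;> omega
  have hcn' : ∀ i, c' i ≠ 0 → 2 * n ≤ i := fun i hi => by have := (hc' i hi).2; omega
  refine ⟨fun j p => if p = 0 then c j else -c' j / k, fun j hj => ?_, fun d _ hd => ?_⟩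
  · have : c' j = 0 := by
      by_contra h0
      exact hj (hc' j h0).1
    simp [this]
  · have hlt : d * k < Nat.ceil (d * k) := by
      refine lt_of_le_of_ne (Nat.le_ceil _) fun h => hd (Nat.ceil (d * k)) ?_
      rw [← h]
      field_simp
    have h1 := (h (Nat.ceil (d * k) + 1)).truncate (q' := d * k) (Nat.le_succ _)
      (by push_cast; linarith) hlt
    have ht : Tendsto (fun x : ℝ => x ^ (-(k : ℝ)⁻¹)) atTop (𝓝[>] 0) :=
      tendsto_nhdsWithin_iff.2 ⟨tendsto_rpow_neg_atTop (inv_pos.2 hk0),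
        (eventually_gt_atTop 0).mono fun x hx => Real.rpow_pos_of_pos hx _⟩
    refine (h1.comp_tendsto ht).congr' ?_ ?_
    · filter_upwards [eventually_gt_atTop 0] with x hx
      simp only [Function.comp_apply]
      rw [inv_rpow_neg_inv_pow hk1 hx, partialSum_eq_logPoly hk1 hcn hcn' hx]
    · filter_upwards [eventually_gt_atTop 0] with x hx
      simp only [Function.comp_apply]
      rw [← Real.rpow_mul hx.le]
      congr 1
      field_simp

/-- The pairs of a test function and coefficients of its expansion. -/
def expansionPairs (n k : ℕ) (hk : 1 ≤ k) :
    Submodule ℂ ((ℝ → ℝ → ℝ → ℂ) × coeffSpace k) where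
  carrier := {v | ContDiff ℝ (⊤ : ℕ∞) (uncurry₃ v.1) ∧ HasCompactSupport (uncurry₃ v.1) ∧
    IsExpansion n k v.1 v.2}
  add_mem' := by
    rintro ⟨a, D⟩ ⟨b, D'⟩ ⟨ha, hca, hD⟩ ⟨hb, hcb, hD'⟩
    refine ⟨ha.add hb, hca.add hcb, fun d hd hd' => ?_⟩
    refine ((hD d hd hd').add (hD' d hd hd')).congr' ?_ EventuallyEq.rfl
    filter_upwards [eventually_gt_atTop 0] with x hx
    have h := oscIntegral_add k (2 * n - 1) ha.continuous hca hb.continuous hcb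
      (Real.rpow_pos_of_pos hx (-(k : ℝ)⁻¹))
    rw [inv_rpow_neg_inv_pow hk hx] at h
    have hs : partialSum n k ((D + D' : coeffSpace k) : ℕ → ℕ → ℂ) d x =
        partialSum n k D d x + partialSum n k D' d x := by
      simp only [partialSum, ← Finset.sum_add_distrib, Submodule.coe_add, Pi.add_apply, add_mul]
    change _ = oscIntegral k (2 * n - 1) (uncurry₃ a + uncurry₃ b) x -
      partialSum n k ((D + D' : coeffSpace k) : ℕ → ℕ → ℂ) d x
    rw [h, hs]
    ring
  zero_mem' := by
    refine ⟨contDiff_const, HasCompactSupport.zero, fun d _ _ => ?_⟩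
    refine (isBigO_zero _ _).congr_left fun x => ?_
    simp [oscIntegral, uncurry₃, partialSum]
  smul_mem' := by
    rintro c ⟨a, D⟩ ⟨ha, hca, hD⟩
    refine ⟨contDiff_const.mul ha, hca.mul_left, fun d hd hd' => ?_⟩
    refine ((hD d hd hd').const_mul_left c).congr_left fun x => ?_
    have hs : partialSum n k ((c • D : coeffSpace k) : ℕ → ℕ → ℂ) d x =
        c * partialSum n k D d x := by
      simp only [partialSum, Finset.mul_sum, Submodule.coe_smul, Pi.smul_apply, smul_eq_mul,
        mul_assoc]
    change _ = oscIntegral k (2 * n - 1) (fun q => c * uncurry₃ a q) x -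
      partialSum n k ((c • D : coeffSpace k) : ℕ → ℕ → ℂ) d x
    rw [oscIntegral_const_mul, hs]
    ring

/-- A linear relation between vector spaces contains the graph of a linear map over its domain. -/
lemma Submodule.exists_linearMap_graph_mem {K E W : Type*} [Field K] [AddCommGroup E] [Module K E]
    [AddCommGroup W] [Module K W] (V : Submodule K (E × W)) :
    ∃ T : E →ₗ[K] W, ∀ a D, (a, D) ∈ V → (a, T a) ∈ V := by
  let π : V →ₗ[K] E := LinearMap.fst K E W ∘ₗ V.subtype
  obtain ⟨g, hg⟩ := π.rangeRestrict.exists_rightInverse_of_surjective π.range_rangeRestrict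
  obtain ⟨T, hT⟩ := (LinearMap.snd K E W ∘ₗ V.subtype ∘ₗ g).exists_extend
  refine ⟨T, fun a D h => ?_⟩
  have hmem : a ∈ LinearMap.range π := ⟨⟨(a, D), h⟩, rfl⟩
  have h1 : T a = (g ⟨a, hmem⟩).1.2 := LinearMap.congr_fun hT ⟨a, hmem⟩
  have h2 : (g ⟨a, hmem⟩).1.1 = a := congrArg Subtype.val (LinearMap.congr_fun hg ⟨a, hmem⟩)
  have h3 : (a, T a) = (g ⟨a, hmem⟩).1 := Prod.ext h2.symm h1
  exact h3 ▸ (g ⟨a, hmem⟩).2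

lemma exists_linear_isExpansion {n k : ℕ} (hn : 1 ≤ n) (hk : 2 * n ≤ k) :
    ∃ T : (ℝ → ℝ → ℝ → ℂ) →ₗ[ℂ] coeffSpace k, ∀ a : ℝ → ℝ → ℝ → ℂ,
      ContDiff ℝ (⊤ : ℕ∞) (uncurry₃ a) → HasCompactSupport (uncurry₃ a) →
        IsExpansion n k a (T a) := by
  obtain ⟨T, hT⟩ := (expansionPairs n k (by omega)).exists_linearMap_graph_mem
  refine ⟨T, fun a ha hca => ?_⟩
  obtain ⟨D, hD, hexp⟩ := exists_isExpansion hn hk ha hca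
  exact (hT a ⟨D, hD⟩ ⟨ha, hca, hexp⟩).2.2

open Classical in
theorem Ink_full_asymptotic_expansion
    (n k : ℕ) (hn : 1 ≤ n) (hk : 2 * n ≤ k) :
    ∃ D : (ℝ → ℝ → ℝ → ℂ) → ℕ → ℕ → ℂ,
      -- D depends linearly on a
      (∀ a b : ℝ → ℝ → ℝ → ℂ, ∀ j p : ℕ,
        D (fun t y₁ y₂ => a t y₁ y₂ + b t y₁ y₂) j p = D a j p + D b j p) ∧
      (∀ (c : ℂ) (a : ℝ → ℝ → ℝ → ℂ), ∀ j p : ℕ,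
        D (fun t y₁ y₂ => c * a t y₁ y₂) j p = c * D a j p) ∧
      -- no logarithmic term unless j/k is an integer
      (∀ (a : ℝ → ℝ → ℝ → ℂ) (j : ℕ), ¬ k ∣ j → D a j 1 = 0) ∧
      -- the asymptotic expansion with remainder O(λ^{-d})
      (∀ a : ℝ → ℝ → ℝ → ℂ,
        ContDiff ℝ (⊤ : ℕ∞) (fun q : ℝ × ℝ × ℝ => a q.1 q.2.1 q.2.2) →
        HasCompactSupport (fun q : ℝ × ℝ × ℝ => a q.1 q.2.1 q.2.2) →
        ∀ d : ℝ, (2 * n : ℝ) / k < d → (∀ j : ℕ, (j : ℝ) / k ≠ d) →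
          (fun lam : ℝ =>
            (∫ y₁ in Set.Ioi (0 : ℝ),
              (∫ y₂ : ℝ, a (lam * y₁ ^ k * y₂) y₁ y₂) * ((y₁ ^ (2 * n - 1) : ℝ) : ℂ)) -
            ∑ j ∈ (Finset.range (Nat.ceil (d * k) + 1)).filter
                (fun j => 2 * n ≤ j ∧ (j : ℝ) / k < d),
              ∑ p ∈ Finset.range 2,
                D a j p * ((lam ^ (-(j : ℝ) / k) * (Real.log lam) ^ p : ℝ) : ℂ))
          =O[atTop] fun lam : ℝ => lam ^ (-d)) := by
  obtain ⟨T, hT⟩ := exists_linear_isExpansion hn hk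
  refine ⟨fun a => T a, fun a b j p => ?_, fun c a j p => ?_, fun a => (T a).2,
    fun a ha hca => hT a ha hca⟩
  · have h : T (fun t y₁ y₂ => a t y₁ y₂ + b t y₁ y₂) = T a + T b := T.map_add a b
    simp [h]
  · have h : T (fun t y₁ y₂ => c * a t y₁ y₂) = c • T a := T.map_smul c a
    simp [h]
end

section
/- Fix integers n ≥ 1 and k > 2n, and set C_{n,k} = (1/k) Π_{j=1}^{2n} (j − 2n/k)^{−1}. Then as λ → ∞: I_{n,k}(λ) = λ^{−2n/k} d(a) + O(λ^{−(2n+1)/k} log λ), where d(a) = C_{n,k} ∫_0^∞ ∫_0^∞ t^{2n/k − 1} y₂^{2n − 2n/k} [ (∂_{y₂}^{2n} a)(t, 0, y₂) + (∂_{y₂}^{2n} a)(−t, 0, −y₂) ] dy₂ dt. Moreover, if (2n+1)/k is not an integer the remainder can be improved to O(λ^{−(2n+1)/k}). -/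
open MeasureTheory Filter

/-- A continuous amplitude supported in the cube of half-width `R`, bounded by `M` and
`M`-Lipschitz at `0` in its second variable. -/
structure IsAmplitude (a : ℝ → ℝ → ℝ → ℂ) (R M : ℝ) : Prop where
  cont : Continuous fun q : ℝ × ℝ × ℝ => a q.1 q.2.1 q.2.2
  eq_zero : ∀ t s y, R ≤ |t| ∨ R ≤ |s| ∨ R ≤ |y| → a t s y = 0
  bound : ∀ t s y, ‖a t s y‖ ≤ M
  lip : ∀ t s y, ‖a t s y - a t 0 y‖ ≤ M * |s|

theorem IsAmplitude.reflect {a : ℝ → ℝ → ℝ → ℂ} {R M : ℝ} (h : IsAmplitude a R M) :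
    IsAmplitude (fun t s y => a (-t) s (-y)) R M where
  cont := h.cont.comp (by fun_prop : Continuous fun q : ℝ × ℝ × ℝ => (-q.1, q.2.1, -q.2.2))
  eq_zero t s y hy := h.eq_zero _ _ _ (by simpa using hy)
  bound _ _ _ := h.bound _ _ _
  lip _ _ _ := h.lip _ _ _

theorem IsAmplitude.of_contDiff_of_hasCompactSupport {a : ℝ → ℝ → ℝ → ℂ}
    (ha : ContDiff ℝ (⊤ : ℕ∞) (fun q : ℝ × ℝ × ℝ => a q.1 q.2.1 q.2.2))
    (hs : HasCompactSupport (fun q : ℝ × ℝ × ℝ => a q.1 q.2.1 q.2.2)) :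
    ∃ R M, 1 ≤ R ∧ IsAmplitude a R M := by
  obtain ⟨R, -, hR⟩ := hs.exists_pos_le_norm
  obtain ⟨C, hC⟩ := hs.exists_bound_of_continuous ha.continuous
  obtain ⟨L, hL⟩ := ContDiff.lipschitzWith_of_hasCompactSupport hs ha (by simp)
  refine ⟨max R 1, max C L, le_max_right _ _, ha.continuous, fun t s y h => ?_, fun t s y => ?_,
    fun t s y => ?_⟩
  · refine hR (t, s, y) ((le_max_left R 1).trans ?_)
    simp only [Prod.norm_def, Real.norm_eq_abs]
    rcases h with h | h | h
    · exact h.trans (le_max_left _ _)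
    · exact h.trans ((le_max_left _ _).trans (le_max_right _ _))
    · exact h.trans ((le_max_right _ _).trans (le_max_right _ _))
  · exact (hC (t, s, y)).trans (le_max_left _ _)
  · have := hL.norm_sub_le (t, s, y) (t, 0, y)
    simp only [Prod.mk_sub_mk, sub_self, sub_zero, Prod.norm_def, norm_zero, Real.norm_eq_abs,
      abs_nonneg, sup_of_le_left, sup_of_le_right] at this
    exact this.trans (by gcongr; exact le_max_right _ _)

theorem integrableOn_Ioc_rpow {p : ℝ} (hp : -1 < p) {R : ℝ} (hR : 0 ≤ R) :
    IntegrableOn (fun y : ℝ => y ^ p) (Set.Ioc 0 R) :=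
  (intervalIntegrable_iff_integrableOn_Ioc_of_le hR).1 (intervalIntegral.intervalIntegrable_rpow' hp)

theorem integrableOn_Ioi_rpow_mul {p : ℝ} (hp : -1 < p) {g : ℝ → ℂ} (hg : Continuous g)
    (hgs : HasCompactSupport g) :
    IntegrableOn (fun y : ℝ => ((y ^ p : ℝ) : ℂ) * g y) (Set.Ioi 0) := by
  obtain ⟨R, hR0, hR⟩ := hgs.exists_pos_le_norm
  obtain ⟨C, hC⟩ := hgs.exists_bound_of_continuous hg
  refine IntegrableOn.of_forall_sdiff_eq_zero (s := Set.Ioc 0 R) ?_ measurableSet_Ioi ?_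
  · exact (integrableOn_Ioc_rpow hp hR0.le).ofReal.mul_bdd hg.aestronglyMeasurable
      (Eventually.of_forall hC)
  · rintro y ⟨hy0, hy⟩
    have hy0' : 0 < y := hy0
    have : R ≤ ‖y‖ := by
      rw [Real.norm_eq_abs, abs_of_pos hy0']
      by_contra! h
      exact hy ⟨hy0, h.le⟩
    simp [hR y this]

theorem integral_Ioi_rpow_mul_eq_deriv {p : ℝ} (hp : -1 < p) {g : ℝ → ℂ} (hg : ContDiff ℝ 1 g)
    (hgs : HasCompactSupport g) :
    ∫ y in Set.Ioi (0 : ℝ), ((y ^ p : ℝ) : ℂ) * g y =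
      -((p + 1 : ℝ) : ℂ)⁻¹ * ∫ y in Set.Ioi (0 : ℝ), ((y ^ (p + 1) : ℝ) : ℂ) * deriv g y := by
  have hp1 : p + 1 ≠ 0 := by linarith
  have i1 := integrableOn_Ioi_rpow_mul hp hg.continuous hgs
  have i2 := integrableOn_Ioi_rpow_mul (p := p + 1) (by linarith)
    (hg.continuous_deriv le_rfl) hgs.deriv
  have key := integral_Ioi_of_hasDerivAt_of_tendsto
    (f := fun y : ℝ => ((y ^ (p + 1) : ℝ) : ℂ) * g y)
    (f' := fun y : ℝ => ((p + 1 : ℝ) : ℂ) * (((y ^ p : ℝ) : ℂ) * g y)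
      + ((y ^ (p + 1) : ℝ) : ℂ) * deriv g y) (a := 0) (m := 0) ?_ ?_ ?_ ?_
  · rw [integral_add (i1.const_mul _) i2, integral_const_mul] at key
    rw [Real.zero_rpow hp1, Complex.ofReal_zero, zero_mul] at key
    have : ((p + 1 : ℝ) : ℂ) ≠ 0 := by exact_mod_cast hp1
    field_simp
    linear_combination key
  · exact ((Complex.continuous_ofReal.comp
      (Real.continuous_rpow_const (by linarith))).mul hg.continuous).continuousWithinAt
  · intro y hy
    have h1 := (Real.hasDerivAt_rpow_const (x := y) (p := p + 1) (Or.inl (ne_of_gt hy))).ofReal_comp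
    have h2 := (hg.differentiable one_ne_zero y).hasDerivAt
    refine (h1.mul h2).congr_deriv ?_
    rw [add_sub_cancel_right]
    push_cast
    ring
  · exact (i1.const_mul _).add i2
  · obtain ⟨R, -, hR⟩ := hgs.exists_pos_le_norm
    refine tendsto_const_nhds.congr' ?_
    filter_upwards [eventually_ge_atTop R] with y hy
    rw [hR y (hy.trans (le_abs_self y)), mul_zero]

theorem HasCompactSupport.iteratedDeriv {g : ℝ → ℂ} (hg : HasCompactSupport g) (m : ℕ) :
    HasCompactSupport (iteratedDeriv m g) := by
  induction m with
  | zero => simpa using hg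
  | succ m ih => rw [iteratedDeriv_succ]; exact ih.deriv

theorem integral_Ioi_rpow_mul_eq_iteratedDeriv {σ : ℝ} (hσ : σ < 1) {g : ℝ → ℂ}
    (hg : ContDiff ℝ (⊤ : ℕ∞) g) (hgs : HasCompactSupport g) (m : ℕ) :
    ∫ y in Set.Ioi (0 : ℝ), ((y ^ (-σ) : ℝ) : ℂ) * g y =
      (-1) ^ m * ((∏ j ∈ Finset.Icc 1 m, ((j : ℝ) - σ)⁻¹ : ℝ) : ℂ) *
        ∫ y in Set.Ioi (0 : ℝ), ((y ^ ((m : ℝ) - σ) : ℝ) : ℂ) * iteratedDeriv m g y := by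
  induction m with
  | zero => simp
  | succ m ih =>
    have hm : (-1 : ℝ) < m - σ := by have : (0 : ℝ) ≤ m := m.cast_nonneg; linarith
    rw [ih, integral_Ioi_rpow_mul_eq_deriv hm
      (iteratedDeriv_eq_iterate (f := g) ▸ (hg.iterate_deriv m).of_le (by simp)) (hgs.iteratedDeriv m),
      Finset.prod_Icc_succ_top (by omega), iteratedDeriv_succ]
    rw [show (m : ℝ) - σ + 1 = ((m + 1 : ℕ) : ℝ) - σ by push_cast; ring]
    push_cast
    ring

theorem IsAmplitude.integrable_rpow_mul {a : ℝ → ℝ → ℝ → ℂ} {R M : ℝ} (h : IsAmplitude a R M)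
    (hR : 0 ≤ R) {p q : ℝ} (hp : -1 < p) (hq : -1 < q) :
    Integrable (Function.uncurry fun t y : ℝ => ((t ^ p * y ^ q : ℝ) : ℂ) * a t 0 y)
      ((volume.restrict (Set.Ioi 0)).prod (volume.restrict (Set.Ioi 0))) := by
  rw [Measure.prod_restrict]
  refine IntegrableOn.of_forall_sdiff_eq_zero (s := Set.Ioc 0 R ×ˢ Set.Ioc 0 R) ?_
    (measurableSet_Ioi.prod measurableSet_Ioi) ?_
  · have hprod := (integrableOn_Ioc_rpow hp hR).mul_prod (integrableOn_Ioc_rpow hq hR)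
    rw [Measure.prod_restrict] at hprod
    have hc : Continuous fun z : ℝ × ℝ => a z.1 0 z.2 :=
      h.cont.comp (by fun_prop : Continuous fun z : ℝ × ℝ => (z.1, (0 : ℝ), z.2))
    exact hprod.ofReal.mul_bdd hc.aestronglyMeasurable
      (Eventually.of_forall fun z => h.bound z.1 0 z.2)
  · rintro ⟨t, y⟩ ⟨⟨ht, hy⟩, hz⟩
    have ht : 0 < t := ht
    have hy : 0 < y := hy
    have : a t 0 y = 0 := by
      refine h.eq_zero _ _ _ ?_
      by_contra! hlt
      rw [abs_of_pos ht, abs_of_pos hy] at hlt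
      exact hz ⟨⟨ht, hlt.1.le⟩, hy, hlt.2.2.le⟩
    simp [this]

theorem integral_Ioi_comp_mul_pow {N k : ℕ} (hN : 1 ≤ N) (hk : 0 < k) (b : ℝ → ℂ) {c : ℝ}
    (hc : 0 < c) :
    ∫ s in Set.Ioi (0 : ℝ), b (c * s ^ k) * ((s ^ (N - 1) : ℝ) : ℂ) =
      ((c ^ (-((N : ℝ) / k)) : ℝ) : ℂ) * ((1 / (k : ℝ) : ℝ) : ℂ) *
        ∫ t in Set.Ioi (0 : ℝ), ((t ^ ((N : ℝ) / k - 1) : ℝ) : ℂ) * b t := by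
  have hk' : (0 : ℝ) < k := by exact_mod_cast hk
  have hpow := integral_comp_rpow_Ioi_of_pos (p := k) hk'
    (g := fun u => (((1 / (k : ℝ)) * u ^ ((N : ℝ) / k - 1) : ℝ) : ℂ) * b (c * u))
  have hscale := integral_comp_mul_left_Ioi
    (fun t => ((t ^ ((N : ℝ) / k - 1) : ℝ) : ℂ) * b t) 0 hc
  rw [mul_zero] at hscale
  have hleft : ∫ s in Set.Ioi (0 : ℝ), b (c * s ^ k) * ((s ^ (N - 1) : ℝ) : ℂ) =
      ∫ u in Set.Ioi (0 : ℝ), (((1 / (k : ℝ)) * u ^ ((N : ℝ) / k - 1) : ℝ) : ℂ) * b (c * u) := by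
    rw [← hpow]
    refine setIntegral_congr_fun measurableSet_Ioi fun s hs => ?_
    have hs : 0 < s := hs
    have : s ^ (N - 1) =
        (k : ℝ) * s ^ ((k : ℝ) - 1) * (1 / (k : ℝ) * (s ^ (k : ℝ)) ^ ((N : ℝ) / k - 1)) := by
      rw [← Real.rpow_mul hs.le, ← Real.rpow_natCast s (N - 1), Nat.cast_sub hN,
        show (k : ℝ) * s ^ ((k : ℝ) - 1) * (1 / (k : ℝ) * s ^ ((k : ℝ) * ((N : ℝ) / k - 1))) =
          s ^ ((k : ℝ) - 1) * s ^ ((k : ℝ) * ((N : ℝ) / k - 1)) by field_simp,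
        ← Real.rpow_add hs]
      congr 1
      field_simp
      push_cast
      ring
    simp only [Complex.real_smul]
    rw [this]
    push_cast [Real.rpow_natCast]
    ring
  have hright : ∫ u in Set.Ioi (0 : ℝ),
      (((1 / (k : ℝ)) * u ^ ((N : ℝ) / k - 1) : ℝ) : ℂ) * b (c * u) =
      ((1 / (k : ℝ) * c ^ (1 - (N : ℝ) / k) : ℝ) : ℂ) *
        ∫ u in Set.Ioi (0 : ℝ), (((c * u) ^ ((N : ℝ) / k - 1) : ℝ) : ℂ) * b (c * u) := by
    rw [← integral_const_mul]
    refine setIntegral_congr_fun measurableSet_Ioi fun u hu => ?_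
    have hu : 0 < u := hu
    have : u ^ ((N : ℝ) / k - 1) = c ^ (1 - (N : ℝ) / k) * (c * u) ^ ((N : ℝ) / k - 1) := by
      rw [Real.mul_rpow hc.le hu.le, ← mul_assoc, ← Real.rpow_add hc]
      simp
    rw [this]
    push_cast
    ring
  rw [hleft, hright, hscale, Complex.real_smul]
  have : c ^ (-((N : ℝ) / k)) = c ^ (1 - (N : ℝ) / k) * c⁻¹ := by
    rw [← Real.rpow_neg_one c, ← Real.rpow_add hc]
    congr 1
    ring
  rw [this]
  push_cast
  ring

theorem integrableOn_Ioi_of_continuous_of_eq_zero {f : ℝ → ℂ} (hf : Continuous f) {T : ℝ}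
    (h : ∀ s, T < s → f s = 0) : IntegrableOn f (Set.Ioi 0) :=
  IntegrableOn.of_forall_sdiff_eq_zero (s := Set.Icc 0 T) hf.continuousOn.integrableOn_Icc
    measurableSet_Ioi fun s hs => h s (by
      by_contra! hlt
      exact hs.2 ⟨le_of_lt hs.1, hlt⟩)

theorem IsAmplitude.norm_fiber_sub_le {a : ℝ → ℝ → ℝ → ℂ} {R M : ℝ} (h : IsAmplitude a R M)
    (hR : 0 ≤ R) {N k : ℕ} (hN : 1 ≤ N) (hk : 0 < k) {c y : ℝ} (hc : 0 < c) :
    ‖(∫ s in Set.Ioi (0 : ℝ), a (c * s ^ k) s y * ((s ^ (N - 1) : ℝ) : ℂ)) -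
      ∫ s in Set.Ioi (0 : ℝ), a (c * s ^ k) 0 y * ((s ^ (N - 1) : ℝ) : ℂ)‖ ≤
      2 * M * min ((R / c) ^ ((N : ℝ) / k)) ((R / c) ^ (((N : ℝ) + 1) / k)) := by
  have hM : 0 ≤ M := (norm_nonneg _).trans (h.bound 0 0 0)
  have hk' : (0 : ℝ) < k := by exact_mod_cast hk
  have hRc : 0 ≤ R / c := by positivity
  set T : ℝ := (R / c) ^ (1 / (k : ℝ)) with hT
  have hT0 : 0 ≤ T := Real.rpow_nonneg hRc _
  have hTk : c * T ^ k = R := by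
    rw [hT, ← Real.rpow_natCast, ← Real.rpow_mul hRc, one_div_mul_cancel hk'.ne', Real.rpow_one]
    field_simp
  have hz (s' s : ℝ) (hs : T < s) : a (c * s ^ k) s' y = 0 := by
    refine h.eq_zero _ _ _ (Or.inl (le_trans ?_ (le_abs_self _)))
    rw [← hTk]
    gcongr
  have hc1 : Continuous fun s : ℝ => a (c * s ^ k) s y * ((s ^ (N - 1) : ℝ) : ℂ) :=
    (h.cont.comp (by fun_prop : Continuous fun s : ℝ => (c * s ^ k, s, y))).mul (by fun_prop)
  have hc2 : Continuous fun s : ℝ => a (c * s ^ k) 0 y * ((s ^ (N - 1) : ℝ) : ℂ) :=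
    (h.cont.comp (by fun_prop : Continuous fun s : ℝ => (c * s ^ k, (0 : ℝ), y))).mul
      (by fun_prop)
  rw [← integral_sub
    (integrableOn_Ioi_of_continuous_of_eq_zero hc1 (T := T) fun s hs => by rw [hz s s hs, zero_mul])
    (integrableOn_Ioi_of_continuous_of_eq_zero hc2 (T := T) fun s hs => by rw [hz 0 s hs, zero_mul]),
    setIntegral_eq_of_subset_of_forall_sdiff_eq_zero (s := Set.Ioc 0 T) measurableSet_Ioi
      (fun s hs => hs.1) (fun s hs => by
        have : T < s := by
          by_contra! hlt
          exact hs.2 ⟨hs.1, hlt⟩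
        rw [hz s s this, hz 0 s this, zero_mul, sub_zero])]
  have hpow (m : ℕ) : (R / c) ^ ((m : ℝ) / k) = T ^ m := by
    rw [hT, ← Real.rpow_natCast, ← Real.rpow_mul hRc]
    congr 1
    ring
  have hvol : volume.real (Set.Ioc 0 T) = T := by simp [hT0]
  have hnorm (s : ℝ) (hs : s ∈ Set.Ioc 0 T) :
      ‖a (c * s ^ k) s y * ((s ^ (N - 1) : ℝ) : ℂ) - a (c * s ^ k) 0 y * ((s ^ (N - 1) : ℝ) : ℂ)‖ ≤
        ‖a (c * s ^ k) s y - a (c * s ^ k) 0 y‖ * T ^ (N - 1) := by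
    rw [← sub_mul, norm_mul, Complex.norm_real, Real.norm_eq_abs, abs_pow, abs_of_pos hs.1]
    have := hs.1.le
    gcongr
    exact hs.2
  have hTN : T ^ (N - 1) * T = T ^ N := by rw [← pow_succ, Nat.sub_add_cancel hN]
  rw [mul_min_of_nonneg _ _ (by positivity)]
  refine le_min ?_ ?_
  · refine (norm_setIntegral_le_of_norm_le_const (C := 2 * M * T ^ (N - 1)) (by simp)
      fun s hs => (hnorm s hs).trans ?_).trans ?_
    · gcongr
      exact (norm_sub_le _ _).trans (by linarith [h.bound (c * s ^ k) s y, h.bound (c * s ^ k) 0 y])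
    · rw [hvol, hpow N, mul_assoc, hTN]
  · refine (norm_setIntegral_le_of_norm_le_const (C := M * T * T ^ (N - 1)) (by simp)
      fun s hs => (hnorm s hs).trans ?_).trans ?_
    · gcongr
      refine (h.lip _ _ _).trans ?_
      rw [abs_of_pos hs.1]
      gcongr
      exact hs.2
    · have := hpow (N + 1)
      push_cast at this
      rw [hvol, this, mul_assoc, hTN, pow_succ]
      nlinarith [mul_nonneg hM (mul_nonneg (pow_nonneg hT0 N) hT0)]

theorem IsAmplitude.integrable_phase {a : ℝ → ℝ → ℝ → ℂ} {R M : ℝ} (h : IsAmplitude a R M)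
    (m k : ℕ) (lam : ℝ) :
    Integrable (fun z : ℝ × ℝ => a (lam * z.1 ^ k * z.2) z.1 z.2 * ((z.1 ^ m : ℝ) : ℂ))
      ((volume.restrict (Set.Ioi 0)).prod volume) := by
  have hint : Integrable
      (fun z : ℝ × ℝ => a (lam * z.1 ^ k * z.2) z.1 z.2 * ((z.1 ^ m : ℝ) : ℂ))
      (volume.prod volume) := by
    refine Continuous.integrable_of_hasCompactSupport ?_ ?_
    · exact (h.cont.comp
        (by fun_prop : Continuous fun z : ℝ × ℝ => (lam * z.1 ^ k * z.2, z.1, z.2))).mul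
        (by fun_prop)
    · refine HasCompactSupport.intro ((isCompact_Icc (a := -R) (b := R)).prod
        (isCompact_Icc (a := -R) (b := R))) fun z hz => ?_
      rw [h.eq_zero _ _ _ (Or.inr ?_), zero_mul]
      by_contra! hlt
      exact hz ⟨abs_le.1 hlt.1.le, abs_le.1 hlt.2.le⟩
  have hmeas := hint.integrableOn (s := Set.Ioi 0 ×ˢ Set.univ)
  rwa [IntegrableOn, ← Measure.prod_restrict, Measure.restrict_univ] at hmeas

/-- The error majorant obtained by integrating the fibrewise remainder over `(0, R]`. -/
noncomputable def errorMajorant (R σ τ lam : ℝ) : ℝ :=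
  ∫ y in Set.Ioc 0 R, min ((R / (lam * y)) ^ σ) ((R / (lam * y)) ^ τ)

theorem div_mul_rpow_eq {R lam y : ℝ} (hR : 0 ≤ R) (hl : 0 < lam) (hy : 0 < y) (p : ℝ) :
    (R / (lam * y)) ^ p = R ^ p * lam ^ (-p) * y ^ (-p) := by
  rw [Real.div_rpow hR (by positivity), Real.mul_rpow hl.le hy.le, Real.rpow_neg hl.le,
    Real.rpow_neg hy.le]
  field_simp

theorem integrableOn_Ioc_div_mul_rpow {R lam p b : ℝ} (hR : 0 ≤ R) (hl : 0 < lam) (hp : p < 1)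
    (hb : 0 ≤ b) : IntegrableOn (fun y => (R / (lam * y)) ^ p) (Set.Ioc 0 b) :=
  IntegrableOn.congr_fun
    ((integrableOn_Ioc_rpow (by linarith : -1 < -p) hb).const_mul (R ^ p * lam ^ (-p)))
    (fun _ hy => (div_mul_rpow_eq hR hl hy.1 p).symm) measurableSet_Ioc

theorem integrableOn_errorMajorant {R σ τ lam : ℝ} (hR : 0 ≤ R) (hl : 0 < lam) (hσ : σ < 1) :
    IntegrableOn (fun y => min ((R / (lam * y)) ^ σ) ((R / (lam * y)) ^ τ)) (Set.Ioc 0 R) := by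
  refine (integrableOn_Ioc_div_mul_rpow hR hl hσ hR).mono'
    (by fun_prop) ?_
  refine (ae_restrict_iff' measurableSet_Ioc).2 (Eventually.of_forall fun y hy => ?_)
  have : 0 ≤ R / (lam * y) := div_nonneg hR (mul_nonneg hl.le hy.1.le)
  rw [Real.norm_eq_abs, abs_of_nonneg (le_min (Real.rpow_nonneg this _) (Real.rpow_nonneg this _))]
  exact min_le_left _ _

theorem errorMajorant_nonneg {R σ τ lam : ℝ} (hR : 0 ≤ R) (hl : 0 < lam) :
    0 ≤ errorMajorant R σ τ lam :=
  setIntegral_nonneg measurableSet_Ioc fun y hy => by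
    have : 0 ≤ R / (lam * y) := div_nonneg hR (mul_nonneg hl.le hy.1.le)
    exact le_min (Real.rpow_nonneg this _) (Real.rpow_nonneg this _)

theorem setIntegral_Ioc_div_mul_rpow {R lam p b : ℝ} (hR : 0 ≤ R) (hl : 0 < lam) (hp : p < 1)
    (hb : 0 ≤ b) : ∫ y in Set.Ioc 0 b, (R / (lam * y)) ^ p =
      R ^ p * lam ^ (-p) * (b ^ (1 - p) / (1 - p)) := by
  rw [setIntegral_congr_fun measurableSet_Ioc fun y hy => div_mul_rpow_eq hR hl hy.1 p,
    integral_const_mul, ← intervalIntegral.integral_of_le hb,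
    integral_rpow (Or.inl (by linarith)), Real.zero_rpow (by linarith), sub_zero,
    show -p + 1 = 1 - p by ring]

theorem errorMajorant_isBigO {R σ τ : ℝ} (hR : 0 ≤ R) (hσ : σ < 1) (hτ : τ < 1) :
    errorMajorant R σ τ =O[atTop] fun lam : ℝ => lam ^ (-τ) := by
  refine Asymptotics.IsBigO.of_bound (R ^ τ * (R ^ (1 - τ) / (1 - τ))) ?_
  filter_upwards [eventually_gt_atTop 0] with lam hl
  rw [Real.norm_of_nonneg (errorMajorant_nonneg hR hl),
    Real.norm_of_nonneg (Real.rpow_nonneg hl.le _)]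
  refine (setIntegral_mono_on (integrableOn_errorMajorant hR hl hσ)
    (integrableOn_Ioc_div_mul_rpow hR hl hτ hR) measurableSet_Ioc
    fun y _ => min_le_right _ _).trans_eq ?_
  rw [setIntegral_Ioc_div_mul_rpow hR hl hτ hR]
  ring

theorem errorMajorant_one_isBigO {R σ : ℝ} (hR : 1 ≤ R) (hσ : σ < 1) :
    errorMajorant R σ 1 =O[atTop] fun lam : ℝ => lam ^ (-1 : ℝ) * Real.log lam := by
  have hR0 : 0 < R := by linarith
  have hσ' : 0 < 1 - σ := by linarith
  refine Asymptotics.IsBigO.of_bound (R ^ σ / (1 - σ) + R * (Real.log R + 1)) ?_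
  filter_upwards [eventually_ge_atTop (Real.exp 1)] with lam hle
  have hlog : 1 ≤ Real.log lam := (Real.le_log_iff_exp_le (by linarith [Real.exp_pos 1])).2 hle
  have hl1 : 1 ≤ lam := (Real.one_le_exp zero_le_one).trans hle
  have hl : 0 < lam := by linarith
  have hinv0 : 0 < lam⁻¹ := inv_pos.2 hl
  have hinv : lam⁻¹ ≤ R := (inv_le_one_of_one_le₀ hl1).trans hR
  rw [Real.norm_of_nonneg (errorMajorant_nonneg hR0.le hl),
    Real.norm_of_nonneg (mul_nonneg (Real.rpow_nonneg hl.le _) (by linarith))]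
  have hi := integrableOn_errorMajorant (τ := 1) hR0.le hl hσ
  rw [← Set.Ioc_union_Ioc_eq_Ioc hinv0.le hinv] at hi
  rw [errorMajorant, ← Set.Ioc_union_Ioc_eq_Ioc hinv0.le hinv,
    setIntegral_union (Set.Ioc_disjoint_Ioc_of_le le_rfl) measurableSet_Ioc
      hi.left_of_union hi.right_of_union]
  have hnear : ∫ y in Set.Ioc 0 lam⁻¹, min ((R / (lam * y)) ^ σ) ((R / (lam * y)) ^ (1 : ℝ)) ≤
      R ^ σ / (1 - σ) * lam⁻¹ := by
    refine (setIntegral_mono_on hi.left_of_union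
      (integrableOn_Ioc_div_mul_rpow hR0.le hl hσ hinv0.le) measurableSet_Ioc
      fun y _ => min_le_left _ _).trans_eq ?_
    rw [setIntegral_Ioc_div_mul_rpow hR0.le hl hσ hinv0.le, Real.inv_rpow hl.le,
      ← Real.rpow_neg hl.le]
    have : lam⁻¹ = lam ^ (-σ) * lam ^ (-(1 - σ)) := by
      rw [← Real.rpow_add hl, ← Real.rpow_neg_one]
      congr 1
      ring
    rw [this]
    ring
  have hfar : ∫ y in Set.Ioc lam⁻¹ R, min ((R / (lam * y)) ^ σ) ((R / (lam * y)) ^ (1 : ℝ)) ≤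
      R * lam⁻¹ * (Real.log R + Real.log lam) := by
    have hlogint : IntegrableOn (fun y : ℝ => R * lam⁻¹ * y⁻¹) (Set.Ioc lam⁻¹ R) := by
      rw [← intervalIntegrable_iff_integrableOn_Ioc_of_le hinv]
      refine (intervalIntegral.intervalIntegrable_inv (fun x hx => ?_) continuousOn_id).const_mul _
      rw [Set.uIcc_of_le hinv] at hx
      exact (hinv0.trans_le hx.1).ne'
    refine (setIntegral_mono_on hi.right_of_union hlogint measurableSet_Ioc
      fun y hy => (min_le_right _ _).trans_eq ?_).trans_eq ?_
    · rw [Real.rpow_one, div_eq_mul_inv, mul_inv]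
      ring
    · rw [integral_const_mul, ← intervalIntegral.integral_of_le hinv,
        integral_inv_of_pos hinv0 hR0, div_inv_eq_mul, Real.log_mul hR0.ne' hl.ne']
  have hlogR : 0 ≤ Real.log R := Real.log_nonneg hR
  rw [Real.rpow_neg_one]
  calc _ ≤ R ^ σ / (1 - σ) * lam⁻¹ + R * lam⁻¹ * (Real.log R + Real.log lam) :=
        add_le_add hnear hfar
    _ ≤ R ^ σ / (1 - σ) * lam⁻¹ * Real.log lam +
        R * lam⁻¹ * (Real.log R * Real.log lam + Real.log lam) := by
      refine add_le_add (le_mul_of_one_le_right (by positivity) hlog)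
        (mul_le_mul_of_nonneg_left ?_ (by positivity))
      exact add_le_add_left (le_mul_of_one_le_right hlogR hlog) _
    _ = _ := by ring

theorem IsAmplitude.norm_half_sub_le {a : ℝ → ℝ → ℝ → ℂ} {R M : ℝ} (h : IsAmplitude a R M)
    (hR : 0 ≤ R) {N k : ℕ} (hN : 1 ≤ N) (hk : N < k) {lam : ℝ} (hl : 0 < lam) :
    ‖(∫ y in Set.Ioi (0 : ℝ), ∫ s in Set.Ioi (0 : ℝ),
        a (lam * s ^ k * y) s y * ((s ^ (N - 1) : ℝ) : ℂ)) -
      ((lam ^ (-((N : ℝ) / k)) : ℝ) : ℂ) * (((1 / (k : ℝ) : ℝ) : ℂ) *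
        ∫ t in Set.Ioi (0 : ℝ), ∫ y in Set.Ioi (0 : ℝ),
          ((t ^ ((N : ℝ) / k - 1) * y ^ (-((N : ℝ) / k)) : ℝ) : ℂ) * a t 0 y)‖ ≤
      2 * M * errorMajorant R ((N : ℝ) / k) (((N : ℝ) + 1) / k) lam := by
  have hk0 : 0 < k := by omega
  have hk' : (0 : ℝ) < k := by exact_mod_cast hk0
  have hσ0 : 0 < (N : ℝ) / k := div_pos (by exact_mod_cast hN) hk'
  have hσ1 : (N : ℝ) / k < 1 := (div_lt_one hk').2 (by exact_mod_cast hk)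
  have hprod := h.integrable_rpow_mul hR (by linarith : -1 < (N : ℝ) / k - 1)
    (by linarith : -1 < -((N : ℝ) / k))
  have hfull := (h.integrable_phase (N - 1) k lam).integral_prod_right.integrableOn
    (s := Set.Ioi 0)
  have hmodel := (hprod.integral_prod_right.const_mul
    (((lam ^ (-((N : ℝ) / k)) : ℝ) : ℂ) * ((1 / (k : ℝ) : ℝ) : ℂ)))
  simp only [Function.uncurry_apply_pair] at hmodel hfull
  rw [integral_integral_swap hprod, ← mul_assoc, ← integral_const_mul,
    ← integral_sub hfull hmodel, errorMajorant, ← integral_const_mul]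
  have hfiber (y : ℝ) (hy : 0 < y) :
      ((lam ^ (-((N : ℝ) / k)) : ℝ) : ℂ) * ((1 / (k : ℝ) : ℝ) : ℂ) *
        ∫ t in Set.Ioi (0 : ℝ), ((t ^ ((N : ℝ) / k - 1) * y ^ (-((N : ℝ) / k)) : ℝ) : ℂ) * a t 0 y =
      ∫ s in Set.Ioi (0 : ℝ), a (lam * y * s ^ k) 0 y * ((s ^ (N - 1) : ℝ) : ℂ) := by
    rw [integral_Ioi_comp_mul_pow hN hk0 (fun t => a t 0 y) (mul_pos hl hy),
      Real.mul_rpow hl.le hy.le, ← integral_const_mul, ← integral_const_mul]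
    refine integral_congr_ae (Eventually.of_forall fun t => ?_)
    push_cast
    ring
  have hcomm (y s : ℝ) : lam * s ^ k * y = lam * y * s ^ k := by ring
  simp only [hcomm]
  rw [setIntegral_eq_of_subset_of_forall_sdiff_eq_zero (s := Set.Ioc 0 R) measurableSet_Ioi
    (fun y hy => hy.1) fun y hy => ?_]
  · refine norm_integral_le_of_norm_le ((integrableOn_errorMajorant hR hl hσ1).const_mul _) ?_
    refine (ae_restrict_iff' measurableSet_Ioc).2 (Eventually.of_forall fun y hy => ?_)
    rw [hfiber y hy.1]
    exact h.norm_fiber_sub_le hR hN hk0 (mul_pos hl hy.1)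
  · have hRy : R ≤ |y| := by
      refine le_trans ?_ (le_abs_self y)
      by_contra! hlt
      exact hy.2 ⟨hy.1, hlt.le⟩
    have hz (t s : ℝ) : a t s y = 0 := h.eq_zero _ _ _ (Or.inr (Or.inr hRy))
    simp [hz]

theorem IsAmplitude.integral_eq_add_reflect {a : ℝ → ℝ → ℝ → ℂ} {R M : ℝ}
    (h : IsAmplitude a R M) (m k : ℕ) (lam : ℝ) :
    ∫ s in Set.Ioi (0 : ℝ), (∫ y : ℝ, a (lam * s ^ k * y) s y) * ((s ^ m : ℝ) : ℂ) =
      (∫ y in Set.Ioi (0 : ℝ), ∫ s in Set.Ioi (0 : ℝ),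
        a (lam * s ^ k * y) s y * ((s ^ m : ℝ) : ℂ)) +
      ∫ y in Set.Ioi (0 : ℝ), ∫ s in Set.Ioi (0 : ℝ),
        a (-(lam * s ^ k * y)) s (-y) * ((s ^ m : ℝ) : ℂ) := by
  have hint := h.integrable_phase m k lam
  have hright := hint.integral_prod_right
  simp_rw [← integral_mul_const]
  rw [integral_integral_swap hint, ← intervalIntegral.integral_Iic_add_Ioi
    (b := 0) hright.integrableOn hright.integrableOn, add_comm]
  congr 1
  have := integral_comp_neg_Ioi 0 fun y : ℝ => ∫ s in Set.Ioi (0 : ℝ),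
    a (lam * s ^ k * y) s y * ((s ^ m : ℝ) : ℂ)
  rw [neg_zero] at this
  rw [← this]
  simp only [mul_neg]

theorem integral_rpow_mul_iteratedDeriv_add {σ : ℝ} (hσ : σ < 1) {g h : ℝ → ℂ}
    (hg : ContDiff ℝ (⊤ : ℕ∞) g) (hgs : HasCompactSupport g)
    (hh : ContDiff ℝ (⊤ : ℕ∞) h) (hhs : HasCompactSupport h) {m : ℕ} (hm : Even m) (c : ℝ) :
    ((∏ j ∈ Finset.Icc 1 m, ((j : ℝ) - σ)⁻¹ : ℝ) : ℂ) *
      ∫ y in Set.Ioi (0 : ℝ), ((c * y ^ ((m : ℝ) - σ) : ℝ) : ℂ) *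
        (iteratedDeriv m g y + iteratedDeriv m h (-y)) =
      (∫ y in Set.Ioi (0 : ℝ), ((c * y ^ (-σ) : ℝ) : ℂ) * g y) +
        ∫ y in Set.Ioi (0 : ℝ), ((c * y ^ (-σ) : ℝ) : ℂ) * h (-y) := by
  have hh' : ContDiff ℝ (⊤ : ℕ∞) fun y => h (-y) := hh.comp contDiff_neg
  have hhs' : HasCompactSupport fun y => h (-y) :=
    hhs.comp_homeomorph (Homeomorph.neg ℝ)
  have e1 := integral_Ioi_rpow_mul_eq_iteratedDeriv hσ hg hgs m
  have e2 := integral_Ioi_rpow_mul_eq_iteratedDeriv hσ hh' hhs' m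
  have hmσ : -1 < (m : ℝ) - σ := by have : (0 : ℝ) ≤ m := m.cast_nonneg; linarith
  have hint {u : ℝ → ℂ} (hu : ContDiff ℝ (⊤ : ℕ∞) u) (hus : HasCompactSupport u) :
      IntegrableOn (fun y : ℝ => ((y ^ ((m : ℝ) - σ) : ℝ) : ℂ) * iteratedDeriv m u y)
        (Set.Ioi 0) :=
    integrableOn_Ioi_rpow_mul hmσ (hu.continuous_iteratedDeriv m (by exact_mod_cast le_top))
      (hus.iteratedDeriv m)
  have i1 := hint hg hgs
  have i2 := hint hh' hhs'
  simp only [iteratedDeriv_comp_neg, hm.neg_one_pow, one_smul, one_mul] at e1 e2 i2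
  simp only [Complex.ofReal_mul c, mul_assoc, integral_const_mul, mul_add, e1, e2]
  rw [integral_add (i1.const_mul _) (i2.const_mul _)]
  simp only [integral_const_mul]
  ring

theorem Ink_leading_term_simple_pole
    (n k : ℕ) (hn : 1 ≤ n) (hk : 2 * n < k)
    (a : ℝ → ℝ → ℝ → ℂ)
    (ha_smooth : ContDiff ℝ (⊤ : ℕ∞) (fun q : ℝ × ℝ × ℝ => a q.1 q.2.1 q.2.2))
    (ha_supp : HasCompactSupport (fun q : ℝ × ℝ × ℝ => a q.1 q.2.1 q.2.2))
    (Cnk : ℝ)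
    (hCnk : Cnk = (1 / (k : ℝ)) * ∏ j ∈ Finset.Icc 1 (2 * n), ((j : ℝ) - 2 * n / k)⁻¹)
    (da : ℂ)
    (hda : da = (Cnk : ℂ) *
      ∫ t in Set.Ioi (0 : ℝ), ∫ y₂ in Set.Ioi (0 : ℝ),
        ((t ^ ((2 * n : ℝ) / k - 1) * y₂ ^ ((2 * n : ℝ) - (2 * n : ℝ) / k) : ℝ) : ℂ) *
          (iteratedDeriv (2 * n) (fun s : ℝ => a t 0 s) y₂ +
           iteratedDeriv (2 * n) (fun s : ℝ => a (-t) 0 s) (-y₂)))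
    (I : ℝ → ℂ)
    (hI : ∀ lam : ℝ, I lam = ∫ y₁ in Set.Ioi (0 : ℝ),
        (∫ y₂ : ℝ, a (lam * y₁ ^ k * y₂) y₁ y₂) * ((y₁ ^ (2 * n - 1) : ℝ) : ℂ)) :
    ((fun lam : ℝ => I lam - ((lam ^ (-(2 * n : ℝ) / k) : ℝ) : ℂ) * da)
        =O[atTop] fun lam : ℝ => lam ^ (-((2 * n : ℝ) + 1) / k) * Real.log lam) ∧
    (¬ k ∣ (2 * n + 1) →
      (fun lam : ℝ => I lam - ((lam ^ (-(2 * n : ℝ) / k) : ℝ) : ℂ) * da)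
        =O[atTop] fun lam : ℝ => lam ^ (-((2 * n : ℝ) + 1) / k)) := by
  obtain ⟨R, M, hR, hA⟩ := IsAmplitude.of_contDiff_of_hasCompactSupport ha_smooth ha_supp
  have hR0 : 0 ≤ R := by linarith
  have hk' : (0 : ℝ) < k := by exact_mod_cast (by omega : 0 < k)
  set σ : ℝ := (2 * n : ℝ) / k with hσ
  set τ : ℝ := ((2 * n : ℝ) + 1) / k with hτ
  have hcast : ((2 * n : ℕ) : ℝ) = 2 * n := by push_cast; ring
  have hσ0 : 0 < σ := div_pos (by exact_mod_cast (by omega : 0 < 2 * n)) hk'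
  have hσ1 : σ < 1 := (div_lt_one hk').2 (by exact_mod_cast hk)
  have hslice (t : ℝ) : ContDiff ℝ (⊤ : ℕ∞) (fun s : ℝ => a t 0 s) ∧
      HasCompactSupport (fun s : ℝ => a t 0 s) := by
    refine ⟨ha_smooth.comp (by fun_prop : ContDiff ℝ (⊤ : ℕ∞) fun s : ℝ => (t, (0 : ℝ), s)), ?_⟩
    refine HasCompactSupport.intro (isCompact_Icc (a := -R) (b := R)) fun s hs => ?_
    refine hA.eq_zero _ _ _ (Or.inr (Or.inr ?_))
    by_contra! hlt
    exact hs (abs_le.1 hlt.le)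
  have hprod {b : ℝ → ℝ → ℝ → ℂ} (hb : IsAmplitude b R M) :=
    (hb.integrable_rpow_mul hR0 (by linarith : -1 < σ - 1)
      (by linarith : -1 < -σ)).integral_prod_left
  have hda' : da = ((1 / (k : ℝ) : ℝ) : ℂ) * ((∫ t in Set.Ioi (0 : ℝ), ∫ y in Set.Ioi (0 : ℝ),
        ((t ^ (σ - 1) * y ^ (-σ) : ℝ) : ℂ) * a t 0 y) +
      ∫ t in Set.Ioi (0 : ℝ), ∫ y in Set.Ioi (0 : ℝ),
        ((t ^ (σ - 1) * y ^ (-σ) : ℝ) : ℂ) * a (-t) 0 (-y)) := by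
    have hadd := integral_add (hprod hA) (hprod hA.reflect)
    simp only [Function.uncurry_apply_pair] at hadd
    rw [hda, hCnk, ← hadd, Complex.ofReal_mul, mul_assoc, ← integral_const_mul]
    congr 2
    funext t
    rw [← integral_rpow_mul_iteratedDeriv_add hσ1 (hslice t).1 (hslice t).2 (hslice (-t)).1
      (hslice (-t)).2 (even_two_mul n), hcast]
  have hbound : (fun lam : ℝ => I lam - ((lam ^ (-(2 * n : ℝ) / k) : ℝ) : ℂ) * da)
      =O[atTop] errorMajorant R σ τ := by
    refine Asymptotics.IsBigO.of_bound (2 * M + 2 * M) ?_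
    filter_upwards [eventually_gt_atTop 0] with lam hl
    have h1 := hA.norm_half_sub_le hR0 (by omega : 1 ≤ 2 * n) hk hl
    have h2 := hA.reflect.norm_half_sub_le hR0 (by omega : 1 ≤ 2 * n) hk hl
    rw [hcast, ← hσ, ← hτ] at h1 h2
    rw [Real.norm_of_nonneg (errorMajorant_nonneg hR0 hl), add_mul, hI,
      hA.integral_eq_add_reflect, hda', neg_div, ← hσ]
    refine le_trans (le_of_eq ?_) ((norm_add_le _ _).trans (add_le_add h1 h2))
    congr 1
    ring
  have hsmall (hd : ¬ k ∣ 2 * n + 1) :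
      (fun lam : ℝ => I lam - ((lam ^ (-(2 * n : ℝ) / k) : ℝ) : ℂ) * da)
        =O[atTop] fun lam : ℝ => lam ^ (-((2 * n : ℝ) + 1) / k) := by
    have hlt : 2 * n + 1 < k := by
      rcases Nat.lt_or_ge (2 * n + 1) k with h | h
      · exact h
      · exact absurd (by rw [show k = 2 * n + 1 by omega]) hd
    rw [neg_div _ ((2 * n : ℝ) + 1), ← hτ]
    exact hbound.trans (errorMajorant_isBigO hR0 hσ1
      ((div_lt_one hk').2 (by exact_mod_cast hlt)))
  refine ⟨?_, hsmall⟩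
  by_cases hd : k ∣ 2 * n + 1
  · have hτ1 : τ = 1 := by
      have : (k : ℝ) = 2 * n + 1 := by
        exact_mod_cast le_antisymm (Nat.le_of_dvd (by omega) hd) hk
      rw [hτ, ← this, div_self hk'.ne']
    rw [neg_div _ ((2 * n : ℝ) + 1), ← hτ, hτ1]
    rw [hτ1] at hbound
    exact hbound.trans (errorMajorant_one_isBigO hR hσ1)
  · refine (hsmall hd).trans (Asymptotics.IsBigO.of_bound 1 ?_)
    filter_upwards [eventually_ge_atTop (Real.exp 1)] with lam hle
    have hlog : 1 ≤ Real.log lam := (Real.le_log_iff_exp_le (by linarith [Real.exp_pos 1])).2 hle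
    rw [one_mul, norm_mul]
    exact le_mul_of_one_le_right (norm_nonneg _) (hlog.trans (le_abs_self _))
end

section
/- Let k > 2, write z = (x,ξ) ∈ ℝ^n × ℝ^n and let z₀ = (x₀,ξ₀). Let p₀ be a smooth real-valued function on a neighborhood of z₀ with p₀(z₀) = E_c and with all partial derivatives of order 1 ≤ j ≤ k−1 vanishing at z₀; let 𝔭_k denote the degree-k homogeneous term of the Taylor expansion of p₀ at z₀ (a homogeneous polynomial of degree k in z − z₀). Let S be a smooth real-valued function on (−T,T) × Ω, Ω a neighborhood of z₀, satisfying the Hamilton–Jacobi equation ∂_t S(t,x,ξ) + p₀(x, ∂_x S(t,x,ξ)) = 0 with initial condition S(0,x,ξ) = ⟨x,ξ⟩ (and such that (x, ∂_xS(t,x,ξ)) stays in the domain of p₀). Then, on a possibly smaller neighborhood (−T,T) × Ω′ of (0,z₀), one can write S(t,x,ξ) − ⟨x,ξ⟩ + tE_c = −t( 𝔭_k(x,ξ) + R(x,ξ) + t·G(t,x,ξ) ), where R = p₀ − E_c − 𝔭_k satisfies |R(z)| ≤ C|z−z₀|^{k+1}, and G is smooth with |G(t,z)| ≤ C|z−z₀|^{k+1}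 uniformly for t in compact subsets of (−T,T). -/
open MeasureTheory Set Filter Topology Asymptotics
open scoped ContDiff

universe u

theorem natCast_add_one_le_infty (m : ℕ) : (m : WithTop ℕ∞) + 1 ≤ ∞ := by
  exact_mod_cast (le_top : ((m + 1 : ℕ) : ℕ∞) ≤ ⊤)

/-- Local domination on a compact set is global domination. -/
theorem IsCompact.isBigO_principal_of_forall_nhdsWithin {X E F : Type*} [TopologicalSpace X]
    [Norm E] [SeminormedAddCommGroup F] {K : Set X} (hK : IsCompact K) {f : X → E} {g : X → F}
    (h : ∀ x ∈ K, f =O[𝓝[K] x] g) : f =O[𝓟 K] g := by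
  refine hK.induction_on (p := fun s => f =O[𝓟 s] g) ?_ ?_ ?_ ?_
  · simp
  · exact fun s t hst ht => ht.mono (principal_mono.2 hst)
  · intro s t hs ht
    rw [← sup_principal]
    exact hs.sup ht
  · intro x hx
    obtain ⟨c, hc⟩ := (h x hx).bound
    exact ⟨_, hc, IsBigO.of_bound c (mem_principal_self _)⟩

/-- A function continuous on an open set containing the slice `{q₀} × [a, b]` is bounded there,
uniformly for `q` near `q₀`. -/
theorem ContinuousOn.exists_eventually_norm_le_slice {E F : Type*} [TopologicalSpace E]
    [NormedAddCommGroup F] {f : E × ℝ → F} {U : Set (E × ℝ)} (hU : IsOpen U)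
    (hf : ContinuousOn f U) {a b : ℝ} {q₀ : E} (hq : ∀ s ∈ uIcc a b, (q₀, s) ∈ U) :
    ∃ C : ℝ, ∀ᶠ q in 𝓝 q₀, ∀ s ∈ uIcc a b, (q, s) ∈ U ∧ ‖f (q, s)‖ ≤ C := by
  have hcont : ContinuousOn (fun s => f (q₀, s)) (uIcc a b) :=
    hf.comp (by fun_prop) hq
  obtain ⟨C, hC⟩ := isCompact_uIcc.exists_bound_of_continuousOn hcont
  refine ⟨C + 1, isCompact_uIcc.eventually_forall_of_forall_eventually fun s hs => ?_⟩
  have hfs : ContinuousAt f (q₀, s) := hf.continuousAt (hU.mem_nhds (hq s hs))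
  filter_upwards [hU.mem_nhds (hq s hs),
    hfs.norm.eventually_lt_const ((hC s hs).trans_lt (lt_add_one C))] with z hz hz'
  exact ⟨hz, hz'.le⟩

theorem continuousOn_slice_intervalIntegral {E F : Type*} [NormedAddCommGroup E]
    [NormedAddCommGroup F] [NormedSpace ℝ F] {f : E × ℝ → F} {U : Set (E × ℝ)} {W : Set E}
    {a b : ℝ} (hU : IsOpen U) (hWU : ∀ q ∈ W, ∀ s ∈ uIcc a b, (q, s) ∈ U)
    (hf : ContinuousOn f U) : ContinuousOn (fun q => ∫ s in a..b, f (q, s)) W := by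
  intro q₀ hq₀
  obtain ⟨C, hC⟩ := hf.exists_eventually_norm_le_slice hU (hWU q₀ hq₀)
  refine (intervalIntegral.continuousAt_of_dominated_interval (bound := fun _ => C)
    ?_ ?_ (by simp) ?_).continuousWithinAt
  · filter_upwards [hC] with q hq
    have hc : ContinuousOn (fun s => f (q, s)) (uIcc a b) :=
      hf.comp (by fun_prop) fun s hs => (hq s hs).1
    exact (hc.mono uIoc_subset_uIcc).aestronglyMeasurable measurableSet_uIoc
  · filter_upwards [hC] with q hq
    exact .of_forall fun s hs => (hq s (uIoc_subset_uIcc hs)).2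
  · refine .of_forall fun s hs => ?_
    exact (hf.continuousAt (hU.mem_nhds (hWU q₀ hq₀ s (uIoc_subset_uIcc hs)))).comp
      (f := fun q => (q, s)) (by fun_prop)

theorem hasFDerivAt_slice_intervalIntegral {E F : Type*} [NormedAddCommGroup E]
    [NormedSpace ℝ E] [NormedAddCommGroup F] [NormedSpace ℝ F] {f : E × ℝ → F}
    {U : Set (E × ℝ)} {a b : ℝ} {q₀ : E} (hU : IsOpen U)
    (hq₀ : ∀ s ∈ uIcc a b, (q₀, s) ∈ U) (hf : ContDiffOn ℝ 1 f U) :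
    HasFDerivAt (fun q => ∫ s in a..b, f (q, s))
      (∫ s in a..b, (fderiv ℝ f (q₀, s)).comp (ContinuousLinearMap.inl ℝ E ℝ)) q₀ := by
  have hf' : ContinuousOn (fun p => (fderiv ℝ f p).comp (ContinuousLinearMap.inl ℝ E ℝ)) U :=
    (hf.continuousOn_fderiv_of_isOpen hU le_rfl).clm_comp continuousOn_const
  have hslice {q : E} (hq : ∀ s ∈ uIcc a b, (q, s) ∈ U) :
      ContinuousOn (fun s => f (q, s)) (uIcc a b) := hf.continuousOn.comp (by fun_prop) hq
  obtain ⟨C, hC⟩ := hf'.exists_eventually_norm_le_slice hU hq₀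
  refine intervalIntegral.hasFDerivAt_integral_of_dominated_of_fderiv_le (bound := fun _ => C)
    (F' := fun q s => (fderiv ℝ f (q, s)).comp (ContinuousLinearMap.inl ℝ E ℝ))
    hC ?_ ?_ ?_ ?_ (by simp) ?_
  · filter_upwards [hC] with q hq
    exact ((hslice fun s hs => (hq s hs).1).mono
      uIoc_subset_uIcc).aestronglyMeasurable measurableSet_uIoc
  · exact (hslice hq₀).intervalIntegrable
  · have hc : ContinuousOn (fun s => (fderiv ℝ f (q₀, s)).comp (ContinuousLinearMap.inl ℝ E ℝ))
        (uIcc a b) := hf'.comp (f := fun s => (q₀, s)) (by fun_prop) hq₀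
    exact (hc.mono uIoc_subset_uIcc).aestronglyMeasurable measurableSet_uIoc
  · exact .of_forall fun s hs q hq => (hq s (uIoc_subset_uIcc hs)).2
  · refine .of_forall fun s hs q hq => ?_
    have hd : DifferentiableAt ℝ f (q, s) :=
      (hf.contDiffAt (hU.mem_nhds (hq s (uIoc_subset_uIcc hs)).1)).differentiableAt one_ne_zero
    exact hd.hasFDerivAt.comp q (hasFDerivAt_prodMk_left q s)

/-- Smooth dependence of an interval integral on a parameter. -/
theorem contDiffOn_slice_intervalIntegral {E : Type u} [NormedAddCommGroup E] [NormedSpace ℝ E]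
    {W : Set E} (hW : IsOpen W) {U : Set (E × ℝ)} (hU : IsOpen U) {a b : ℝ}
    (hWU : ∀ q ∈ W, ∀ s ∈ uIcc a b, (q, s) ∈ U) (n : ℕ) {F : Type u} [NormedAddCommGroup F]
    [NormedSpace ℝ F] {f : E × ℝ → F} (hf : ContDiffOn ℝ n f U) :
    ContDiffOn ℝ n (fun q => ∫ s in a..b, f (q, s)) W := by
  induction n generalizing F with
  | zero =>
    simp only [CharP.cast_eq_zero, contDiffOn_zero] at hf ⊢
    exact continuousOn_slice_intervalIntegral hU hWU hf
  | succ n ih =>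
    push_cast at hf ⊢
    have hderiv : ∀ q ∈ W, HasFDerivAt (fun q => ∫ s in a..b, f (q, s))
        (∫ s in a..b, (fderiv ℝ f (q, s)).comp (ContinuousLinearMap.inl ℝ E ℝ)) q := fun q hq =>
      hasFDerivAt_slice_intervalIntegral hU (hWU q hq) (hf.of_le (by simp))
    rw [contDiffOn_succ_iff_fderiv_of_isOpen hW]
    refine ⟨fun q hq => (hderiv q hq).differentiableAt.differentiableWithinAt, by simp, ?_⟩
    refine (ih (f := fun p => (fderiv ℝ f p).comp (ContinuousLinearMap.inl ℝ E ℝ)) ?_).congr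
      fun q hq => (hderiv q hq).fderiv
    exact (hf.fderiv_of_isOpen hU le_rfl).clm_comp contDiffOn_const

/-- Taylor's theorem with big-O remainder. -/
theorem ContDiffAt.sub_taylor_isBigO {E F : Type*} [NormedAddCommGroup E] [NormedSpace ℝ E]
    [NormedAddCommGroup F] [NormedSpace ℝ F] [CompleteSpace F] {f : E → F} {x₀ : E} {m : ℕ}
    (hf : ContDiffAt ℝ (m + 1) f x₀) :
    (fun x => f x - ∑ j ∈ Finset.range (m + 1),
      (j.factorial : ℝ)⁻¹ • iteratedFDeriv ℝ j f x₀ (fun _ => x - x₀))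
      =O[𝓝 x₀] fun x => ‖x - x₀‖ ^ (m + 1) := by
  have hbound := ((hf.iteratedFDeriv_right (m := 0) (i := m + 1)
    (by simp)).continuousAt.norm).eventually_lt_const (lt_add_one _)
  obtain ⟨r, hr, hball⟩ := Metric.eventually_nhds_iff_ball.1
    ((hf.eventually (by exact_mod_cast WithTop.natCast_ne_top (m + 1))).and hbound)
  refine IsBigO.of_bound ((m.factorial : ℝ)⁻¹ * (‖iteratedFDeriv ℝ (m + 1) f x₀‖ + 1)) ?_
  filter_upwards [Metric.ball_mem_nhds x₀ hr] with x hx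
  have hseg : ∀ t ∈ Icc (0 : ℝ) 1, x₀ + t • (x - x₀) ∈ Metric.ball x₀ r := by
    intro t ht
    exact (convex_ball x₀ r).add_smul_sub_mem (Metric.mem_ball_self hr) hx ht
  have htaylor := map_add_eq_sum_add_integral_iteratedFDeriv (n := m) (x := x₀) (y := x - x₀)
    (f := f) fun t ht => (hball _ (hseg t ht)).1
  rw [add_sub_cancel] at htaylor
  rw [htaylor, add_sub_cancel_left, norm_smul, norm_inv, Real.norm_natCast, mul_assoc]
  gcongr
  refine (intervalIntegral.norm_integral_le_of_norm_le_const (C := _) fun t ht => ?_).trans_eq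
    (by rw [sub_zero, abs_one, mul_one])
  rw [uIoc_of_le zero_le_one] at ht
  have ht' : t ∈ Icc (0 : ℝ) 1 := ⟨ht.1.le, ht.2⟩
  calc ‖(1 - t) ^ m • iteratedFDeriv ℝ (m + 1) f (x₀ + t • (x - x₀)) fun _ => x - x₀‖
      ≤ 1 * (‖iteratedFDeriv ℝ (m + 1) f (x₀ + t • (x - x₀))‖ * ‖x - x₀‖ ^ (m + 1)) := by
        rw [norm_smul]
        gcongr
        · rw [norm_pow, Real.norm_of_nonneg (by linarith [ht.2])]
          exact pow_le_one₀ (by linarith [ht.2]) (by linarith [ht.1])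
        · simpa using ContinuousMultilinearMap.le_opNorm
            (iteratedFDeriv ℝ (m + 1) f (x₀ + t • (x - x₀))) fun _ => x - x₀
    _ ≤ _ := by
        rw [one_mul, norm_pow, norm_norm]
        gcongr
        exact (hball _ (hseg t ht')).2.le

/-- A solution of `y' = O(y)` vanishing at a point vanishes near it. -/
theorem eventually_eq_zero_of_deriv_isBigO {E : Type*} [NormedAddCommGroup E] [NormedSpace ℝ E]
    {y y' : ℝ → E} {t₀ : ℝ} (hy : ∀ᶠ t in 𝓝 t₀, HasDerivAt y (y' t) t) (hy₀ : y t₀ = 0)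
    (hO : y' =O[𝓝 t₀] y) : ∀ᶠ t in 𝓝 t₀, y t = 0 := by
  obtain ⟨K, hK⟩ := hO.bound
  obtain ⟨δ, hδ, hball⟩ := Metric.eventually_nhds_iff_ball.1 (hy.and hK)
  rw [Real.ball_eq_Ioo] at hball
  filter_upwards [Metric.ball_mem_nhds t₀ hδ] with t ht
  rw [Real.ball_eq_Ioo] at ht
  rcases le_total t₀ t with h | h
  · have hsub : ∀ s ∈ Icc t₀ t, s ∈ Ioo (t₀ - δ) (t₀ + δ) := fun s hs =>
      ⟨by linarith [hs.1], hs.2.trans_lt ht.2⟩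
    refine eq_zero_of_abs_deriv_le_mul_abs_self_of_eq_zero_right (f' := y') (K := K)
      (fun s hs => (hball s (hsub s hs)).1.continuousAt.continuousWithinAt)
      (fun s hs => (hball s (hsub s (Ico_subset_Icc_self hs))).1.hasDerivWithinAt) hy₀
      (fun s hs => (hball s (hsub s (Ico_subset_Icc_self hs))).2) t ⟨h, le_rfl⟩
  · have hsub : ∀ s ∈ Icc (-t₀) (-t), -s ∈ Ioo (t₀ - δ) (t₀ + δ) := fun s hs =>
      ⟨by linarith [hs.2, ht.1], by linarith [hs.1]⟩
    have hderiv : ∀ s ∈ Icc (-t₀) (-t), HasDerivAt (fun s => y (-s)) (-y' (-s)) s := by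
      intro s hs
      simpa [Function.comp_def] using (hball _ (hsub s hs)).1.scomp s (hasDerivAt_neg s)
    have := eq_zero_of_abs_deriv_le_mul_abs_self_of_eq_zero_right (f := fun s => y (-s))
      (f' := fun s => -y' (-s)) (K := K)
      (fun s hs => (hderiv s hs).continuousAt.continuousWithinAt)
      (fun s hs => (hderiv s (Ico_subset_Icc_self hs)).hasDerivWithinAt) (by simpa using hy₀)
      (fun s hs => by simpa using (hball _ (hsub s (Ico_subset_Icc_self hs))).2) (-t)
      ⟨by linarith, le_rfl⟩
    simpa using this

/-! ### Hamilton–Jacobi equation near a critical point -/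

section HamiltonJacobi

variable {X : Type*} [NormedAddCommGroup X] [NormedSpace ℝ X]

/-- The map `q = (t, x, ξ) ↦ (x, L (dF q))`; for `L` the extraction of the `x`-gradient it is
`(t, x, ξ) ↦ (x, ∂ₓF (t, x, ξ))`. -/
noncomputable def phaseMap (L : (ℝ × X × X →L[ℝ] ℝ) →L[ℝ] X) (F : ℝ × X × X → ℝ)
    (q : ℝ × X × X) : X × X :=
  (q.2.1, L (fderiv ℝ F q))

variable {L : (ℝ × X × X →L[ℝ] ℝ) →L[ℝ] X} {F : ℝ × X × X → ℝ} {p : X × X → ℝ}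
  {U : Set (ℝ × X × X)} {q : ℝ × X × X}

theorem ContDiffAt.phaseMap (hF : ContDiffAt ℝ ∞ F q) : ContDiffAt ℝ ∞ (phaseMap L F) q :=
  (contDiff_fst.comp contDiff_snd).contDiffAt.prodMk
    (L.contDiff.contDiffAt.comp q (hF.fderiv_right (m := ∞) (by simp)))

theorem fderiv_phaseMap_apply_time (hF : ContDiffAt ℝ ∞ F q) :
    fderiv ℝ (phaseMap L F) q (1, 0) = (0, L (fderiv ℝ (fderiv ℝ F) q (1, 0))) := by
  have hd : DifferentiableAt ℝ (fderiv ℝ F) q :=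
    (hF.fderiv_right (m := ∞) (by simp)).differentiableAt (by simp)
  have h := (((hasFDerivAt_id (𝕜 := ℝ) q).snd).fst).prodMk
    (L.hasFDerivAt.comp q hd.hasFDerivAt)
  have hder : HasFDerivAt (phaseMap L F) _ q := h
  rw [hder.fderiv]
  simp

/-- Differentiating the Hamilton–Jacobi equation. -/
theorem fderiv_fderiv_apply_time (hU : IsOpen U) (hF : ContDiffOn ℝ ∞ F U)
    (hHJ : ∀ q ∈ U, fderiv ℝ F q (1, 0) = -p (phaseMap L F q)) (hq : q ∈ U)
    (hp : DifferentiableAt ℝ p (phaseMap L F q)) :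
    fderiv ℝ (fderiv ℝ F) q (1, 0)
      = -(fderiv ℝ p (phaseMap L F q)).comp (fderiv ℝ (phaseMap L F) q) := by
  have hFq : ContDiffAt ℝ ∞ F q := hF.contDiffAt (hU.mem_nhds hq)
  have hd : DifferentiableAt ℝ (fderiv ℝ F) q :=
    (hFq.fderiv_right (m := ∞) (by simp)).differentiableAt (by simp)
  have hΦ : DifferentiableAt ℝ (phaseMap L F) q := hFq.phaseMap.differentiableAt (by simp)
  have heq : (fun q => fderiv ℝ F q (1, 0)) =ᶠ[𝓝 q] fun q => -p (phaseMap L F q) := by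
    filter_upwards [hU.mem_nhds hq] with q' hq' using hHJ q' hq'
  have h₁ : HasFDerivAt (fun q => fderiv ℝ F q (1, 0))
      (-(fderiv ℝ p (phaseMap L F q)).comp (fderiv ℝ (phaseMap L F) q)) q :=
    (hp.hasFDerivAt.comp q hΦ.hasFDerivAt).neg.congr_of_eventuallyEq heq
  have h₂ := hd.hasFDerivAt.clm_apply (hasFDerivAt_const ((1, 0) : ℝ × X × X) q)
  refine ContinuousLinearMap.ext fun v => ?_
  rw [← h₁.fderiv, h₂.fderiv, (hFq.isSymmSndFDerivAt
    (by simpa using! ENat.LEInfty.out)).eq]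
  simp

theorem norm_fderiv_phaseMap_apply_time_le (hU : IsOpen U) (hF : ContDiffOn ℝ ∞ F U)
    (hHJ : ∀ q ∈ U, fderiv ℝ F q (1, 0) = -p (phaseMap L F q)) (hq : q ∈ U)
    (hp : DifferentiableAt ℝ p (phaseMap L F q)) :
    ‖fderiv ℝ (phaseMap L F) q (1, 0)‖
      ≤ ‖L‖ * (‖fderiv ℝ p (phaseMap L F q)‖ * ‖fderiv ℝ (phaseMap L F) q‖) := by
  rw [fderiv_phaseMap_apply_time (hF.contDiffAt (hU.mem_nhds hq)),
    fderiv_fderiv_apply_time hU hF hHJ hq hp, Prod.norm_mk, norm_zero,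
    max_eq_right (norm_nonneg _)]
  refine (L.le_opNorm _).trans ?_
  gcongr
  rw [norm_neg]
  exact ContinuousLinearMap.opNorm_comp_le _ _

/-- The second time derivative is quadratic in the differential of the Hamiltonian. -/
theorem norm_fderiv_fderiv_time_time_le (hU : IsOpen U) (hF : ContDiffOn ℝ ∞ F U)
    (hHJ : ∀ q ∈ U, fderiv ℝ F q (1, 0) = -p (phaseMap L F q)) (hq : q ∈ U)
    (hp : DifferentiableAt ℝ p (phaseMap L F q)) :
    ‖fderiv ℝ (fderiv ℝ F) q (1, 0) (1, 0)‖
      ≤ ‖L‖ * ‖fderiv ℝ (phaseMap L F) q‖ * ‖fderiv ℝ p (phaseMap L F q)‖ ^ 2 := by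
  rw [fderiv_fderiv_apply_time hU hF hHJ hq hp, neg_apply, norm_neg,
    ContinuousLinearMap.comp_apply]
  refine (ContinuousLinearMap.le_opNorm _ _).trans ?_
  calc _ ≤ ‖fderiv ℝ p (phaseMap L F q)‖ *
        (‖L‖ * (‖fderiv ℝ p (phaseMap L F q)‖ * ‖fderiv ℝ (phaseMap L F) q‖)) := by
        gcongr
        exact norm_fderiv_phaseMap_apply_time_le hU hF hHJ hq hp
    _ = _ := by ring

theorem fderiv_phaseMap_isBigO_one (hF : ContDiffAt ℝ ∞ F q) :
    (fun q => fderiv ℝ (phaseMap L F) q) =O[𝓝 q] fun _ => (1 : ℝ) :=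
  ((hF.phaseMap.fderiv_right (m := ∞) (by simp)).continuousAt.isBigO_one ℝ)

/-- A critical point of the Hamiltonian is fixed by the flow: `phaseMap L F (t, z₀) = z₀`. -/
theorem phaseMap_eq_of_fderiv_eq_zero {T : ℝ} (hT : 0 < T) {W : Set (X × X)} (hW : IsOpen W)
    (hF : ContDiffOn ℝ ∞ F (Ioo (-T) T ×ˢ W))
    (hHJ : ∀ q ∈ Ioo (-T) T ×ˢ W, fderiv ℝ F q (1, 0) = -p (phaseMap L F q)) {z₀ : X × X}
    (hz₀ : z₀ ∈ W) (hp : ContDiffAt ℝ ∞ p z₀) (hcrit : fderiv ℝ p z₀ = 0)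
    (hinit : phaseMap L F (0, z₀) = z₀) {t : ℝ} (ht : t ∈ Ioo (-T) T) :
    phaseMap L F (t, z₀) = z₀ := by
  have hU : IsOpen (Ioo (-T) T ×ˢ W) := isOpen_Ioo.prod hW
  have hFt {s : ℝ} (hs : s ∈ Ioo (-T) T) : ContDiffAt ℝ ∞ F (s, z₀) :=
    hF.contDiffAt (hU.mem_nhds ⟨hs, hz₀⟩)
  have hcont {s : ℝ} (hs : s ∈ Ioo (-T) T) :
      ContinuousAt (fun s => phaseMap L F (s, z₀)) s :=
    (hFt hs).phaseMap.continuousAt.comp (f := fun s => (s, z₀)) (by fun_prop)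
  have hlocal {t₀ : ℝ} (ht₀ : t₀ ∈ Ioo (-T) T) (h₀ : phaseMap L F (t₀, z₀) = z₀) :
      ∀ᶠ s in 𝓝 t₀, phaseMap L F (s, z₀) = z₀ := by
    have hIoo : ∀ᶠ s in 𝓝 t₀, s ∈ Ioo (-T) T := isOpen_Ioo.mem_nhds ht₀
    have htend : Tendsto (fun s => phaseMap L F (s, z₀)) (𝓝 t₀) (𝓝 z₀) := by
      simpa [ContinuousAt, h₀] using hcont ht₀
    have hpdiff : ∀ᶠ s in 𝓝 t₀, DifferentiableAt ℝ p (phaseMap L F (s, z₀)) :=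
      htend.eventually (((hp.of_le (m := 1) (by simp)).eventually (by simp)).mono
        fun z hz => hz.differentiableAt one_ne_zero)
    have hpO : (fun s => fderiv ℝ p (phaseMap L F (s, z₀)))
        =O[𝓝 t₀] fun s => phaseMap L F (s, z₀) - z₀ := by
      have := ((hp.fderiv_right (m := ∞) (by simp)).differentiableAt
        (by simp)).hasFDerivAt.isBigO_sub.comp_tendsto htend
      simpa [Function.comp_def, hcrit] using this
    have hΦO : (fun s => fderiv ℝ (phaseMap L F) (s, z₀)) =O[𝓝 t₀] fun _ => (1 : ℝ) :=
      (fderiv_phaseMap_isBigO_one (hFt ht₀)).comp_tendsto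
        (k := fun s => (s, z₀)) (Continuous.tendsto (by fun_prop) t₀)
    have hzero := eventually_eq_zero_of_deriv_isBigO (y := fun s => phaseMap L F (s, z₀) - z₀)
      (y' := fun s => fderiv ℝ (phaseMap L F) (s, z₀) (1, 0)) (t₀ := t₀) ?_ (by simp [h₀]) ?_
    · filter_upwards [hzero] with s hs using sub_eq_zero.1 hs
    · filter_upwards [hIoo] with s hs
      have hd := ((hFt hs).phaseMap (L := L)).differentiableAt (by simp) |>.hasFDerivAt
      have := hd.comp_hasDerivAt s ((hasDerivAt_id s).prodMk (hasDerivAt_const s z₀))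
      exact this.sub_const z₀
    · have hle : (fun s => fderiv ℝ (phaseMap L F) (s, z₀) (1, 0)) =O[𝓝 t₀] fun s =>
          ‖L‖ * (‖fderiv ℝ p (phaseMap L F (s, z₀))‖ * ‖fderiv ℝ (phaseMap L F) (s, z₀)‖) := by
        refine IsBigO.of_bound 1 ?_
        filter_upwards [hIoo, hpdiff] with s hs hps
        rw [one_mul]
        exact (norm_fderiv_phaseMap_apply_time_le hU hF hHJ ⟨hs, hz₀⟩ hps).trans (le_abs_self _)
      refine hle.trans ?_
      simpa using ((hpO.norm_norm.mul hΦO.norm_left).const_mul_left ‖L‖)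
  have hsub : Ioo (-T) T ⊆ interior {s | phaseMap L F (s, z₀) = z₀} := by
    refine isPreconnected_Ioo.subset_of_closure_inter_subset isOpen_interior
      ⟨0, ⟨by simpa using hT, hT⟩, ?_⟩ ?_
    · exact mem_interior_iff_mem_nhds.2 (hlocal ⟨by simpa using hT, hT⟩ hinit)
    · rintro s ⟨hs, hsT⟩
      refine mem_interior_iff_mem_nhds.2 (hlocal hsT ?_)
      by_contra hne
      have hev := (hcont hsT).eventually_ne hne
      obtain ⟨r, hr, hr'⟩ := mem_closure_iff_nhds.1 hs _ hev
      exact hr (interior_subset (s := {s | phaseMap L F (s, z₀) = z₀}) hr')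
  exact interior_subset (s := {s | phaseMap L F (s, z₀) = z₀}) (hsub ht)

/-- If the differential of the Hamiltonian vanishes to order `k - 1` at `z₀` and `k > 2`, then the
second time derivative of a solution vanishes to order `k + 1` at `z₀`. -/
theorem fderiv_fderiv_time_time_isBigO {T : ℝ} (hT : 0 < T) {W : Set (X × X)} (hW : IsOpen W)
    (hF : ContDiffOn ℝ ∞ F (Ioo (-T) T ×ˢ W))
    (hHJ : ∀ q ∈ Ioo (-T) T ×ˢ W, fderiv ℝ F q (1, 0) = -p (phaseMap L F q)) {z₀ : X × X}
    (hz₀ : z₀ ∈ W) (hp : ContDiffAt ℝ ∞ p z₀) {k : ℕ} (hk : 2 < k)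
    (hpO : fderiv ℝ p =O[𝓝 z₀] fun z => ‖z - z₀‖ ^ (k - 1))
    (hinit : phaseMap L F (0, z₀) = z₀) {t : ℝ} (ht : t ∈ Ioo (-T) T) :
    (fun q => fderiv ℝ (fderiv ℝ F) q (1, 0) (1, 0))
      =O[𝓝 (t, z₀)] fun q => ‖q.2 - z₀‖ ^ (k + 1) := by
  have hU : IsOpen (Ioo (-T) T ×ˢ W) := isOpen_Ioo.prod hW
  have hUt : Ioo (-T) T ×ˢ W ∈ 𝓝 (t, z₀) := hU.mem_nhds ⟨ht, hz₀⟩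
  have hFt : ContDiffAt ℝ ∞ F (t, z₀) := hF.contDiffAt hUt
  have hcrit : fderiv ℝ p z₀ = 0 := by
    have := hpO.eq_zero_imp.self_of_nhds
    exact this (by simp [show k - 1 ≠ 0 by omega])
  have hfix {s : ℝ} (hs : s ∈ Ioo (-T) T) : phaseMap L F (s, z₀) = z₀ :=
    phaseMap_eq_of_fderiv_eq_zero hT hW hF hHJ hz₀ hp hcrit hinit hs
  have htend : Tendsto (phaseMap L F) (𝓝 (t, z₀)) (𝓝 z₀) := by
    simpa [ContinuousAt, hfix ht] using (hFt.phaseMap (L := L)).continuousAt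
  have hpdiff : ∀ᶠ q in 𝓝 (t, z₀), DifferentiableAt ℝ p (phaseMap L F q) :=
    htend.eventually (((hp.of_le (m := 1) (by simp)).eventually (by simp)).mono
      fun z hz => hz.differentiableAt one_ne_zero)
  have hlip : (fun q => phaseMap L F q - z₀) =O[𝓝 (t, z₀)] fun q => q.2 - z₀ := by
    have hstrict := (hFt.phaseMap (L := L)).hasStrictFDerivAt (by simp) |>.isBigO_sub
    have hpair : Tendsto (fun q : ℝ × X × X => (q, (q.1, z₀))) (𝓝 (t, z₀))
        (𝓝 ((t, z₀), (t, z₀))) :=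
      Continuous.tendsto' (by fun_prop) _ _ rfl
    refine ((hstrict.comp_tendsto hpair).congr' ?_ .rfl).trans ?_
    · filter_upwards [hUt] with q hq
      simp [hfix hq.1]
    · refine IsBigO.of_bound 1 (.of_forall fun q => ?_)
      simp [Prod.norm_def]
  have hpΦ : (fun q => fderiv ℝ p (phaseMap L F q)) =O[𝓝 (t, z₀)]
      fun q => ‖q.2 - z₀‖ ^ (k - 1) :=
    (hpO.comp_tendsto htend).trans (hlip.norm_norm.pow (k - 1))
  have hle : (fun q => fderiv ℝ (fderiv ℝ F) q (1, 0) (1, 0)) =O[𝓝 (t, z₀)] fun q =>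
      ‖L‖ * ‖fderiv ℝ (phaseMap L F) q‖ * ‖fderiv ℝ p (phaseMap L F q)‖ ^ 2 := by
    refine IsBigO.of_bound 1 ?_
    filter_upwards [hUt, hpdiff] with q hq hpq
    rw [one_mul]
    exact (norm_fderiv_fderiv_time_time_le hU hF hHJ hq hpq).trans (le_abs_self _)
  have hmul := ((fderiv_phaseMap_isBigO_one (L := L) hFt).norm_left.const_mul_left ‖L‖).mul
    (hpΦ.norm_left.pow 2)
  refine (hle.trans hmul).trans ?_
  have hbdd : (fun q : ℝ × X × X => ‖q.2 - z₀‖ ^ (k - 3)) =O[𝓝 (t, z₀)] fun _ => (1 : ℝ) :=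
    (Continuous.tendsto (by fun_prop) _).isBigO_one ℝ
  refine ((isBigO_refl (fun q : ℝ × X × X => ‖q.2 - z₀‖ ^ (k + 1)) _).mul hbdd).congr
    (fun q => ?_) (fun q => mul_one _)
  rw [one_mul, ← pow_mul, ← pow_add]
  congr 1
  omega

end HamiltonJacobi

theorem generating_function_phase_structure
    (n : ℕ) (hn : 1 ≤ n) (k : ℕ) (hk : 2 < k)
    (Ec T : ℝ) (hT : 0 < T)
    (z₀ : (Fin n → ℝ) × (Fin n → ℝ))
    (p₀ : (Fin n → ℝ) × (Fin n → ℝ) → ℝ)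
    (V : Set ((Fin n → ℝ) × (Fin n → ℝ))) (hV : V ∈ nhds z₀)
    (hp₀ : ContDiffOn ℝ (⊤ : ℕ∞) p₀ V)
    (hval : p₀ z₀ = Ec)
    (hjets : ∀ j : ℕ, 1 ≤ j → j ≤ k - 1 → iteratedFDeriv ℝ j p₀ z₀ = 0)
    -- 𝔭_k : the degree-k homogeneous Taylor term of p₀ at z₀
    (P : (Fin n → ℝ) × (Fin n → ℝ) → ℝ)
    (hP : ∀ z : (Fin n → ℝ) × (Fin n → ℝ),
      P z = (1 / (Nat.factorial k : ℝ)) *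
        iteratedFDeriv ℝ k p₀ z₀ (fun _ : Fin k => z - z₀))
    (Ω : Set ((Fin n → ℝ) × (Fin n → ℝ))) (hΩ : Ω ∈ nhds z₀)
    (S : ℝ → (Fin n → ℝ) → (Fin n → ℝ) → ℝ)
    (hS : ContDiffOn ℝ (⊤ : ℕ∞)
      (fun q : ℝ × (Fin n → ℝ) × (Fin n → ℝ) => S q.1 q.2.1 q.2.2)
      (Set.Ioo (-T) T ×ˢ Ω))
    -- the x-gradient of S
    (gradS : ℝ → (Fin n → ℝ) → (Fin n → ℝ) → (Fin n → ℝ))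
    (hgradS : ∀ (t : ℝ) (x ξ : Fin n → ℝ),
      gradS t x ξ = fun i => fderiv ℝ (fun x' => S t x' ξ) x (Pi.single i 1))
    -- (x, ∂_x S) stays in the domain of p₀
    (hdom : ∀ (t : ℝ) (x ξ : Fin n → ℝ), t ∈ Set.Ioo (-T) T → (x, ξ) ∈ Ω →
      (x, gradS t x ξ) ∈ V)
    -- Hamilton–Jacobi equation with initial condition S(0,x,ξ) = ⟨x,ξ⟩
    (hHJ : ∀ (t : ℝ) (x ξ : Fin n → ℝ), t ∈ Set.Ioo (-T) T → (x, ξ) ∈ Ω →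
      deriv (fun s : ℝ => S s x ξ) t + p₀ (x, gradS t x ξ) = 0)
    (hinit : ∀ x ξ : Fin n → ℝ, (x, ξ) ∈ Ω → S 0 x ξ = ∑ i, x i * ξ i) :
    ∃ Ω' ∈ nhds z₀, Ω' ⊆ Ω ∧
      ∃ G : ℝ → (Fin n → ℝ) × (Fin n → ℝ) → ℝ,
        ContDiffOn ℝ (⊤ : ℕ∞)
          (fun q : ℝ × (Fin n → ℝ) × (Fin n → ℝ) => G q.1 q.2)
          (Set.Ioo (-T) T ×ˢ Ω') ∧
        (∀ (t : ℝ) (x ξ : Fin n → ℝ), t ∈ Set.Ioo (-T) T → (x, ξ) ∈ Ω' →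
          S t x ξ - (∑ i, x i * ξ i) + t * Ec
            = -t * (P (x, ξ) + (p₀ (x, ξ) - Ec - P (x, ξ)) + t * G t (x, ξ))) ∧
        (∃ C : ℝ, ∀ z ∈ Ω', |p₀ z - Ec - P z| ≤ C * ‖z - z₀‖ ^ (k + 1)) ∧
        (∀ K : Set ℝ, IsCompact K → K ⊆ Set.Ioo (-T) T →
          ∃ C : ℝ, ∀ t ∈ K, ∀ z ∈ Ω', |G t z| ≤ C * ‖z - z₀‖ ^ (k + 1)) := by
  set F : ℝ × (Fin n → ℝ) × (Fin n → ℝ) → ℝ := fun q => S q.1 q.2.1 q.2.2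
  set W : Set ((Fin n → ℝ) × (Fin n → ℝ)) := interior Ω
  have hW : IsOpen W := isOpen_interior
  have hz₀ : z₀ ∈ W := mem_interior_iff_mem_nhds.2 hΩ
  have hU : IsOpen (Ioo (-T) T ×ˢ W) := isOpen_Ioo.prod hW
  have hF : ContDiffOn ℝ ∞ F (Ioo (-T) T ×ˢ W) :=
    hS.mono (prod_mono Subset.rfl interior_subset)
  have hFd {q : ℝ × (Fin n → ℝ) × (Fin n → ℝ)} (hq : q ∈ Ioo (-T) T ×ˢ W) :
      HasFDerivAt F (fderiv ℝ F q) q :=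
    ((hF.contDiffAt (hU.mem_nhds hq)).differentiableAt (by simp)).hasFDerivAt
  have h0T : (0 : ℝ) ∈ Ioo (-T) T := ⟨by simpa using hT, hT⟩
  let L : (ℝ × (Fin n → ℝ) × (Fin n → ℝ) →L[ℝ] ℝ) →L[ℝ] (Fin n → ℝ) :=
    ContinuousLinearMap.pi fun i => ContinuousLinearMap.apply ℝ ℝ (0, Pi.single i 1, 0)
  have hΦ {t : ℝ} {x ξ : Fin n → ℝ} (hq : (t, x, ξ) ∈ Ioo (-T) T ×ˢ W) :
      phaseMap L F (t, x, ξ) = (x, gradS t x ξ) := by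
    have h := HasFDerivAt.comp (f := fun x' => (t, x', ξ)) x (hFd hq)
      ((hasFDerivAt_const t x).prodMk ((hasFDerivAt_id x).prodMk (hasFDerivAt_const ξ x)))
    have h' : HasFDerivAt (fun x' => S t x' ξ) _ x := h
    ext i
    · rfl
    · simp only [hgradS]
      rw [h'.fderiv]
      simp [phaseMap, L]
  have hHJ' : ∀ q ∈ Ioo (-T) T ×ˢ W, fderiv ℝ F q (1, 0) = -p₀ (phaseMap L F q) := by
    rintro ⟨t, x, ξ⟩ hq
    have h := (hFd hq).comp_hasDerivAt t ((hasDerivAt_id t).prodMk (hasDerivAt_const t (x, ξ)))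
    have h' : HasDerivAt (fun s => S s x ξ) _ t := h
    have heq := hHJ t x ξ hq.1 (interior_subset hq.2)
    rw [h'.deriv] at heq
    rw [hΦ hq]
    exact eq_neg_of_add_eq_zero_left heq
  have hinit' {z : (Fin n → ℝ) × (Fin n → ℝ)} (hz : z ∈ W) : phaseMap L F (0, z) = z := by
    obtain ⟨x, ξ⟩ := z
    rw [hΦ ⟨h0T, hz⟩, hgradS]
    have hev : (fun x' => S 0 x' ξ) =ᶠ[𝓝 x] fun x' => ∑ i, x' i * ξ i := by
      have hnear : ∀ᶠ x' in 𝓝 x, (x', ξ) ∈ W :=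
        (Continuous.tendsto (by fun_prop : Continuous fun x' => (x', ξ)) x).eventually
          (hW.mem_nhds hz)
      filter_upwards [hnear] with x' hx' using hinit x' ξ (interior_subset hx')
    have hlin : HasFDerivAt (fun x' : Fin n → ℝ => ∑ i, x' i * ξ i)
        (∑ i, ξ i • ContinuousLinearMap.proj (R := ℝ) (φ := fun _ : Fin n => ℝ) i) x :=
      HasFDerivAt.fun_sum fun i _ => (hasFDerivAt_apply i x).mul_const (ξ i)
    rw [hev.fderiv_eq, hlin.fderiv]
    ext i
    · rfl
    · simp [Pi.single_apply]
  have hp : ContDiffAt ℝ ∞ p₀ z₀ := hp₀.contDiffAt hV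
  have hpO : fderiv ℝ p₀ =O[𝓝 z₀] fun z => ‖z - z₀‖ ^ (k - 1) := by
    have h := ContDiffAt.sub_taylor_isBigO (m := k - 2)
      ((hp.fderiv_right (m := ∞) (by simp)).of_le
        (natCast_add_one_le_infty _))
    rw [show k - 2 + 1 = k - 1 by omega] at h
    refine h.congr_left fun z => ?_
    rw [Finset.sum_eq_zero, sub_zero]
    intro j hj
    have hj' : iteratedFDeriv ℝ j (fderiv ℝ p₀) z₀ = 0 := by
      rw [← norm_eq_zero, norm_iteratedFDeriv_fderiv,
        hjets (j + 1) (by omega) (by have := Finset.mem_range.1 hj; omega), norm_zero]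
    simp [hj']
  have hR : (fun z => p₀ z - Ec - P z) =O[𝓝 z₀] fun z => ‖z - z₀‖ ^ (k + 1) := by
    refine (ContDiffAt.sub_taylor_isBigO (m := k)
      (hp.of_le (natCast_add_one_le_infty _))).congr_left fun z => ?_
    rw [Finset.sum_range_succ, Finset.sum_eq_single_of_mem 0 (Finset.mem_range.2 (by omega)), hP z]
    · simp [hval, sub_sub]
    · intro j hj hj0
      simp [hjets j (by omega) (by have := Finset.mem_range.1 hj; omega)]
  obtain ⟨CR, hCR⟩ := hR.bound
  obtain ⟨r, hr, hball⟩ := Metric.nhds_basis_closedBall.mem_iff.1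
    (inter_mem (hW.mem_nhds hz₀) hCR)
  have hballW : Metric.closedBall z₀ r ⊆ W := fun z hz => (hball hz).1
  let D : ℝ × (Fin n → ℝ) × (Fin n → ℝ) → ℝ := fun q => fderiv ℝ (fderiv ℝ F) q (1, 0) (1, 0)
  have hD : ContDiffOn ℝ ∞ D (Ioo (-T) T ×ˢ W) :=
    (((hF.fderiv_of_isOpen (m := ∞) hU (by simp)).fderiv_of_isOpen (m := ∞) hU
      (by simp)).clm_apply contDiffOn_const).clm_apply contDiffOn_const
  have hscale {t s a : ℝ} (ht : |t| ≤ a) (hs : s ∈ Icc (0 : ℝ) 1) : |s * t| ≤ a := by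
    rw [abs_mul, abs_of_nonneg hs.1]
    exact (mul_le_of_le_one_left (abs_nonneg t) hs.2).trans ht
  have hscaleT {t s : ℝ} (ht : t ∈ Ioo (-T) T) (hs : s ∈ Icc (0 : ℝ) 1) :
      s * t ∈ Ioo (-T) T :=
    abs_lt.1 ((hscale le_rfl hs).trans_lt (abs_lt.2 ht))
  refine ⟨Metric.closedBall z₀ r, Metric.closedBall_mem_nhds z₀ hr,
    hballW.trans interior_subset, fun t z => -∫ s in (0 : ℝ)..1, (1 - s) * D (s * t, z),
    ?_, ?_, ⟨CR, fun z hz => ?_⟩, ?_⟩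
  · refine ContDiffOn.neg (ContDiffOn.mono (contDiffOn_infty.2 fun m => ?_)
      (prod_mono Subset.rfl hballW))
    have hmap : ContDiff ℝ ∞
        fun v : (ℝ × (Fin n → ℝ) × (Fin n → ℝ)) × ℝ => (v.2 * v.1.1, v.1.2) := by
      fun_prop
    refine contDiffOn_slice_intervalIntegral (U := (fun v => (v.2 * v.1.1, v.1.2)) ⁻¹'
      (Ioo (-T) T ×ˢ W)) (f := fun v => (1 - v.2) * D (v.2 * v.1.1, v.1.2)) hU
      (hU.preimage hmap.continuous) ?_ m ?_
    · intro q hq s hs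
      rw [uIcc_of_le zero_le_one] at hs
      exact ⟨hscaleT hq.1 hs, hq.2⟩
    · refine (ContDiffOn.mul (ContDiff.contDiffOn (by fun_prop)) ?_).of_le
        (n := ∞) (by exact_mod_cast (le_top : (m : ℕ∞) ≤ ⊤))
      exact hD.comp hmap.contDiffOn fun v hv => hv
  · intro t x ξ ht hz
    have hline : ∀ s ∈ Icc (0 : ℝ) 1,
        ContDiffAt ℝ ((1 : ℕ) + 1) F ((0, x, ξ) + s • (t, 0)) := by
      intro s hs
      refine (hF.contDiffAt (hU.mem_nhds ?_)).of_le
        (natCast_add_one_le_infty _)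
      simpa using! (⟨hscaleT ht hs, hballW hz⟩ : (s * t, x, ξ) ∈ Ioo (-T) T ×ˢ W)
    have htaylor := map_add_eq_sum_add_integral_iteratedFDeriv hline
    have hsmul : ((t, 0) : ℝ × (Fin n → ℝ) × (Fin n → ℝ)) = t • (1, 0) := by simp
    have hquad : ∀ s : ℝ, (1 - s) ^ 1 • iteratedFDeriv ℝ (1 + 1) F ((0, x, ξ) + s • (t, 0))
        (fun _ => (t, 0)) = t ^ 2 * ((1 - s) * D (s * t, x, ξ)) := by
      intro s
      rw [iteratedFDeriv_two_apply, hsmul, map_smul, map_smul]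
      simp [D]
      ring
    simp only [hquad, intervalIntegral.integral_const_mul, Finset.sum_range_succ,
      Finset.sum_range_zero, iteratedFDeriv_zero_apply, iteratedFDeriv_one_apply] at htaylor
    have hfirst : fderiv ℝ F (0, x, ξ) (t, 0) = -(t * p₀ (x, ξ)) := by
      rw [hsmul, map_smul, hHJ' _ ⟨h0T, hballW hz⟩, hinit' (hballW hz)]
      simp
    have hzero : F (0, x, ξ) = ∑ i, x i * ξ i :=
      hinit x ξ (interior_subset (hballW hz))
    have hval' : F ((0, x, ξ) + (t, 0)) = S t x ξ := by simp [F]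
    rw [hfirst, hzero, hval'] at htaylor
    rw [htaylor]
    simp
    ring
  · have := (hball hz).2
    simpa [abs_of_nonneg] using this
  · intro K hK hKT
    obtain ⟨a, haT, hKa⟩ : ∃ a < T, ∀ t ∈ K, |t| ≤ a := by
      rcases K.eq_empty_or_nonempty with rfl | hne
      · exact ⟨0, hT, by simp⟩
      · obtain ⟨t₀, ht₀, hmax⟩ := hK.exists_isMaxOn hne (continuous_abs.continuousOn)
        exact ⟨|t₀|, abs_lt.2 (hKT ht₀), hmax⟩
    have hIcc : Icc (-a) a ⊆ Ioo (-T) T := Icc_subset_Ioo (by linarith) haT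
    have hDO : D =O[𝓟 (Icc (-a) a ×ˢ Metric.closedBall z₀ r)]
        fun q => ‖q.2 - z₀‖ ^ (k + 1) := by
      refine (isCompact_Icc.prod (isCompact_closedBall z₀ r)).isBigO_principal_of_forall_nhdsWithin
        ?_
      rintro ⟨t, z⟩ ⟨ht, hz⟩
      refine IsBigO.mono ?_ nhdsWithin_le_nhds
      rcases eq_or_ne z z₀ with rfl | hne
      · exact fderiv_fderiv_time_time_isBigO hT hW hF hHJ' hz₀ hp hk hpO (hinit' hz₀) (hIcc ht)
      · have hDc : ContinuousAt D (t, z) :=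
          hD.continuousOn.continuousAt (hU.mem_nhds ⟨hIcc ht, hballW hz⟩)
        refine (hDc.tendsto.isBigO_one ℝ).trans ?_
        have hg : ContinuousAt (fun q : ℝ × (Fin n → ℝ) × (Fin n → ℝ) =>
          ‖q.2 - z₀‖ ^ (k + 1)) (t, z) := by fun_prop
        have hpos : 0 < ‖z - z₀‖ ^ (k + 1) := pow_pos (norm_pos_iff.2 (sub_ne_zero.2 hne)) _
        refine (isBigO_const_left_iff_pos_le_norm one_ne_zero).2
          ⟨‖z - z₀‖ ^ (k + 1) / 2, half_pos hpos, ?_⟩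
        filter_upwards [hg.eventually_const_lt (half_lt_self hpos)] with q hq
        exact hq.le.trans (le_abs_self _)
    obtain ⟨C, hC⟩ := hDO.bound
    rw [eventually_principal] at hC
    refine ⟨C, fun t ht z hz => ?_⟩
    rw [abs_neg, ← Real.norm_eq_abs]
    refine (intervalIntegral.norm_integral_le_of_norm_le_const
      (C := C * ‖z - z₀‖ ^ (k + 1)) fun s hs => ?_).trans_eq (by simp)
    rw [uIoc_of_le zero_le_one] at hs
    have hs' : s ∈ Icc (0 : ℝ) 1 := ⟨hs.1.le, hs.2⟩
    have hb := hC (s * t, z) ⟨abs_le.1 (hscale (hKa t ht) hs'), hz⟩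
    rw [norm_pow, norm_norm] at hb
    rw [norm_mul]
    refine (mul_le_of_le_one_left (norm_nonneg _) ?_).trans hb
    rw [Real.norm_of_nonneg (by linarith [hs.2])]
    linarith [hs.1]
end

section
/- Let d ≥ 2 and let g : ℝ^d → ℝ be a homogeneous polynomial of degree k ≥ 1 such that ∇g(θ) ≠ 0 for every θ ∈ S^{d−1} with g(θ) = 0. Let σ denote the surface measure on the unit sphere S^{d−1}. Then the function W(u) = σ({ θ ∈ S^{d−1} : g(θ) ≤ u }) is C^∞ on an open neighborhood of u = 0. In particular its derivative Lvol(u) = W′(u), the Liouville (Leray) density of the level set {g = u} ∩ S^{d−1}, is a smooth function of u near 0. -/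
open MeasureTheory Set Filter Metric Module
open scoped Topology ContDiff

/-- The unit sphere of an `(n + 1)`-dimensional inner product space has finite `n`-dimensional
Hausdorff measure. -/
theorem hausdorffMeasure_sphere_lt_top {V : Type*} [NormedAddCommGroup V] [InnerProductSpace ℝ V]
    [MeasurableSpace V] [BorelSpace V] (n : ℕ) (hn : finrank ℝ V = n + 1) :
    (μH[n] : Measure V) (sphere 0 1) < ⊤ := by
  have : Fact (finrank ℝ V = n + 1) := ⟨hn⟩
  have : FiniteDimensional ℝ V := .of_fact_finrank_eq_succ n
  refine (isCompact_sphere (0 : V) 1).measure_lt_top_of_nhdsWithin fun x hx => ?_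
  have hx1 : ‖x‖ = 1 := by simpa using hx
  set v : V := -x with hv
  have hv1 : ‖v‖ = 1 := by simp [hv, hx1]
  have hv0 : v ≠ 0 := by
    intro h
    simp [h] at hv1
  have hfin : finrank ℝ (ℝ ∙ v)ᗮ = n := Submodule.finrank_orthogonal_span_singleton hv0
  have hxv : innerSL ℝ v x ≠ (1 : ℝ) := by
    simp [hv, hx1]
    norm_num
  let f : (ℝ ∙ v)ᗮ → V := fun w => stereoInvFunAux v w
  have hf : ContDiff ℝ 1 f := contDiff_stereoInvFunAux.comp (ℝ ∙ v)ᗮ.subtypeL.contDiff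
  obtain ⟨K, t, ht, hK⟩ := (hf.contDiffAt (x := stereoToFun v x)).exists_lipschitzOnWith
  have hopen : IsOpen {y : V | innerSL ℝ v y ≠ (1 : ℝ)} :=
    isOpen_ne_fun (innerSL ℝ v).continuous continuous_const
  have hcont : ContinuousAt (stereoToFun v) x :=
    continuousOn_stereoToFun.continuousAt (hopen.mem_nhds hxv)
  set s := t ∩ closedBall (stereoToFun v x) 1
  have hs : s ∈ 𝓝 (stereoToFun v x) := inter_mem ht (closedBall_mem_nhds _ one_pos)
  refine ⟨f '' s, ?_, ?_⟩
  · filter_upwards [mem_nhdsWithin_of_mem_nhds (hcont hs),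
      mem_nhdsWithin_of_mem_nhds (hopen.mem_nhds hxv), self_mem_nhdsWithin] with y hy hyv hyS
    refine ⟨stereoToFun v y, hy, ?_⟩
    have hne : y ≠ v := by
      rintro rfl
      simp [hv1] at hyv
    exact congrArg Subtype.val (stereo_left_inv hv1 (x := ⟨y, hyS⟩) hne)
  · refine ((hK.mono inter_subset_left).hausdorffMeasure_image_le n.cast_nonneg).trans_lt ?_
    refine ENNReal.mul_lt_top (by simp) ?_
    have := isAddHaarMeasure_hausdorffMeasure (E := (ℝ ∙ v)ᗮ)
    rw [hfin] at this
    exact (measure_mono inter_subset_right).trans_lt (isCompact_closedBall _ _).measure_lt_top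

theorem ContinuousOn.integrable_of_ae_mem_isCompact {X : Type*} [TopologicalSpace X] [T2Space X]
    [MeasurableSpace X] [OpensMeasurableSpace X] {σ : Measure X}
    [IsFiniteMeasure σ] {S : Set X} (hS : IsCompact S) (hσ : ∀ᵐ x ∂σ, x ∈ S) {f : X → ℝ}
    (hf : ContinuousOn f S) : Integrable f σ := by
  have := hf.integrableOn_compact (μ := σ) hS
  rwa [IntegrableOn, Measure.restrict_eq_self_of_ae_mem hσ] at this

/-- Infinitesimal form of rotation invariance: a rotation invariant measure on the unit sphere
annihilates derivatives along the Killing field of a skew-adjoint operator. -/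
theorem integral_fderiv_skewAdjoint_eq_zero {V : Type*} [NormedAddCommGroup V]
    [InnerProductSpace ℝ V] [FiniteDimensional ℝ V] [MeasurableSpace V] [BorelSpace V]
    {σ : Measure V} [IsFiniteMeasure σ] (hσ : ∀ᵐ x ∂σ, x ∈ sphere (0 : V) 1)
    (hinv : ∀ e : V ≃ₗᵢ[ℝ] V, MeasurePreserving e σ σ)
    {A : V →L[ℝ] V} (hA : A ∈ skewAdjoint (V →L[ℝ] V)) {F : V → ℝ}
    (hF : ∀ x ∈ sphere (0 : V) 1, ContDiffAt ℝ 1 F x) :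
    ∫ x, fderiv ℝ F x (A x) ∂σ = 0 := by
  let : NormedAlgebra ℚ (V →L[ℝ] V) := .restrictScalars ℚ ℝ _
  have hS := isCompact_sphere (0 : V) 1
  have hmem (t : ℝ) : NormedSpace.exp (t • A) ∈ unitary (V →L[ℝ] V) :=
    NormedSpace.exp_mem_unitary_of_mem_skewAdjoint (skewAdjoint.smul_mem t hA)
  let e (t : ℝ) : V ≃ₗᵢ[ℝ] V := Unitary.linearIsometryEquiv ⟨_, hmem t⟩
  have he (t : ℝ) (x : V) : e t x = NormedSpace.exp (t • A) x := rfl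
  have heS (t : ℝ) {x : V} (hx : x ∈ sphere (0 : V) 1) : e t x ∈ sphere (0 : V) 1 := by
    simpa using hx
  have hFc : ContinuousOn F (sphere 0 1) := fun x hx => (hF x hx).continuousAt.continuousWithinAt
  have hF'c : ContinuousOn (fun x => fderiv ℝ F x (A x)) (sphere 0 1) := fun x hx =>
    (((hF x hx).fderiv_right (m := 0) (by simp)).continuousAt.clm_apply
      A.continuous.continuousAt).continuousWithinAt
  obtain ⟨C, hC⟩ := hS.exists_bound_of_continuousOn hF'c
  have hder := hasDerivAt_integral_of_dominated_loc_of_deriv_le (μ := σ) (x₀ := (0 : ℝ))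
    (s := univ) (F := fun t x => F (e t x)) (F' := fun t x => fderiv ℝ F (e t x) (A (e t x)))
    (bound := fun _ => C) univ_mem
    (.of_forall fun t => ((hinv (e t)).integrable_comp
      (hFc.integrable_of_ae_mem_isCompact hS hσ).aestronglyMeasurable |>.2
      (hFc.integrable_of_ae_mem_isCompact hS hσ)).aestronglyMeasurable)
    ((hinv (e 0)).integrable_comp
      (hFc.integrable_of_ae_mem_isCompact hS hσ).aestronglyMeasurable |>.2
      (hFc.integrable_of_ae_mem_isCompact hS hσ))
    ((hinv (e 0)).integrable_comp
      (hF'c.integrable_of_ae_mem_isCompact hS hσ).aestronglyMeasurable |>.2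
      (hF'c.integrable_of_ae_mem_isCompact hS hσ)).aestronglyMeasurable
    (by filter_upwards [hσ] with x hx t _ using hC _ (heS t hx)) (integrable_const C)
    (by
      filter_upwards [hσ] with x hx t _
      have h1 : HasDerivAt (fun t => e t x) (A (e t x)) t := by
        simpa [he] using (hasDerivAt_exp_smul_const' (𝕂 := ℝ) A t).clm_apply (hasDerivAt_const t x)
      exact ((hF _ (heS t hx)).differentiableAt one_ne_zero).hasFDerivAt.comp_hasDerivAt t h1)
  have hconst : (fun t : ℝ => ∫ x, F (e t x) ∂σ) = fun _ => ∫ x, F x ∂σ := by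
    ext t
    exact (hinv (e t)).integral_comp (e t).toHomeomorph.measurableEmbedding F
  have h0 := hder.2
  rw [hconst] at h0
  have := h0.unique (hasDerivAt_const _ _)
  simpa [he] using this

/-- The infinitesimal rotation `x ↦ ⟪w, x⟫ v - ⟪v, x⟫ w`. -/
noncomputable def infinitesimalRotation {V : Type*} [NormedAddCommGroup V] [InnerProductSpace ℝ V]
    (v w : V) : V →L[ℝ] V :=
  (innerSL ℝ w).smulRight v - (innerSL ℝ v).smulRight w

theorem infinitesimalRotation_apply {V : Type*} [NormedAddCommGroup V] [InnerProductSpace ℝ V]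
    (v w x : V) : infinitesimalRotation v w x = inner ℝ w x • v - inner ℝ v x • w := by
  simp [infinitesimalRotation]

theorem infinitesimalRotation_mem_skewAdjoint {V : Type*} [NormedAddCommGroup V]
    [InnerProductSpace ℝ V] [CompleteSpace V] (v w : V) :
    infinitesimalRotation v w ∈ skewAdjoint (V →L[ℝ] V) := by
  rw [skewAdjoint.mem_iff, ContinuousLinearMap.star_eq_adjoint, eq_comm,
    ContinuousLinearMap.eq_adjoint_iff]
  intro x y
  simp [infinitesimalRotation_apply, inner_sub_left, inner_sub_right, inner_smul_left,
    inner_smul_right, real_inner_comm]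
  ring

/-- A linear form killing `x` and all infinitesimal rotations at `x ≠ 0` vanishes. -/
theorem eq_zero_of_infinitesimalRotation {V : Type*} [NormedAddCommGroup V] [InnerProductSpace ℝ V]
    {ι : Type*} [Fintype ι] (b : OrthonormalBasis ι ℝ V) {x : V} (hx : x ≠ 0) (l : V →L[ℝ] ℝ)
    (hlx : l x = 0) (hl : ∀ i j, l (infinitesimalRotation (b i) (b j) x) = 0) : l = 0 := by
  have hsum : ∑ j, inner ℝ (b j) x * l (b j) = 0 := by
    rw [← hlx]
    conv_rhs => rw [← b.sum_repr' x]
    simp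
  have hb (i : ι) : l (b i) = 0 := by
    have h : (∑ j, inner ℝ (b j) x ^ 2) * l (b i) -
        inner ℝ (b i) x * ∑ j, inner ℝ (b j) x * l (b j) = 0 := by
      rw [Finset.sum_mul, Finset.mul_sum, ← Finset.sum_sub_distrib]
      refine Finset.sum_eq_zero fun j _ => ?_
      have hij := hl i j
      simp only [infinitesimalRotation_apply, map_sub, map_smul, smul_eq_mul] at hij
      linear_combination inner ℝ (b j) x * hij
    rw [hsum, mul_zero, sub_zero] at h
    have hnorm : ∑ j, inner ℝ (b j) x ^ 2 = ‖x‖ ^ 2 := by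
      rw [← b.sum_sq_norm_inner_right x]
      simp
    rw [hnorm] at h
    exact (mul_eq_zero.1 h).resolve_left (by simpa using hx)
  ext y
  rw [← b.sum_repr' y]
  simp [hb]

section SuperlevelIntegral

variable {X : Type*} [MeasurableSpace X] {σ : Measure X} {g θ : X → ℝ} {M : ℝ}

theorem integrable_prod_superlevel (hg : Measurable g) (hθ : Integrable θ σ)
    {ρ : ℝ → ℝ} (hρ : Continuous ρ) :
    Integrable (fun p : X × ℝ => {q : X × ℝ | q.2 < g q.1}.indicator (fun q => θ q.1 * ρ q.2) p)
      (σ.prod (volume.restrict (Ioc (-M) M))) := by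
  refine Integrable.indicator ?_ (measurableSet_lt measurable_snd (hg.comp measurable_fst))
  exact hθ.mul_prod (hρ.integrableOn_Ioc)

variable [IsFiniteMeasure σ]

theorem intervalIntegrable_superlevel (hM : 0 ≤ M) (hg : Measurable g) (hθ : Integrable θ σ) :
    IntervalIntegrable (fun u => ∫ x in {x | u < g x}, θ x ∂σ) volume (-M) M := by
  rw [intervalIntegrable_iff_integrableOn_Ioc_of_le (by linarith)]
  refine (integrable_prod_superlevel (M := M) hg hθ
    (continuous_const (y := (1 : ℝ)))).integral_prod_right.congr (.of_forall fun u => ?_)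
  simp only
  rw [← integral_indicator (measurableSet_lt measurable_const hg)]
  simp [indicator]

theorem integral_primitive_comp_mul (hM : 0 ≤ M) (hg : Measurable g) (hgM : ∀ᵐ x ∂σ, |g x| ≤ M)
    (hθ : Integrable θ σ) {ρ : ℝ → ℝ} (hρ : Continuous ρ) :
    ∫ x, (∫ u in (-M)..(g x), ρ u) * θ x ∂σ =
      ∫ u in (-M)..M, ρ u * ∫ x in {x | u < g x}, θ x ∂σ := by
  rw [intervalIntegral.integral_of_le (by linarith)]
  have h := integral_integral_swap (f := fun x u =>
    {q : X × ℝ | q.2 < g q.1}.indicator (fun q => θ q.1 * ρ q.2) (x, u))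
    (integrable_prod_superlevel (σ := σ) (M := M) hg hθ hρ)
  convert h using 1
  · refine integral_congr_ae ?_
    filter_upwards [hgM] with x hx
    have hx' := abs_le.1 hx
    have h1 : (fun u => {q : X × ℝ | q.2 < g q.1}.indicator (fun q => θ q.1 * ρ q.2) (x, u)) =
        (Iio (g x)).indicator (fun u => θ x * ρ u) := by
      ext u
      simp [indicator]
    rw [h1, integral_indicator measurableSet_Iio, Measure.restrict_restrict measurableSet_Iio,
      integral_const_mul, mul_comm, intervalIntegral.integral_of_le hx'.1,
      integral_Ioc_eq_integral_Ioo]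
    have h2 : Iio (g x) ∩ Ioc (-M) M = Ioo (-M) (g x) := by
      ext u
      simp only [mem_inter_iff, mem_Iio, mem_Ioc, mem_Ioo]
      constructor
      · exact fun h => ⟨h.2.1, h.1⟩
      · exact fun h => ⟨h.2, h.1, by linarith [h.2]⟩
    rw [h2]
  · congr 1
    ext u
    rw [← integral_indicator (measurableSet_lt measurable_const hg), ← integral_const_mul]
    congr 1
    ext x
    by_cases hx : u < g x <;> simp [hx, mul_comm]

theorem tendsto_smoothTransition_indicator (a t : ℝ) :
    Tendsto (fun n : ℕ => Real.smoothTransition (n * (t - a))) atTop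
      (𝓝 ((Ioi a).indicator (fun _ => (1 : ℝ)) t)) := by
  by_cases h : a < t
  · have h1 : Tendsto (fun n : ℕ => (n : ℝ) * (t - a)) atTop atTop :=
      tendsto_natCast_atTop_atTop.atTop_mul_const (by linarith)
    refine tendsto_const_nhds.congr' ?_
    filter_upwards [h1.eventually_ge_atTop 1] with n hn
    simp [h, Real.smoothTransition.one_of_one_le hn]
  · refine tendsto_const_nhds.congr fun n => ?_
    rw [Real.smoothTransition.zero_of_nonpos]
    · simp [h]
    · exact mul_nonpos_of_nonneg_of_nonpos n.cast_nonneg (by linarith)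

/-- If the pushforward of `f σ` under `g` is the distributional derivative of the pushforward of
`θ σ`, then the superlevel integrals of `f` are primitives of those of `θ`. -/
theorem integral_superlevel_eq (hg : Measurable g) (hgM : ∀ᵐ x ∂σ, |g x| ≤ M)
    {f : X → ℝ} (hf : Integrable f σ) (hθ : Integrable θ σ)
    (hfθ : ∀ φ : ℝ → ℝ, ContDiff ℝ 1 φ →
      ∫ x, deriv φ (g x) * f x ∂σ = - ∫ x, φ (g x) * θ x ∂σ)
    {a : ℝ} (ha : |a| ≤ M) :
    ∫ x in {x | a < g x}, f x ∂σ = - ∫ u in a..M, ∫ x in {x | u < g x}, θ x ∂σ := by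
  have hM : 0 ≤ M := (abs_nonneg a).trans ha
  have ha' := abs_le.1 ha
  let ρ (n : ℕ) (t : ℝ) : ℝ := Real.smoothTransition (n * (t - a))
  have hρc (n : ℕ) : Continuous (ρ n) := Real.smoothTransition.continuous.comp (by fun_prop)
  have hρ1 (n : ℕ) (t : ℝ) : ‖ρ n t‖ ≤ 1 := by
    rw [Real.norm_of_nonneg (Real.smoothTransition.nonneg _)]
    exact Real.smoothTransition.le_one _
  have hII := intervalIntegrable_superlevel hM hg hθ
  have heq (n : ℕ) : ∫ x, ρ n (g x) * f x ∂σ =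
      - ∫ u in (-M)..M, ρ n u * ∫ x in {x | u < g x}, θ x ∂σ := by
    rw [← integral_primitive_comp_mul hM hg hgM hθ (hρc n)]
    have hd : deriv (fun t => ∫ u in (-M)..t, ρ n u) = ρ n :=
      funext fun t => (hρc n).deriv_integral _ _ _
    have hdiff : ContDiff ℝ 1 (fun t => ∫ u in (-M)..t, ρ n u) := by
      rw [contDiff_one_iff_deriv, hd]
      exact ⟨fun t => (intervalIntegral.integral_hasDerivAt_right ((hρc n).intervalIntegrable _ _)
        ((hρc n).stronglyMeasurableAtFilter _ _) (hρc n).continuousAt).differentiableAt, hρc n⟩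
    have := hfθ _ hdiff
    rwa [hd] at this
  have hleft : Tendsto (fun n => ∫ x, ρ n (g x) * f x ∂σ) atTop
      (𝓝 (∫ x in {x | a < g x}, f x ∂σ)) := by
    rw [← integral_indicator (measurableSet_lt measurable_const hg)]
    refine tendsto_integral_of_dominated_convergence (fun x => ‖f x‖)
      (fun n => ((hρc n).measurable.comp hg).aestronglyMeasurable.mul hf.1) hf.norm
      (fun n => .of_forall fun x => ?_) (.of_forall fun x => ?_)
    · rw [norm_mul]
      exact mul_le_of_le_one_left (norm_nonneg _) (hρ1 n _)
    · convert (tendsto_smoothTransition_indicator a (g x)).mul_const (f x) using 2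
      by_cases hx : a < g x <;> simp [hx]
  have hright : Tendsto (fun n => ∫ u in (-M)..M, ρ n u * ∫ x in {x | u < g x}, θ x ∂σ) atTop
      (𝓝 (∫ u in a..M, ∫ x in {x | u < g x}, θ x ∂σ)) := by
    have hlim : ∫ u in a..M, ∫ x in {x | u < g x}, θ x ∂σ =
        ∫ u in (-M)..M, (Ioi a).indicator (fun _ => (1 : ℝ)) u * ∫ x in {x | u < g x}, θ x ∂σ := by
      rw [intervalIntegral.integral_of_le ha'.2, intervalIntegral.integral_of_le (by linarith)]
      have h1 : (fun u => (Ioi a).indicator (fun _ => (1 : ℝ)) u *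
          ∫ x in {x | u < g x}, θ x ∂σ) =
          (Ioi a).indicator (fun u => ∫ x in {x | u < g x}, θ x ∂σ) := by
        ext u
        by_cases hu : a < u <;> simp [hu]
      rw [h1, integral_indicator measurableSet_Ioi, Measure.restrict_restrict measurableSet_Ioi]
      congr 2
      ext u
      simp only [mem_inter_iff, mem_Ioi, mem_Ioc]
      constructor
      · exact fun h => ⟨h.1, by linarith [h.1], h.2⟩
      · exact fun h => ⟨h.1, h.2.2⟩
    rw [hlim]
    refine intervalIntegral.tendsto_integral_filter_of_dominated_convergence
      (fun u => ‖∫ x in {x | u < g x}, θ x ∂σ‖)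
      (.of_forall fun n => (hρc n).aestronglyMeasurable.mul hII.def'.aestronglyMeasurable)
      (.of_forall fun n => .of_forall fun u _ => ?_) hII.norm (.of_forall fun u _ => ?_)
    · rw [norm_mul]
      exact mul_le_of_le_one_left (norm_nonneg _) (hρ1 n _)
    · exact (tendsto_smoothTransition_indicator a u).mul_const _
  refine tendsto_nhds_unique hleft ?_
  simp_rw [heq]
  exact hright.neg

end SuperlevelIntegral

section Transport

variable {V : Type*} [NormedAddCommGroup V] [NormedSpace ℝ V] [MeasurableSpace V] [BorelSpace V]
  {σ : Measure V} [IsFiniteMeasure σ] {S : Set V} {ι : Type*} [Fintype ι] {A : ι → V →L[ℝ] V}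
  {g : V → ℝ}

/-- Integration by parts along divergence free fields `x ↦ A i x`, one of which is transverse to
each level set of `g` near `{g = 0} ∩ S`. -/
theorem exists_cutoff_integration_by_parts (hS : IsCompact S) (hσ : ∀ᵐ x ∂σ, x ∈ S)
    (hA : ∀ i, ∀ F : V → ℝ, (∀ x ∈ S, ContDiffAt ℝ 1 F x) → ∫ x, fderiv ℝ F x (A i x) ∂σ = 0)
    (hg : ContDiff ℝ ∞ g) (hgA : ∀ x ∈ S, g x = 0 → ∃ i, fderiv ℝ g x (A i x) ≠ 0) :
    ∃ δ > 0, ∃ χ : ℝ → ℝ, ContDiff ℝ ∞ χ ∧ (∀ t, |t| ≤ δ → χ t = 1) ∧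
      ∀ ψ : V → ℝ, (∀ x ∈ S, ContDiffAt ℝ ∞ ψ x) →
        ∃ θ : V → ℝ, (∀ x ∈ S, ContDiffAt ℝ ∞ θ x) ∧ ∀ φ : ℝ → ℝ, ContDiff ℝ 1 φ →
          ∫ x, deriv φ (g x) * (χ (g x) * ψ x) ∂σ = - ∫ x, φ (g x) * θ x ∂σ := by
  let L (i : ι) (x : V) : ℝ := fderiv ℝ g x (A i x)
  let D (x : V) : ℝ := ∑ i, L i x ^ 2
  have hL (i : ι) : ContDiff ℝ ∞ (L i) :=
    (hg.fderiv_right (m := ∞) (by simp)).clm_apply (A i).contDiff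
  have hD : ContDiff ℝ ∞ D := ContDiff.sum fun i _ => (hL i).pow 2
  have hD0 (x : V) (hx : D x = 0) (i : ι) : L i x = 0 := by
    have := (Finset.sum_eq_zero_iff_of_nonneg fun i _ => sq_nonneg (L i x)).1 hx i
      (Finset.mem_univ i)
    simpa using this
  obtain ⟨δ, hδ, hδD⟩ : ∃ δ > 0, ∀ x ∈ S, D x = 0 → δ ≤ |g x| := by
    have hK : IsCompact (S ∩ {x | D x = 0}) :=
      hS.inter_right (isClosed_eq hD.continuous continuous_const)
    rcases (S ∩ {x | D x = 0}).eq_empty_or_nonempty with he | hne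
    · exact ⟨1, one_pos, fun x hx hx0 => (he.subset ⟨hx, hx0⟩).elim⟩
    · obtain ⟨y, hy, hmin⟩ := hK.exists_isMinOn hne hg.continuous.abs.continuousOn
      refine ⟨|g y|, abs_pos.2 fun h0 => ?_, fun x hx hx0 => hmin ⟨hx, hx0⟩⟩
      obtain ⟨i, hi⟩ := hgA y hy.1 h0
      exact hi (hD0 y hy.2 i)
  let χ : ContDiffBump (0 : ℝ) := ⟨δ / 3, δ / 2, by linarith, by linarith⟩
  have hχ0 (t : ℝ) (ht : δ / 2 ≤ |t|) : χ t = 0 := χ.zero_of_le_dist (by simpa using ht)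
  refine ⟨δ / 3, by linarith, χ, χ.contDiff, fun t ht => χ.one_of_mem_closedBall (by simpa using ht),
    fun ψ hψ => ?_⟩
  let G (i : ι) (x : V) : ℝ := ψ x * (χ (g x) * L i x / D x)
  have hG (i : ι) (x : V) (hx : x ∈ S) : ContDiffAt ℝ ∞ (G i) x := by
    by_cases hDx : D x = 0
    · have hev : ∀ᶠ y in 𝓝 x, δ / 2 < |g y| :=
        hg.continuous.abs.continuousAt.eventually (lt_mem_nhds (by linarith [hδD x hx hDx]))
      refine (contDiffAt_const (c := (0 : ℝ))).congr_of_eventuallyEq ?_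
      filter_upwards [hev] with y hy
      simp [G, hχ0 _ hy.le]
    · exact (hψ x hx).mul
        (((χ.contDiff.comp hg).contDiffAt.mul (hL i).contDiffAt).div hD.contDiffAt hDx)
  have hθ (i : ι) (x : V) (hx : x ∈ S) : ContDiffAt ℝ ∞ (fun y => fderiv ℝ (G i) y (A i y)) x :=
    ((hG i x hx).fderiv_right (m := ∞) (by simp)).clm_apply (A i).contDiff.contDiffAt
  refine ⟨fun x => ∑ i, fderiv ℝ (G i) x (A i x),
    fun x hx => ContDiffAt.sum fun i _ => hθ i x hx, fun φ hφ => ?_⟩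
  have hφg (x : V) : ContDiffAt ℝ 1 (fun y => φ (g y)) x :=
    (hφ.comp (hg.of_le (by simp))).contDiffAt
  have hF (i : ι) (x : V) (hx : x ∈ S) : ContDiffAt ℝ 1 (fun y => φ (g y) * G i y) x :=
    (hφg x).mul ((hG i x hx).of_le (by simp))
  have hpt (x : V) (hx : x ∈ S) : ∑ i, fderiv ℝ (fun y => φ (g y) * G i y) x (A i x) =
      deriv φ (g x) * (χ (g x) * ψ x) + φ (g x) * ∑ i, fderiv ℝ (G i) x (A i x) := by
    have h1 (i : ι) : fderiv ℝ (fun y => φ (g y) * G i y) x (A i x) =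
        deriv φ (g x) * (ψ x * (χ (g x) / D x)) * L i x ^ 2 +
          φ (g x) * fderiv ℝ (G i) x (A i x) := by
      have hd1 : HasFDerivAt (fun y => φ (g y)) (deriv φ (g x) • fderiv ℝ g x) x :=
        ((hφ.differentiable one_ne_zero) (g x)).hasDerivAt.comp_hasFDerivAt x
          ((hg.differentiable (by simp)) x).hasFDerivAt
      rw [(hd1.fun_mul ((hG i x hx).differentiableAt (by simp)).hasFDerivAt).fderiv]
      simp only [add_apply, smul_apply, smul_eq_mul, G, L]
      ring
    simp_rw [h1]
    rw [Finset.sum_add_distrib, ← Finset.mul_sum, ← Finset.mul_sum]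
    congr 1
    change _ * D x = _
    by_cases hDx : D x = 0
    · rw [hχ0 (g x) (by linarith [hδD x hx hDx])]
      simp
    · field_simp
  have hcont (i : ι) : ContinuousOn (fun x => fderiv ℝ (fun y => φ (g y) * G i y) x (A i x)) S :=
    fun x hx => (((hF i x hx).fderiv_right (m := 0) (by simp)).continuousAt.clm_apply
      (A i).continuous.continuousAt).continuousWithinAt
  have hsum : ∫ x, ∑ i, fderiv ℝ (fun y => φ (g y) * G i y) x (A i x) ∂σ = 0 := by
    rw [integral_finsetSum _ fun i _ => (hcont i).integrable_of_ae_mem_isCompact hS hσ]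
    exact Finset.sum_eq_zero fun i _ => hA i _ (hF i)
  rw [integral_congr_ae (hσ.mono hpt), integral_add] at hsum
  · linarith
  · refine ContinuousOn.integrable_of_ae_mem_isCompact hS hσ ?_
    exact ((hφ.continuous_deriv le_rfl).comp hg.continuous).continuousOn.mul
      ((χ.contDiff (n := 0)).continuous.comp hg.continuous |>.continuousOn.mul
        fun x hx => (hψ x hx).continuousAt.continuousWithinAt)
  · refine ContinuousOn.integrable_of_ae_mem_isCompact hS hσ ?_
    exact (hφ.continuous.comp hg.continuous).continuousOn.mul
      (continuousOn_finsetSum _ fun i _ x hx => (hθ i x hx).continuousAt.continuousWithinAt)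

/-- Superlevel integrals are smooth near a value of `g` that is noncritical along the fields
`x ↦ A i x`. -/
theorem exists_contDiffOn_superlevel (hS : IsCompact S) (hσ : ∀ᵐ x ∂σ, x ∈ S)
    (hA : ∀ i, ∀ F : V → ℝ, (∀ x ∈ S, ContDiffAt ℝ 1 F x) → ∫ x, fderiv ℝ F x (A i x) ∂σ = 0)
    (hg : ContDiff ℝ ∞ g) (hgA : ∀ x ∈ S, g x = 0 → ∃ i, fderiv ℝ g x (A i x) ≠ 0) :
    ∃ δ > 0, ∀ ψ : V → ℝ, (∀ x ∈ S, ContDiffAt ℝ ∞ ψ x) →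
      ContDiffOn ℝ ∞ (fun a => ∫ x in {x | a < g x}, ψ x ∂σ) (Ioo (-δ) δ) := by
  obtain ⟨δ, hδ, χ, hχ, hχ1, hT⟩ := exists_cutoff_integration_by_parts hS hσ hA hg hgA
  refine ⟨δ, hδ, ?_⟩
  have hint {f : V → ℝ} (hf : ∀ x ∈ S, ContDiffAt ℝ ∞ f x) : Integrable f σ :=
    ContinuousOn.integrable_of_ae_mem_isCompact hS hσ
      fun x hx => (hf x hx).continuousAt.continuousWithinAt
  obtain ⟨C, hC⟩ := hS.exists_bound_of_continuousOn hg.continuous.continuousOn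
  set M := max C δ
  have hgM : ∀ᵐ x ∂σ, |g x| ≤ M := hσ.mono fun x hx => (hC x hx).trans (le_max_left _ _)
  have hgm : Measurable g := hg.continuous.measurable
  have hδM : δ ≤ M := le_max_right _ _
  have hM : 0 ≤ M := hδ.le.trans hδM
  have hmeas (a : ℝ) : MeasurableSet {x | a < g x} := measurableSet_lt measurable_const hgm
  have hrep (ψ : V → ℝ) (hψ : ∀ x ∈ S, ContDiffAt ℝ ∞ ψ x) :
      ∃ θ : V → ℝ, (∀ x ∈ S, ContDiffAt ℝ ∞ θ x) ∧ ∃ c : ℝ, ∀ a ∈ Ioo (-δ) δ,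
        ∫ x in {x | a < g x}, ψ x ∂σ =
          c + ∫ u in M..a, ∫ x in {x | u < g x}, θ x ∂σ := by
    obtain ⟨θ, hθ, hφ⟩ := hT ψ hψ
    have hχψ (x : V) (hx : x ∈ S) : ContDiffAt ℝ ∞ (fun x => χ (g x) * ψ x) x :=
      (hχ.comp hg).contDiffAt.mul (hψ x hx)
    refine ⟨θ, hθ, ∫ x in {x | 0 < g x}, (ψ x - χ (g x) * ψ x) ∂σ, fun a ha => ?_⟩
    have ha' : |a| < δ := abs_lt.2 ha
    have h1 := integral_superlevel_eq hgm hgM (hint hχψ) (hint hθ) hφ (ha'.le.trans hδM)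
    rw [intervalIntegral.integral_symm a M, ← h1]
    have h2 : ∫ x in {x | 0 < g x}, (ψ x - χ (g x) * ψ x) ∂σ =
        ∫ x in {x | a < g x}, (ψ x - χ (g x) * ψ x) ∂σ := by
      rw [← integral_indicator (hmeas 0), ← integral_indicator (hmeas a)]
      congr 1
      ext x
      by_cases hx : |g x| ≤ δ
      · simp [indicator, hχ1 _ hx]
      · have : 0 < g x ↔ a < g x := by
          rcases abs_cases (g x) with h | h <;> constructor <;> intro <;> linarith [ha.1, ha.2]
        simp [indicator, this]
    rw [h2, integral_sub (hint hψ).integrableOn (hint hχψ).integrableOn]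
    ring
  have hII {θ : V → ℝ} (hθ : ∀ x ∈ S, ContDiffAt ℝ ∞ θ x) :
      IntervalIntegrable (fun u => ∫ x in {x | u < g x}, θ x ∂σ) volume (-M) M :=
    intervalIntegrable_superlevel hM hgm (hint hθ)
  have hsub : Ioo (-δ) δ ⊆ uIcc (-M) M := by
    rw [uIcc_of_le (by linarith)]
    exact fun a ha => ⟨by linarith [ha.1], by linarith [ha.2]⟩
  have hcont (ψ : V → ℝ) (hψ : ∀ x ∈ S, ContDiffAt ℝ ∞ ψ x) :
      ContinuousOn (fun a => ∫ x in {x | a < g x}, ψ x ∂σ) (Ioo (-δ) δ) := by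
    obtain ⟨θ, hθ, c, hc⟩ := hrep ψ hψ
    refine ContinuousOn.congr (continuousOn_const.add ?_) hc
    exact (intervalIntegral.continuousOn_primitive_interval' (hII hθ) right_mem_uIcc).mono hsub
  have hder {ψ θ : V → ℝ} (hθ : ∀ x ∈ S, ContDiffAt ℝ ∞ θ x) {c : ℝ}
      (hc : ∀ a ∈ Ioo (-δ) δ, ∫ x in {x | a < g x}, ψ x ∂σ =
          c + ∫ u in M..a, ∫ x in {x | u < g x}, θ x ∂σ) (a : ℝ) (ha : a ∈ Ioo (-δ) δ) :
      HasDerivAt (fun a => ∫ x in {x | a < g x}, ψ x ∂σ) (∫ x in {x | a < g x}, θ x ∂σ) a := by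
    have h := (intervalIntegral.integral_hasDerivAt_right
      ((hII hθ).mono_set (uIcc_subset_uIcc right_mem_uIcc (hsub ha)))
      ((hcont θ hθ).stronglyMeasurableAtFilter isOpen_Ioo a ha)
      ((hcont θ hθ).continuousAt (isOpen_Ioo.mem_nhds ha))).const_add c
    exact h.congr_of_eventuallyEq (mem_of_superset (isOpen_Ioo.mem_nhds ha) hc)
  have hn (n : ℕ) : ∀ ψ : V → ℝ, (∀ x ∈ S, ContDiffAt ℝ ∞ ψ x) →
      ContDiffOn ℝ n (fun a => ∫ x in {x | a < g x}, ψ x ∂σ) (Ioo (-δ) δ) := by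
    induction n with
    | zero => exact fun ψ hψ => contDiffOn_zero.2 (hcont ψ hψ)
    | succ n ih =>
      intro ψ hψ
      obtain ⟨θ, hθ, c, hc⟩ := hrep ψ hψ
      push_cast
      rw [contDiffOn_succ_iff_deriv_of_isOpen isOpen_Ioo]
      refine ⟨fun a ha => (hder hθ hc a ha).differentiableAt.differentiableWithinAt, by simp, ?_⟩
      exact (ih θ hθ).congr fun a ha => (hder hθ hc a ha).deriv
  exact fun ψ hψ => contDiffOn_infty.2 fun n => hn n ψ hψ

end Transport

theorem contDiff_of_mvPolynomial {d : ℕ} (P : MvPolynomial (Fin d) ℝ) :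
    ContDiff ℝ ∞ fun z : EuclideanSpace ℝ (Fin d) => MvPolynomial.eval (fun i => z i) P := by
  simp only [MvPolynomial.eval_eq]
  fun_prop

theorem MvPolynomial.IsHomogeneous.eval_smul {ι R : Type*} [CommSemiring R]
    {P : MvPolynomial ι R} {k : ℕ} (hP : P.IsHomogeneous k) (t : R) (x : ι → R) :
    MvPolynomial.eval (fun i => t * x i) P = t ^ k * MvPolynomial.eval x P := by
  rw [MvPolynomial.eval_eq, MvPolynomial.eval_eq, Finset.mul_sum]
  refine Finset.sum_congr rfl fun m hm => ?_
  have hdeg : ∑ i ∈ m.support, m i = k := by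
    by_contra h
    exact MvPolynomial.mem_support_iff.1 hm (hP.coeff_eq_zero h)
  simp only [mul_pow, Finset.prod_mul_distrib, Finset.prod_pow_eq_pow_sum, hdeg]
  ring

/- STATEMENT 12: Under the real-principal-type condition (H₄) on a homogeneous
polynomial g of degree k, the volume function W(u) = σ({θ ∈ S^{d−1} : g(θ) ≤ u})
(σ the surface measure, realized as (d−1)-dimensional Hausdorff measure) is C^∞
near u = 0; in particular the Liouville/Leray density Lvol = W′ is smooth near 0. -/

open MeasureTheory

theorem volume_function_smooth_near_zero
    (d k : ℕ) (hd : 2 ≤ d) (hk : 1 ≤ k)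
    (g : EuclideanSpace ℝ (Fin d) → ℝ)
    (hpoly : ∃ P : MvPolynomial (Fin d) ℝ, P.IsHomogeneous k ∧
      ∀ z : EuclideanSpace ℝ (Fin d), g z = MvPolynomial.eval (fun i => z i) P)
    (hgrad : ∀ θ : EuclideanSpace ℝ (Fin d), ‖θ‖ = 1 → g θ = 0 → fderiv ℝ g θ ≠ 0)
    (W : ℝ → ℝ)
    (hW : ∀ u : ℝ, W u =
      ((μH[(d : ℝ) - 1] : Measure (EuclideanSpace ℝ (Fin d)))
        {θ : EuclideanSpace ℝ (Fin d) | ‖θ‖ = 1 ∧ g θ ≤ u}).toReal) :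
    ∃ U : Set ℝ, IsOpen U ∧ (0 : ℝ) ∈ U ∧
      ContDiffOn ℝ (⊤ : ℕ∞) W U ∧ ContDiffOn ℝ (⊤ : ℕ∞) (deriv W) U := by
  obtain ⟨P, hP, hgP⟩ := hpoly
  have hg : ContDiff ℝ ∞ g := by
    rw [funext hgP]
    exact contDiff_of_mvPolynomial P
  set S := sphere (0 : EuclideanSpace ℝ (Fin d)) 1
  have hS : IsCompact S := isCompact_sphere 0 1
  set σ := (μH[(d : ℝ) - 1] : Measure (EuclideanSpace ℝ (Fin d))).restrict S with hσdef
  have : IsFiniteMeasure σ := by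
    refine isFiniteMeasure_restrict.2 (ne_of_lt ?_)
    have h := hausdorffMeasure_sphere_lt_top (V := EuclideanSpace ℝ (Fin d)) (d - 1)
      (by simp; omega)
    rwa [Nat.cast_sub (by omega), Nat.cast_one] at h
  have hσ : ∀ᵐ x ∂σ, x ∈ S := ae_restrict_mem isClosed_sphere.measurableSet
  have hinv (e : EuclideanSpace ℝ (Fin d) ≃ₗᵢ[ℝ] EuclideanSpace ℝ (Fin d)) :
      MeasurePreserving e σ σ := by
    have h := (e.toIsometryEquiv.measurePreserving_hausdorffMeasure
      ((d : ℝ) - 1)).restrict_preimage (s := S) isClosed_sphere.measurableSet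
    have hpre : e ⁻¹' S = S := by
      ext x
      simp [S]
    change MeasurePreserving e (Measure.restrict _ (e ⁻¹' S)) _ at h
    rwa [hpre] at h
  let b := EuclideanSpace.basisFun (Fin d) ℝ
  obtain ⟨δ, hδ, hsmooth⟩ := exists_contDiffOn_superlevel (σ := σ) (g := g)
    (A := fun p : Fin d × Fin d => infinitesimalRotation (b p.1) (b p.2)) hS hσ
    (fun p F hF => integral_fderiv_skewAdjoint_eq_zero hσ hinv
      (infinitesimalRotation_mem_skewAdjoint _ _) hF) hg
    (fun x hx hgx => by
      have hx1 : ‖x‖ = 1 := by simpa [S] using hx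
      by_contra! hcon
      refine hgrad x hx1 hgx (eq_zero_of_infinitesimalRotation b ?_ _ ?_
        fun i j => hcon (i, j))
      · rintro rfl
        simp at hx1
      · have hline : HasDerivAt (fun t : ℝ => g (t • x)) (fderiv ℝ g x x) 1 := by
          have h1 : HasDerivAt (fun t : ℝ => t • x) x 1 := by
            simpa using (hasDerivAt_id (1 : ℝ)).smul_const x
          have h2 : HasFDerivAt g (fderiv ℝ g x) ((1 : ℝ) • x) := by
            rw [one_smul]
            exact (hg.differentiable (by simp) x).hasFDerivAt
          exact h2.comp_hasDerivAt 1 h1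
        have hzero : (fun t : ℝ => g (t • x)) = fun _ => 0 := by
          ext t
          have h := hP.eval_smul t fun i => x i
          rw [← hgP, hgx, mul_zero] at h
          rw [hgP, ← h]
          simp
        rw [hzero] at hline
        exact hline.unique (hasDerivAt_const _ _))
  have hWeq (u : ℝ) : W u = σ.real univ - ∫ x in {x | u < g x}, (1 : ℝ) ∂σ := by
    have hm : MeasurableSet {x | u < g x} :=
      measurableSet_lt measurable_const hg.continuous.measurable
    rw [hW, setIntegral_const, smul_eq_mul, mul_one, ← measureReal_compl hm, measureReal_def,
      hσdef, Measure.restrict_apply hm.compl]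
    congr 2
    ext x
    simp [S, and_comm]
  have hWs : ContDiffOn ℝ ∞ W (Ioo (-δ) δ) :=
    (contDiffOn_const.sub (hsmooth (fun _ => 1) fun _ _ => contDiffAt_const)).congr
      fun u _ => hWeq u
  exact ⟨Ioo (-δ) δ, isOpen_Ioo, by simpa using hδ, hWs, hWs.deriv_of_isOpen isOpen_Ioo (by simp)⟩
end
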